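/- arXiv:1205.5301 — 14 statements merged into one kernel-verified Lean document; each statement's English description precedes it below -/
import Mathlib

section
/- Let D be a positive squarefree integer and let m, n be coprime positive integers with D n² ≤ 3 m² and m² ≤ 3 D n². Set e = 0 if 2 ∣ D or if both mn and D+1 are even, and e = 1 otherwise, and set g = 2^e · gcd(m, D). Then g divides each of |m² − D n²|, 2mn, and m² + D n², and the nonnegative integers p = |m² − D n²|/g, r = 2mn/g, q = (m² + D n²)/g satisfy p² + D r² = q², gcd(p, q) = 1, and 2p ≤ q. -/
lemma core_aux (X Y : ℕ) (h : Nat.Coprime X Y) (e : ℕ)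
    (he : (e = 0 ∧ (X + Y) % 2 = 1) ∨ (e = 1 ∧ (X + Y) % 2 = 0)) :
    ∃ (p : ℤ) (q : ℕ), (X : ℤ) - Y = 2 ^ e * p ∧ X + Y = 2 ^ e * q ∧ IsCoprime p (q : ℤ) := by
  obtain ⟨u, v, huv⟩ := Nat.isCoprime_iff_coprime.mpr h
  rcases he with ⟨rfl, ho⟩ | ⟨rfl, ho⟩
  · refine ⟨X - Y, X + Y, by simp, by simp, ?_⟩
    obtain ⟨t, ht⟩ : ∃ t : ℕ, X + Y = 2 * t + 1 := ⟨(X + Y) / 2, by omega⟩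
    have ht' : (X : ℤ) + Y = 2 * t + 1 := by exact_mod_cast ht
    refine ⟨-t * (u - v), 1 - t * (u + v), ?_⟩
    push_cast
    linear_combination ht' - 2 * t * huv
  · obtain ⟨t, ht⟩ : ∃ t : ℕ, X + Y = 2 * t := ⟨(X + Y) / 2, by omega⟩
    have ht' : (X : ℤ) + Y = 2 * t := by exact_mod_cast ht
    refine ⟨X - t, t, by linarith, by simpa using ht, u - v, u + v, ?_⟩
    linear_combination huv - v * ht'

/-- Forward direction of the parameterization (Lemma 1.3): the formulas in
`m, n` produce a solution `(p, r, q)` of `p² + D r² = q²` with `gcd(p,q) = 1`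
and `2p ≤ q`. -/
theorem stmt0 (D m n : ℕ) (hD : 0 < D) (hDsf : Squarefree D)
    (hm : 0 < m) (hn : 0 < n) (hmn : Nat.gcd m n = 1)
    (h1 : D * n ^ 2 ≤ 3 * m ^ 2) (h2 : m ^ 2 ≤ 3 * (D * n ^ 2))
    (e : ℕ)
    (he : e = if 2 ∣ D ∨ (2 ∣ m * n ∧ 2 ∣ D + 1) then 0 else 1)
    (g : ℕ) (hg : g = 2 ^ e * Nat.gcd m D) :
    g ∣ ((m ^ 2 : ℤ) - D * n ^ 2).natAbs ∧ g ∣ 2 * m * n ∧ g ∣ m ^ 2 + D * n ^ 2 ∧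
    (((m ^ 2 : ℤ) - D * n ^ 2).natAbs / g) ^ 2 + D * (2 * m * n / g) ^ 2
      = ((m ^ 2 + D * n ^ 2) / g) ^ 2 ∧
    Nat.gcd (((m ^ 2 : ℤ) - D * n ^ 2).natAbs / g) ((m ^ 2 + D * n ^ 2) / g) = 1 ∧
    2 * (((m ^ 2 : ℤ) - D * n ^ 2).natAbs / g) ≤ (m ^ 2 + D * n ^ 2) / g := by
  have hdpos : 0 < Nat.gcd m D := Nat.gcd_pos_of_pos_left _ hm
  obtain ⟨a, ha⟩ := Nat.gcd_dvd_left m D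
  obtain ⟨b, hb⟩ := Nat.gcd_dvd_right m D
  have hab : Nat.Coprime a b := by
    have := Nat.coprime_div_gcd_div_gcd hdpos
    rwa [Nat.div_eq_of_eq_mul_right hdpos ha, Nat.div_eq_of_eq_mul_right hdpos hb] at this
  generalize Nat.gcd m D = d at *
  have hdb : Nat.Coprime d b := by
    rw [hb] at hDsf
    exact Nat.coprime_of_squarefree_mul hDsf
  have hdn : Nat.Coprime d n := Nat.Coprime.coprime_dvd_left ⟨a, ha⟩ hmn
  have han : Nat.Coprime a n := Nat.Coprime.coprime_dvd_left ⟨d, by rw [ha, mul_comm]⟩ hmn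
  have hXY : Nat.Coprime (d * a ^ 2) (b * n ^ 2) :=
    Nat.Coprime.mul_left (Nat.Coprime.mul_right hdb (hdn.pow_right 2))
      (Nat.Coprime.mul_right (hab.pow_left 2) (han.pow 2 2))
  have hpar : (e = 0 ∧ (d * a ^ 2 + b * n ^ 2) % 2 = 1) ∨
      (e = 1 ∧ (d * a ^ 2 + b * n ^ 2) % 2 = 0) := by
    have c1 : ¬ (2 ∣ d * a ^ 2 ∧ 2 ∣ b * n ^ 2) := fun h =>
      absurd (Nat.dvd_gcd h.1 h.2) (by rw [hXY]; norm_num)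
    have c2 : ¬ (2 ∣ d ∧ 2 ∣ b) := fun h =>
      absurd (Nat.dvd_gcd h.1 h.2) (by rw [hdb]; norm_num)
    have c3 : ¬ (2 ∣ a ∧ 2 ∣ b) := fun h =>
      absurd (Nat.dvd_gcd h.1 h.2) (by rw [hab]; norm_num)
    have c4 : ¬ (2 ∣ d ∧ 2 ∣ n) := fun h =>
      absurd (Nat.dvd_gcd h.1 h.2) (by rw [hdn]; norm_num)
    have c5 : ¬ (2 ∣ a ∧ 2 ∣ n) := fun h =>
      absurd (Nat.dvd_gcd h.1 h.2) (by rw [han]; norm_num)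
    have p2 := Nat.prime_two
    have q1 : 2 ∣ d * a ^ 2 ↔ 2 ∣ d ∨ 2 ∣ a := by
      rw [p2.dvd_mul]; exact or_congr Iff.rfl ⟨p2.dvd_of_dvd_pow, fun h => dvd_pow h (by norm_num)⟩
    have q2 : 2 ∣ b * n ^ 2 ↔ 2 ∣ b ∨ 2 ∣ n := by
      rw [p2.dvd_mul]; exact or_congr Iff.rfl ⟨p2.dvd_of_dvd_pow, fun h => dvd_pow h (by norm_num)⟩
    have q3 : 2 ∣ D ↔ 2 ∣ d ∨ 2 ∣ b := by rw [hb, p2.dvd_mul]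
    have q4 : 2 ∣ m * n ↔ (2 ∣ d ∨ 2 ∣ a) ∨ 2 ∣ n := by rw [ha, p2.dvd_mul, p2.dvd_mul]
    have q6 : 2 ∣ D + 1 ↔ ¬ 2 ∣ D := by omega
    split_ifs at he with hc <;> rw [q6, q3, q4] at hc
    · left; refine ⟨he, ?_⟩
      have : ¬ (2 ∣ d * a ^ 2 ↔ 2 ∣ b * n ^ 2) := by
        rw [q1, q2]
        clear q1 q2 q3 q4 q6 c1 he ha hb hg h1 h2 hXY hDsf
        by_cases i1 : 2 ∣ d <;> by_cases i2 : 2 ∣ a <;> by_cases i3 : 2 ∣ b <;>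
          by_cases i4 : 2 ∣ n <;> simp only [i1, i2, i3, i4] at hc c2 c3 c4 c5 ⊢ <;> simp at *
      omega
    · right; refine ⟨he, ?_⟩
      have : ¬ 2 ∣ d * a ^ 2 ∧ ¬ 2 ∣ b * n ^ 2 := by
        rw [q1, q2]
        clear q1 q2 q3 q4 q6 c1 he ha hb hg h1 h2 hXY hDsf
        by_cases i1 : 2 ∣ d <;> by_cases i2 : 2 ∣ a <;> by_cases i3 : 2 ∣ b <;>
          by_cases i4 : 2 ∣ n <;> simp only [i1, i2, i3, i4] at hc c2 c3 c4 c5 ⊢ <;> simp at *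
      omega
  obtain ⟨p, q, hp, hq, hpq⟩ := core_aux _ _ hXY e hpar
  obtain ⟨r, hr⟩ : ∃ r, 2 * a * n = 2 ^ e * r := by
    rcases hpar with ⟨h, -⟩ | ⟨h, -⟩
    · exact ⟨2 * a * n, by simp [h]⟩
    · exact ⟨a * n, by rw [h]; ring⟩
  have hgpos : 0 < g := by rw [hg]; positivity
  have hP : (m ^ 2 : ℤ) - D * n ^ 2 = g * p := by
    rw [hg, ha, hb]; push_cast at hp ⊢; linear_combination (d : ℤ) * hp
  have hP' : ((m ^ 2 : ℤ) - D * n ^ 2).natAbs = g * p.natAbs := by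
    rw [hP, Int.natAbs_mul, Int.natAbs_natCast]
  have hQ : m ^ 2 + D * n ^ 2 = g * q := by
    rw [hg, ha, hb]; linear_combination d * hq
  have hR : 2 * m * n = g * r := by
    rw [hg, ha]; linear_combination d * hr
  have hQ' : (m ^ 2 : ℤ) + D * n ^ 2 = g * q := by exact_mod_cast hQ
  have hR' : 2 * (m : ℤ) * n = g * r := by exact_mod_cast hR
  have hgz : (0 : ℤ) < g := by exact_mod_cast hgpos
  have h1' : (D : ℤ) * n ^ 2 ≤ 3 * m ^ 2 := by exact_mod_cast h1
  have h2' : (m : ℤ) ^ 2 ≤ 3 * (D * n ^ 2) := by exact_mod_cast h2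
  rw [hP', hQ, hR, Nat.mul_div_cancel_left _ hgpos, Nat.mul_div_cancel_left _ hgpos,
    Nat.mul_div_cancel_left _ hgpos]
  refine ⟨⟨_, rfl⟩, ⟨_, rfl⟩, ⟨_, rfl⟩, ?_, ?_, ?_⟩
  · have : (p ^ 2 + D * r ^ 2 : ℤ) = q ^ 2 := by
      apply mul_left_cancel₀ (pow_ne_zero 2 hgz.ne')
      calc (g : ℤ) ^ 2 * (p ^ 2 + D * r ^ 2) = ((g : ℤ) * p) ^ 2 + D * ((g : ℤ) * r) ^ 2 := by ring
        _ = ((g : ℤ) * q) ^ 2 := by rw [← hP, ← hQ', ← hR']; ring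
        _ = (g : ℤ) ^ 2 * (q : ℤ) ^ 2 := by ring
    zify
    rw [sq_abs]; exact this
  · have := Int.isCoprime_iff_gcd_eq_one.mp hpq
    simpa [Int.gcd] using this
  · have a1 : 2 * p ≤ q := by
      refine le_of_mul_le_mul_left ?_ hgz
      linarith
    have a2 : -(2 * p) ≤ q := by
      refine le_of_mul_le_mul_left ?_ hgz
      linarith
    omega
end

section
/- Let p, r, q be positive integers and D a positive squarefree integer satisfying p² + D r² = q², gcd(p, q) = 1, and 2p ≤ q. Then there exist coprime positive integers m, n with D n² ≤ 3 m² and m² ≤ 3 D n² such that p = |m² − D n²|/g, r = 2mn/g, and q = (m² + D n²)/g, where g = 2^e · gcd(m, D) and e = 0 if 2 ∣ D or if both mn and D+1 are even, and e = 1 otherwise. -/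
set_option maxHeartbeats 1000000 in
/-- Converse direction of the parameterization (Lemma 1.3): every solution
`(p, r, q)` of `p² + D r² = q²` with `gcd(p,q) = 1` and `2p ≤ q` arises from
coprime positive integers `m, n` via the stated formulas. -/
theorem stmt1 (p r q D : ℕ) (hp : 0 < p) (hr : 0 < r) (hq : 0 < q) (hD : 0 < D)
    (hDsf : Squarefree D) (heq : p ^ 2 + D * r ^ 2 = q ^ 2)
    (hgcd : Nat.gcd p q = 1) (hhalf : 2 * p ≤ q) :
    ∃ m n : ℕ, 0 < m ∧ 0 < n ∧ Nat.gcd m n = 1 ∧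
      D * n ^ 2 ≤ 3 * m ^ 2 ∧ m ^ 2 ≤ 3 * (D * n ^ 2) ∧
      ∃ e g : ℕ,
        e = (if 2 ∣ D ∨ (2 ∣ m * n ∧ 2 ∣ D + 1) then 0 else 1) ∧
        g = 2 ^ e * Nat.gcd m D ∧
        ((m ^ 2 : ℤ) - D * n ^ 2).natAbs = g * p ∧
        2 * m * n = g * r ∧
        m ^ 2 + D * n ^ 2 = g * q := by
  obtain ⟨s, rfl⟩ : ∃ s, q = p + s := ⟨q - p, by omega⟩
  have hs : p ≤ s := by omega
  have hs0 : 0 < s := by omega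
  have h1 : s * (2 * p + s) = D * r ^ 2 := by nlinarith
  obtain ⟨d, m, n, hd, hmn, hm, hn⟩ := Nat.exists_coprime' (m := 2 * p + s) (n := r)
    (Nat.gcd_pos_of_pos_right _ hr)
  have hm0 : 0 < m := by
    rcases Nat.eq_zero_or_pos m with h | h
    · subst h; omega
    · exact h
  have hn0 : 0 < n := by
    rcases Nat.eq_zero_or_pos n with h | h
    · subst h; omega
    · exact h
  have h2 : s * m = D * n ^ 2 * d := by
    have : d * (s * m) = d * (D * n ^ 2 * d) := by
      rw [hm] at h1
      rw [hn] at h1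
      linarith
    exact Nat.eq_of_mul_eq_mul_left hd this
  have h3 : m ^ 2 * d = m * (2 * p + s) := by rw [hm]; ring
  have hple : D * n ^ 2 ≤ m ^ 2 := by
    have : D * n ^ 2 * d ≤ m ^ 2 * d := by rw [← h2, h3]; nlinarith
    exact Nat.le_of_mul_le_mul_right this hd
  have hle3 : m ^ 2 ≤ 3 * (D * n ^ 2) := by
    have : m ^ 2 * d ≤ 3 * (D * n ^ 2) * d := by
      rw [mul_assoc 3, ← h2, h3]; nlinarith
    exact Nat.le_of_mul_le_mul_right this hd
  obtain ⟨t, ht⟩ := Nat.exists_eq_add_of_le hple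
  have h4 : t * d = 2 * m * p := by
    rw [ht] at h3; nlinarith
  have h5 : (m ^ 2 + D * n ^ 2) * d = 2 * m * (p + s) := by nlinarith
  have h6 : (p + s) * t = p * (m ^ 2 + D * n ^ 2) := by
    have : d * ((p + s) * t) = d * (p * (m ^ 2 + D * n ^ 2)) := by
      calc d * ((p + s) * t) = (p + s) * (t * d) := by ring
        _ = p * (2 * m * (p + s)) := by rw [h4]; ring
        _ = _ := by rw [← h5]; ring
    exact Nat.eq_of_mul_eq_mul_left hd this
  have hcop : Nat.Coprime p (p + s) := hgcd
  obtain ⟨g, hg⟩ : (p + s) ∣ m ^ 2 + D * n ^ 2 :=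
    hcop.symm.dvd_of_dvd_mul_left ⟨t, h6.symm⟩
  have hgt : t = g * p := by
    have : (p + s) * t = (p + s) * (g * p) := by rw [h6, hg]; ring
    exact Nat.eq_of_mul_eq_mul_left hq this
  have hgd : g * d = 2 * m := by
    have : (p + s) * (g * d) = (p + s) * (2 * m) := by
      rw [hg] at h5; linarith
    exact Nat.eq_of_mul_eq_mul_left hq this
  have hgr : 2 * m * n = g * r := by rw [← hgd, hn]; ring
  -- structure of g
  obtain ⟨h, m', k, hh, hmk, hm', hk⟩ := Nat.exists_coprime' (m := m) (n := D)
    (Nat.gcd_pos_of_pos_right _ hD)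
  have hgcdmD : Nat.gcd m D = h := by
    rw [hm', hk, Nat.gcd_mul_right, hmk.gcd_eq_one, one_mul]
  have hkh : Nat.Coprime k h := by
    rw [hk] at hDsf; exact Nat.coprime_of_squarefree_mul hDsf
  have hmn' : Nat.Coprime m n := hmn
  rw [hm'] at hmn'
  have hab : Nat.Coprime (h * m' ^ 2) (k * n ^ 2) := by
    apply Nat.Coprime.mul_left
    · exact Nat.Coprime.mul_right hkh.symm ((Nat.Coprime.coprime_mul_left hmn').pow_right 2)
    · exact Nat.Coprime.mul_right (hmk.pow_left 2)
        ((Nat.Coprime.coprime_mul_right hmn').pow 2 2)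
  have hA : m ^ 2 = h * (h * m' ^ 2) := by rw [hm']; ring
  have hB : D * n ^ 2 = h * (k * n ^ 2) := by rw [hk]; ring
  generalize hadef : h * m' ^ 2 = a at *
  generalize hbdef : k * n ^ 2 = b at *
  have hhg : h ∣ g := by
    have e1 : h ∣ g * (p + s) := by
      rw [mul_comm g, ← hg, hA, hB, ← mul_add]; exact dvd_mul_right _ _
    have e2 : h ∣ g * p := by
      rw [← hgt]
      have : h ∣ D * n ^ 2 + t := by rw [← ht, hA]; exact dvd_mul_right _ _
      exact (Nat.dvd_add_right (by rw [hB]; exact dvd_mul_right _ _)).1 this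
    have e3 := Nat.dvd_gcd e1 e2
    rwa [Nat.gcd_mul_left, hcop.symm.gcd_eq_one, mul_one] at e3
  obtain ⟨c, rfl⟩ := hhg
  have e1 : a + b = c * (p + s) := by
    apply Nat.eq_of_mul_eq_mul_left hh
    rw [hA, hB] at hg; linarith
  have e2 : a = b + c * p := by
    apply Nat.eq_of_mul_eq_mul_left hh
    rw [hA, hB, hgt] at ht; linarith
  have hc2 : c ∣ 2 := by
    have f1 : c ∣ 2 * b := ⟨s, by linarith⟩
    have f2 : c ∣ 2 * a := ⟨2 * p + s, by linarith⟩
    have f3 := Nat.dvd_gcd f2 f1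
    rwa [Nat.gcd_mul_left, hab.gcd_eq_one, mul_one] at f3
  refine ⟨m, n, hm0, hn0, hmn, by omega, hle3, _, h * c, rfl, ?_, ?_, hgr, by rw [hg]; ring⟩
  · rw [hgcdmD, mul_comm]
    congr 1
    have hc : c = 1 ∨ c = 2 := (Nat.dvd_prime Nat.prime_two).1 hc2
    have hodd : ¬ (2 ∣ a ∧ 2 ∣ b) := by
      rintro ⟨x, y⟩
      have := Nat.dvd_gcd x y
      rw [hab.gcd_eq_one] at this
      omega
    rcases hc with rfl | rfl
    · rw [if_pos]; · rfl
      by_contra hcon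
      push Not at hcon
      obtain ⟨g1, g2⟩ := hcon
      have oD : Odd D := by rw [← Nat.not_even_iff_odd, even_iff_two_dvd]; exact g1
      have omn : Odd (m * n) := by
        rw [← Nat.not_even_iff_odd, even_iff_two_dvd]
        intro hx
        have := g2 hx
        omega
      rw [hk, Nat.odd_mul] at oD
      rw [hm', Nat.odd_mul, Nat.odd_mul] at omn
      have oa : Odd a := by rw [← hadef]; exact oD.2.mul omn.1.1.pow
      have ob : Odd b := by rw [← hbdef]; exact oD.1.mul omn.2.pow
      obtain ⟨x, hx⟩ := oa
      obtain ⟨y, hy⟩ := ob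
      have := Nat.dvd_gcd (show 2 ∣ p by omega) (show 2 ∣ p + s by omega)
      rw [hgcd] at this
      omega
    · have oa : Odd a := by rw [Nat.odd_iff]; omega
      have ob : Odd b := by rw [Nat.odd_iff]; omega
      rw [← hadef, Nat.odd_mul, Nat.odd_pow_iff (by norm_num)] at oa
      rw [← hbdef, Nat.odd_mul, Nat.odd_pow_iff (by norm_num)] at ob
      have oD : Odd D := by rw [hk]; exact ob.1.mul oa.1
      have omn : Odd (m * n) := by rw [hm']; exact (oa.2.mul oa.1).mul ob.2
      rw [if_neg]; · rfl
      rw [Nat.odd_iff] at oD omn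
      omega
  · rw [← hgt]
    have : (m ^ 2 : ℤ) = D * n ^ 2 + t := by exact_mod_cast ht
    rw [this]; simp
end

section
/- Let D be a positive squarefree integer and let m, n be coprime positive integers. Then gcd(|m² − D n²|, m² + D n²) = 2^e · gcd(m, D), where e = 0 if 2 ∣ D or if both mn and D+1 are even, and e = 1 otherwise. -/
theorem aux_gcd (A B : ℕ) (h : Nat.Coprime A B) :
    Nat.gcd ((A : ℤ) - B).natAbs (A + B) = if 2 ∣ A + B then 2 else 1 := by
  have h1 : Nat.gcd ((A : ℤ) - B).natAbs (A + B) ∣ 2 := by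
    set t := Nat.gcd ((A : ℤ) - B).natAbs (A + B) with ht
    have a1 : (t : ℤ) ∣ (A : ℤ) - B := Int.natCast_dvd.mpr (Nat.gcd_dvd_left _ _)
    have a2 : (t : ℤ) ∣ (A : ℤ) + B := by exact_mod_cast Nat.gcd_dvd_right _ _
    have a3 : t ∣ 2 * A := by
      have : (t : ℤ) ∣ 2 * A := by
        have := dvd_add a1 a2
        ring_nf at this ⊢
        exact this
      exact_mod_cast this
    have a4 : t ∣ 2 * B := by
      have : (t : ℤ) ∣ 2 * B := by
        have := dvd_sub a2 a1
        ring_nf at this ⊢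
        exact this
      exact_mod_cast this
    have := Nat.dvd_gcd a3 a4
    rwa [Nat.gcd_mul_left, h.gcd_eq_one] at this
  split_ifs with h2
  · apply Nat.dvd_antisymm h1
    apply Nat.dvd_gcd _ h2
    omega
  · rcases (Nat.dvd_prime Nat.prime_two).mp h1 with h3 | h3
    · exact h3
    · exact absurd (h3 ▸ Nat.gcd_dvd_right _ _) h2

/-- The gcd computation in the proof of Lemma 1.3:
`gcd(|m² − D n²|, m² + D n²) = 2^e · gcd(m, D)`. -/
theorem stmt2 (D m n : ℕ) (hD : 0 < D) (hDsf : Squarefree D)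
    (hm : 0 < m) (hn : 0 < n) (hmn : Nat.gcd m n = 1) :
    Nat.gcd ((m ^ 2 : ℤ) - D * n ^ 2).natAbs (m ^ 2 + D * n ^ 2)
      = 2 ^ (if 2 ∣ D ∨ (2 ∣ m * n ∧ 2 ∣ D + 1) then 0 else 1) * Nat.gcd m D := by
  obtain ⟨g, k, d, hg, hkd, hm', hD'⟩ := Nat.exists_coprime' (m := m) (n := D)
    (Nat.gcd_pos_of_pos_left _ hm)
  have hgg : Nat.gcd m D = g := by
    rw [hm', hD', Nat.gcd_mul_right, hkd.gcd_eq_one, one_mul]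
  rw [hgg]
  subst hm' hD'
  have hdg : Nat.Coprime d g := Nat.coprime_of_squarefree_mul hDsf
  have hkn : Nat.Coprime k n := Nat.Coprime.coprime_mul_right hmn
  have hgn : Nat.Coprime g n := Nat.Coprime.coprime_mul_left hmn
  have hAB : Nat.Coprime (g * k ^ 2) (d * n ^ 2) := by
    apply Nat.Coprime.mul_left <;> apply Nat.Coprime.mul_right
    · exact hdg.symm
    · exact hgn.pow_right 2
    · exact hkd.pow_left 2
    · exact hkn.pow 2 2
  have e1 : (((k * g : ℕ) : ℤ) ^ 2 - ((d * g : ℕ) : ℤ) * (n : ℤ) ^ 2).natAbs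
      = g * (((g * k ^ 2 : ℕ) : ℤ) - ((d * n ^ 2 : ℕ) : ℤ)).natAbs := by
    rw [← Int.natAbs_natCast g, ← Int.natAbs_mul, Int.natAbs_natCast]
    congr 1
    push_cast
    ring
  have e2 : (k * g) ^ 2 + d * g * n ^ 2 = g * (g * k ^ 2 + d * n ^ 2) := by ring
  rw [e1, e2, Nat.gcd_mul_left, aux_gcd _ _ hAB, mul_comm]
  congr 1
  have key : ∀ a b : ℕ, Nat.Coprime a b → ¬ (Even a ∧ Even b) := by
    rintro a b h ⟨ha, hb⟩
    have := Nat.dvd_gcd ha.two_dvd hb.two_dvd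
    rw [h.gcd_eq_one] at this
    omega
  have k1 := key _ _ hdg
  have k2 := key _ _ hkn
  have k3 := key _ _ hgn
  have k4 := key _ _ hkd
  have : (2 ∣ g * k ^ 2 + d * n ^ 2) ↔
      ¬ (2 ∣ d * g ∨ (2 ∣ k * g * n ∧ 2 ∣ d * g + 1)) := by
    simp only [← even_iff_two_dvd, Nat.even_add, Nat.even_mul, Nat.even_pow, Nat.not_even_one]
    simp only [ne_eq, OfNat.ofNat_ne_zero, not_false_eq_true, and_true]
    tauto
  by_cases hc : 2 ∣ d * g ∨ (2 ∣ k * g * n ∧ 2 ∣ d * g + 1)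
  · rw [if_pos hc, if_neg (by rw [this]; exact not_not.mpr hc), pow_zero]
  · rw [if_neg hc, if_pos (this.mpr hc), pow_one]
end

section
/- Let α, β, γ, δ be integers with β² ≠ 4αγ and δ ≠ 0, and suppose (a, b, c) is an integer solution of α x² + β x y + γ y² = δ z² with c ≠ 0. Then for every integer solution (x, y, z) of this equation with z ≠ 0 there exist integers m, n with gcd(m, n) = 1 and m ≥ 0, a rational number t, and a sign ε ∈ {1, −1}, such that x = t·(γ n (a n − 2 b m) − (α a + β b) m²), y = t·(α m (b m − 2 a n) − (γ b + β a) n²), and z = ε t · c (α m² + β m n + γ n²). Conversely, every such rational multiple with integer entries is a solution of the equation. -/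
theorem aux_coprime (u v : ℤ) (h : ¬ (u = 0 ∧ v = 0)) :
    ∃ k m n : ℤ, k ≠ 0 ∧ u = k * m ∧ v = k * n ∧ Int.gcd m n = 1 ∧ 0 ≤ m := by
  have hg : 0 < Int.gcd u v := by
    rw [Nat.pos_iff_ne_zero]
    intro h0
    exact h (Int.gcd_eq_zero_iff.mp h0)
  obtain ⟨m, n, hmn, hu, hv⟩ := Int.exists_gcd_one hg
  have hg' : ((Int.gcd u v : ℕ) : ℤ) ≠ 0 := by exact_mod_cast hg.ne'
  rcases le_total 0 m with hm | hm
  · exact ⟨Int.gcd u v, m, n, hg', by rw [mul_comm]; exact hu, by rw [mul_comm]; exact hv, hmn, hm⟩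
  · refine ⟨-Int.gcd u v, -m, -n, neg_ne_zero.mpr hg', ?_, ?_, ?_, by omega⟩
    · rw [neg_mul_neg, mul_comm]; exact hu
    · rw [neg_mul_neg, mul_comm]; exact hv
    · simpa using hmn

/-- Lemma 2.1: given one integral solution `(a,b,c)` with `c ≠ 0` of
`α x² + β x y + γ y² = δ z²`, every integral solution with `z ≠ 0` is a rational
multiple of the explicitly parameterized family, and conversely every such
rational multiple with integer entries is a solution. -/
theorem stmt3 (α β γ δ a b c : ℤ) (hdisc : β ^ 2 ≠ 4 * α * γ) (hδ : δ ≠ 0)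
    (hc : c ≠ 0) (habc : α * a ^ 2 + β * a * b + γ * b ^ 2 = δ * c ^ 2) :
    (∀ x y z : ℤ, α * x ^ 2 + β * x * y + γ * y ^ 2 = δ * z ^ 2 → z ≠ 0 →
      ∃ (m n : ℤ) (t : ℚ) (ε : ℤ), Int.gcd m n = 1 ∧ 0 ≤ m ∧ (ε = 1 ∨ ε = -1) ∧
        (x : ℚ) = t * ((γ : ℚ) * n * (a * n - 2 * b * m) - (α * a + β * b) * m ^ 2) ∧
        (y : ℚ) = t * ((α : ℚ) * m * (b * m - 2 * a * n) - (γ * b + β * a) * n ^ 2) ∧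
        (z : ℚ) = (ε : ℚ) * t * c * ((α : ℚ) * m ^ 2 + β * m * n + γ * n ^ 2)) ∧
    (∀ (m n : ℤ) (t : ℚ) (ε : ℤ) (x y z : ℤ), Int.gcd m n = 1 → 0 ≤ m →
      (ε = 1 ∨ ε = -1) →
      (x : ℚ) = t * ((γ : ℚ) * n * (a * n - 2 * b * m) - (α * a + β * b) * m ^ 2) →
      (y : ℚ) = t * ((α : ℚ) * m * (b * m - 2 * a * n) - (γ * b + β * a) * n ^ 2) →
      (z : ℚ) = (ε : ℚ) * t * c * ((α : ℚ) * m ^ 2 + β * m * n + γ * n ^ 2) →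
      α * x ^ 2 + β * x * y + γ * y ^ 2 = δ * z ^ 2) := by
  constructor
  · intro x y z h hz
    have key : ∃ ε : ℤ, (ε = 1 ∨ ε = -1) ∧
        α * (c * x - ε * a * z) ^ 2 + β * (c * x - ε * a * z) * (c * y - ε * b * z)
          + γ * (c * y - ε * b * z) ^ 2 ≠ 0 := by
      by_contra hcon
      push Not at hcon
      have h1 := hcon 1 (Or.inl rfl)
      have h2 := hcon (-1) (Or.inr rfl)
      have h3 : 4 * (δ * c ^ 2 * z ^ 2) = 0 := by
        linear_combination h1 + h2 - 2 * c ^ 2 * h - 2 * z ^ 2 * habc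
      have h4 : 4 * (δ * c ^ 2 * z ^ 2) ≠ 0 := by positivity
      exact h4 h3
    obtain ⟨ε, hε, hQ⟩ := key
    obtain ⟨k, m, n, hk, hu, hv, hmn, hm⟩ :=
      aux_coprime (c * x - ε * a * z) (c * y - ε * b * z) (by
        rintro ⟨h1, h2⟩
        apply hQ
        rw [h1, h2]; ring)
    have hε2 : ε ^ 2 = 1 := by rcases hε with rfl | rfl <;> norm_num
    have hQ' : α * m ^ 2 + β * m * n + γ * n ^ 2 ≠ 0 := by
      intro h0
      apply hQ
      rw [hu, hv]
      linear_combination k ^ 2 * h0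
    have hB : k * (α * m ^ 2 + β * m * n + γ * n ^ 2) =
        - ε * z * (2 * α * a * m + β * (a * n + b * m) + 2 * γ * b * n) := by
      apply mul_left_cancel₀ hk
      have e : α * (c * x - ε * a * z) ^ 2 + β * (c * x - ε * a * z) * (c * y - ε * b * z)
          + γ * (c * y - ε * b * z) ^ 2 = - ε * z * (2 * α * a * (c * x - ε * a * z)
          + β * (a * (c * y - ε * b * z) + b * (c * x - ε * a * z))
          + 2 * γ * b * (c * y - ε * b * z)) := by
        linear_combination c ^ 2 * h - ε ^ 2 * z ^ 2 * habc - δ * c ^ 2 * z ^ 2 * hε2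
      rw [hu, hv] at e
      linear_combination e
    have hcQ : (c : ℚ) ≠ 0 := by exact_mod_cast hc
    have hQQ : (α : ℚ) * m ^ 2 + β * m * n + γ * n ^ 2 ≠ 0 := by exact_mod_cast hQ'
    have hBQ : (k : ℚ) * (α * m ^ 2 + β * m * n + γ * n ^ 2) =
        - ε * z * (2 * α * a * m + β * (a * n + b * m) + 2 * γ * b * n) := by exact_mod_cast hB
    have huQ : (c : ℚ) * x - ε * a * z = k * m := by exact_mod_cast hu
    have hvQ : (c : ℚ) * y - ε * b * z = k * n := by exact_mod_cast hv
    have hεQ : (ε : ℚ) ^ 2 = 1 := by exact_mod_cast hε2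
    refine ⟨m, n, ε * z / (c * (α * m ^ 2 + β * m * n + γ * n ^ 2)), ε, hmn, hm, hε, ?_, ?_, ?_⟩
    · rw [div_mul_eq_mul_div, eq_div_iff (mul_ne_zero hcQ hQQ)]
      linear_combination (α * m ^ 2 + β * m * n + γ * n ^ 2 : ℚ) * huQ + m * hBQ
    · rw [div_mul_eq_mul_div, eq_div_iff (mul_ne_zero hcQ hQQ)]
      linear_combination (α * m ^ 2 + β * m * n + γ * n ^ 2 : ℚ) * hvQ + n * hBQ
    · generalize (α : ℚ) * m ^ 2 + β * m * n + γ * n ^ 2 = q at hQQ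
      field_simp
      rw [hεQ]
  · intro m n t ε x y z _ _ hε hx hy hz
    have hεQ : (ε : ℚ) ^ 2 = 1 := by rcases hε with rfl | rfl <;> norm_num
    have hQ : (α : ℚ) * a ^ 2 + β * a * b + γ * b ^ 2 = δ * c ^ 2 := by exact_mod_cast habc
    have : (α : ℚ) * x ^ 2 + β * x * y + γ * y ^ 2 = δ * z ^ 2 := by
      rw [hx, hy, hz]
      linear_combination t ^ 2 * (α * m ^ 2 + β * m * n + γ * n ^ 2 : ℚ) ^ 2 * hQ
        - δ * t ^ 2 * c ^ 2 * (α * m ^ 2 + β * m * n + γ * n ^ 2 : ℚ) ^ 2 * hεQ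
    exact_mod_cast this
end

section
/- Let p, r, q, D be integers with p ≥ 0, r, q, D ≥ 1, D squarefree, p² + D r² = q², gcd(p, q) = 1, and 2p ≤ q, and let Λ = Ω_D(p,q) be the planar lattice with basis vectors v = (q, 0) and w = (p, r√D). Then Λ is integral with ⟨v,v⟩ = ⟨w,w⟩ = q² and ⟨v,w⟩ = pq; its minimal norm is |Λ| = q², with v and w being linearly independent minimal vectors, so Λ is well-rounded; and det(Λ) = q r √D. Moreover, the rescaled lattice (1/√q)·Λ is also integral and well-rounded, with minimal norm q. -/
/-- The standard inner product on the plane `ℝ × ℝ`. -/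
def ip (v w : ℝ × ℝ) : ℝ := v.1 * w.1 + v.2 * w.2

/-- The planar lattice spanned by `v` and `w`. -/
def lat (v w : ℝ × ℝ) : Set (ℝ × ℝ) := {z | ∃ a b : ℤ, z = (a : ℝ) • v + (b : ℝ) • w}

/-- The set of squared lengths of nonzero vectors of the lattice spanned by `v, w`;
its least element is the minimal norm of the lattice. -/
def normSet (v w : ℝ × ℝ) : Set ℝ := {t | ∃ z ∈ lat v w, z ≠ 0 ∧ t = ip z z}

lemma ip_comb (v w : ℝ × ℝ) (N c s t : ℝ) (h1 : ip v v = N) (h2 : ip w w = N) (h3 : ip v w = c) :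
    ip (s • v + t • w) (s • v + t • w) =
      (N - 2 * c) * (s ^ 2 + t ^ 2) + 2 * c * (s ^ 2 + s * t + t ^ 2) := by
  subst h1 h3
  have h : (ip v v - 2 * ip v w) * (s ^ 2 + t ^ 2) + 2 * ip v w * (s ^ 2 + s * t + t ^ 2)
      = s ^ 2 * ip v v + 2 * s * t * ip v w + t ^ 2 * ip w w := by rw [h2]; ring
  rw [h]
  simp only [ip, Prod.fst_add, Prod.snd_add, Prod.smul_fst, Prod.smul_snd, smul_eq_mul]
  ring

lemma gram_li (v w : ℝ × ℝ) (N c : ℝ) (h1 : ip v v = N) (h2 : ip w w = N) (h3 : ip v w = c)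
    (hN : 0 < N) (hc : 0 ≤ c) (hcN : 2 * c ≤ N) : LinearIndependent ℝ ![v, w] := by
  rw [LinearIndependent.pair_iff]
  intro s t hst
  have h := ip_comb v w N c s t h1 h2 h3
  rw [hst] at h
  have h0 : ip (0 : ℝ × ℝ) 0 = 0 := by simp [ip]
  rw [h0] at h
  have h5 : 0 ≤ c * (s + t) ^ 2 := by positivity
  have h6 : (N - c) * (s ^ 2 + t ^ 2) ≤ 0 := by nlinarith
  have h7 : s ^ 2 + t ^ 2 ≤ 0 := by
    by_contra hh
    push Not at hh
    have : 0 < (N - c) * (s ^ 2 + t ^ 2) := mul_pos (by linarith) hh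
    linarith
  constructor <;> nlinarith [sq_nonneg s, sq_nonneg t]

lemma gram_least (v w : ℝ × ℝ) (N c : ℝ) (h1 : ip v v = N) (h2 : ip w w = N) (h3 : ip v w = c)
    (hN : 0 < N) (hc : 0 ≤ c) (hcN : 2 * c ≤ N) : IsLeast (normSet v w) N := by
  constructor
  · refine ⟨v, ⟨1, 0, by simp⟩, ?_, h1.symm⟩
    rintro rfl
    simp [ip] at h1
    linarith
  · rintro x ⟨z, ⟨a, b, rfl⟩, hz, rfl⟩
    rw [ip_comb v w N c a b h1 h2 h3]
    have hab : ¬ (a = 0 ∧ b = 0) := by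
      rintro ⟨rfl, rfl⟩
      simp at hz
    have e1 : 0 < a ^ 2 + b ^ 2 := by
      by_contra hh
      exact hab ⟨by nlinarith [sq_nonneg a, sq_nonneg b], by nlinarith [sq_nonneg a, sq_nonneg b]⟩
    have e2 : 0 < a ^ 2 + a * b + b ^ 2 := by nlinarith [sq_nonneg (a + b)]
    have f1 : (1 : ℝ) ≤ (a : ℝ) ^ 2 + (b : ℝ) ^ 2 := by exact_mod_cast e1
    have f2 : (1 : ℝ) ≤ (a : ℝ) ^ 2 + a * b + (b : ℝ) ^ 2 := by exact_mod_cast e2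
    have g1 := mul_le_mul_of_nonneg_left f1 (sub_nonneg.2 hcN)
    have g2 := mul_le_mul_of_nonneg_left f2 (by linarith : 0 ≤ 2 * c)
    linarith

/-- Proposition 1.1 (construction): `Ω_D(p,q)` is integral well-rounded with
minimal norm `q²` and determinant `q r √D`, and its rescaling by `1/√q` is
integral well-rounded with minimal norm `q`. -/
theorem stmt6 (p r q D : ℤ) (hp : 0 ≤ p) (hr : 1 ≤ r) (hq : 1 ≤ q) (hD : 1 ≤ D)
    (hDsf : Squarefree D) (heq : p ^ 2 + D * r ^ 2 = q ^ 2)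
    (hgcd : Int.gcd p q = 1) (hhalf : 2 * p ≤ q)
    (v w : ℝ × ℝ) (hv : v = ((q : ℝ), 0))
    (hw : w = ((p : ℝ), (r : ℝ) * Real.sqrt (D : ℝ))) :
    ip v v = (q : ℝ) ^ 2 ∧ ip w w = (q : ℝ) ^ 2 ∧ ip v w = (p : ℝ) * (q : ℝ) ∧
    LinearIndependent ℝ ![v, w] ∧
    v ∈ lat v w ∧ w ∈ lat v w ∧
    IsLeast (normSet v w) ((q : ℝ) ^ 2) ∧
    |v.1 * w.2 - w.1 * v.2| = (q : ℝ) * (r : ℝ) * Real.sqrt (D : ℝ) ∧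
    (∀ v' w' : ℝ × ℝ, v' = (Real.sqrt (q : ℝ))⁻¹ • v → w' = (Real.sqrt (q : ℝ))⁻¹ • w →
      ip v' v' = (q : ℝ) ∧ ip w' w' = (q : ℝ) ∧ ip v' w' = (p : ℝ) ∧
      LinearIndependent ℝ ![v', w'] ∧
      IsLeast (normSet v' w') (q : ℝ)) := by
  have hq' : (1 : ℝ) ≤ q := by exact_mod_cast hq
  have hp' : (0 : ℝ) ≤ p := by exact_mod_cast hp
  have hr' : (1 : ℝ) ≤ r := by exact_mod_cast hr
  have hD' : (1 : ℝ) ≤ D := by exact_mod_cast hD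
  have hh' : 2 * (p : ℝ) ≤ q := by exact_mod_cast hhalf
  have he' : (p : ℝ) ^ 2 + D * (r : ℝ) ^ 2 = (q : ℝ) ^ 2 := by exact_mod_cast heq
  have hs : Real.sqrt (D : ℝ) ^ 2 = D := Real.sq_sqrt (by linarith)
  have h1 : ip v v = (q : ℝ) ^ 2 := by subst hv; simp [ip]; ring
  have h2 : ip w w = (q : ℝ) ^ 2 := by
    subst hw
    simp only [ip]
    linear_combination (r : ℝ) ^ 2 * hs + he'
  have h3 : ip v w = (p : ℝ) * (q : ℝ) := by subst hv hw; simp [ip]; ring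
  have hN : (0 : ℝ) < (q : ℝ) ^ 2 := by positivity
  have hc : (0 : ℝ) ≤ (p : ℝ) * q := by positivity
  have hcN : 2 * ((p : ℝ) * q) ≤ (q : ℝ) ^ 2 := by nlinarith
  refine ⟨h1, h2, h3, gram_li v w _ _ h1 h2 h3 hN hc hcN, ⟨1, 0, by simp⟩, ⟨0, 1, by simp⟩,
    gram_least v w _ _ h1 h2 h3 hN hc hcN, ?_, ?_⟩
  · subst hv hw
    have : (0 : ℝ) ≤ (q : ℝ) * r * Real.sqrt D := by positivity
    rw [← abs_of_nonneg this]
    simp only [mul_zero, sub_zero, mul_assoc, abs_abs]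
  · intro v' w' hv' hw'
    have hsm : ∀ x y : ℝ × ℝ, ip ((Real.sqrt (q : ℝ))⁻¹ • x) ((Real.sqrt (q : ℝ))⁻¹ • y)
        = (q : ℝ)⁻¹ * ip x y := by
      intro x y
      have : (q : ℝ)⁻¹ = (Real.sqrt (q : ℝ))⁻¹ ^ 2 := by
        rw [inv_pow, Real.sq_sqrt (by linarith)]
      rw [this]
      simp only [ip, Prod.smul_fst, Prod.smul_snd, smul_eq_mul]
      ring
    have k1 : ip v' v' = (q : ℝ) := by rw [hv', hsm, h1]; field_simp
    have k2 : ip w' w' = (q : ℝ) := by rw [hw', hsm, h2]; field_simp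
    have k3 : ip v' w' = (p : ℝ) := by rw [hv', hw', hsm, h3]; field_simp
    exact ⟨k1, k2, k3, gram_li v' w' _ _ k1 k2 k3 (by linarith) hp' hh',
      gram_least v' w' _ _ k1 k2 k3 (by linarith) hp' hh'⟩
end

section
/- Let Λ be an IWR planar lattice spanned by linearly independent minimal vectors v, w satisfying 0 ≤ 2⟨v,w⟩ ≤ ⟨v,v⟩ (so ⟨v,v⟩ = ⟨w,w⟩ = |Λ|). Then there exist integers p ≥ 0 and r, q, D ≥ 1 with D squarefree, p² + D r² = q², gcd(p, q) = 1, and 2p ≤ q, such that q·⟨v,w⟩ = p·|Λ| and q²·(|Λ|² − ⟨v,w⟩²) = D r² |Λ|² (that is, the cosine and sine of the angle between v and w equal p/q and r√D/q, respectively). Moreover, Λ is similar to Ω_D(p,q): there exist a real α > 0 and a linear isometry U of ℝ² with v = α·U(q, 0) and w = α·U(p, r√D). -/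
theorem exU (v w : ℝ × ℝ) (N p q s : ℝ) (hN : 0 < N) (hq : 0 < q) (hs : 0 < s)
    (h : p ^ 2 + s ^ 2 = q ^ 2) (hvv : ip v v = N) (hww : ip w w = N)
    (hvw : q * ip v w = p * N) :
    ∃ (α : ℝ) (U : (ℝ × ℝ) →ₗ[ℝ] (ℝ × ℝ)), 0 < α ∧
        (∀ z₁ z₂ : ℝ × ℝ, ip (U z₁) (U z₂) = ip z₁ z₂) ∧
        v = α • U (q, 0) ∧ w = α • U (p, s) := by
  obtain ⟨α, hα, hα2⟩ : ∃ α : ℝ, 0 < α ∧ N = α ^ 2 * q ^ 2 := by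
    refine ⟨Real.sqrt N / q, by positivity, ?_⟩
    rw [div_pow, Real.sq_sqrt hN.le]
    field_simp
  have hvw' : ip v w = p * q * α ^ 2 := by
    have : q * ip v w = q * (p * q * α ^ 2) := by rw [hvw, hα2]; ring
    exact mul_left_cancel₀ hq.ne' this
  obtain ⟨v1, v2⟩ := v
  obtain ⟨w1, w2⟩ := w
  simp only [ip] at hvv hww hvw'
  obtain ⟨a, ha⟩ : ∃ a, a = v1 / (α * q) := ⟨_, rfl⟩
  obtain ⟨b, hb⟩ : ∃ b, b = v2 / (α * q) := ⟨_, rfl⟩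
  obtain ⟨c, hc⟩ : ∃ c, c = (w1 / α - p * a) / s := ⟨_, rfl⟩
  obtain ⟨d, hd⟩ : ∃ d, d = (w2 / α - p * b) / s := ⟨_, rfl⟩
  have hv1 : v1 = α * (q * a) := by rw [ha]; field_simp
  have hv2 : v2 = α * (q * b) := by rw [hb]; field_simp
  have hw1 : w1 = α * (p * a + s * c) := by rw [hc]; field_simp; ring
  have hw2 : w2 = α * (p * b + s * d) := by rw [hd]; field_simp; ring
  have e1 : a * a + b * b = 1 := by
    have : (α ^ 2 * q ^ 2) * (a * a + b * b) = (α ^ 2 * q ^ 2) * 1 := by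
      rw [hv1, hv2, hα2] at hvv
      linear_combination hvv
    exact mul_left_cancel₀ (by positivity) this
  have e2 : a * c + b * d = 0 := by
    have : (α ^ 2 * q * s) * (a * c + b * d) = (α ^ 2 * q * s) * 0 := by
      rw [hv1, hv2, hw1, hw2] at hvw'
      linear_combination hvw' - α ^ 2 * q * p * e1
    exact mul_left_cancel₀ (by positivity) this
  have e3 : c * c + d * d = 1 := by
    have : (α ^ 2 * s ^ 2) * (c * c + d * d) = (α ^ 2 * s ^ 2) * 1 := by
      rw [hw1, hw2, hα2] at hww
      linear_combination hww - α ^ 2 * p ^ 2 * e1 - 2 * α ^ 2 * p * s * e2 - α ^ 2 * h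
    exact mul_left_cancel₀ (by positivity) this
  refine ⟨α, (LinearMap.fst ℝ ℝ ℝ).smulRight (a, b) + (LinearMap.snd ℝ ℝ ℝ).smulRight (c, d),
    hα, ?_, ?_, ?_⟩
  · rintro ⟨x, y⟩ ⟨x', y'⟩
    simp [ip]
    linear_combination x * x' * e1 + (x * y' + x' * y) * e2 + y * y' * e3
  · ext <;> simp [hv1, hv2]
  · ext <;> simp [hw1, hw2]

/-- Proposition 1.1 (parameterization): an IWR planar lattice, spanned by a
minimal basis `v, w` with `0 ≤ 2⟨v,w⟩ ≤ ⟨v,v⟩ = |Λ| = N`, has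
`cos θ = p/q`, `sin θ = r√D/q` for a quadruple `(p,r,q,D)` satisfying (1.5),
and is similar to `Ω_D(p,q)`. -/
theorem stmt7 (v w : ℝ × ℝ) (N : ℝ)
    (hli : LinearIndependent ℝ ![v, w])
    (hint : (∃ a : ℤ, ip v v = (a : ℝ)) ∧ (∃ a : ℤ, ip v w = (a : ℝ)) ∧
      (∃ a : ℤ, ip w w = (a : ℝ)))
    (hvv : ip v v = N) (hww : ip w w = N)
    (hmin : IsLeast (normSet v w) N)
    (hang1 : 0 ≤ 2 * ip v w) (hang2 : 2 * ip v w ≤ ip v v) :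
    ∃ p r q D : ℤ, 0 ≤ p ∧ 1 ≤ r ∧ 1 ≤ q ∧ 1 ≤ D ∧ Squarefree D ∧
      p ^ 2 + D * r ^ 2 = q ^ 2 ∧ Int.gcd p q = 1 ∧ 2 * p ≤ q ∧
      (q : ℝ) * ip v w = (p : ℝ) * N ∧
      (q : ℝ) ^ 2 * (N ^ 2 - ip v w ^ 2) = (D : ℝ) * (r : ℝ) ^ 2 * N ^ 2 ∧
      ∃ (α : ℝ) (U : (ℝ × ℝ) →ₗ[ℝ] (ℝ × ℝ)), 0 < α ∧
        (∀ z₁ z₂ : ℝ × ℝ, ip (U z₁) (U z₂) = ip z₁ z₂) ∧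
        v = α • U ((q : ℝ), 0) ∧ w = α • U ((p : ℝ), (r : ℝ) * Real.sqrt (D : ℝ)) := by
  obtain ⟨⟨a, ha⟩, ⟨b, hb⟩, -⟩ := hint
  have hN : 0 < N := by
    have hv : v ≠ 0 := hli.ne_zero 0
    rw [← hvv]
    by_contra hcon
    apply hv
    simp only [ip] at hcon
    have h1 : v.1 = 0 := by nlinarith [mul_self_nonneg v.1, mul_self_nonneg v.2]
    have h2 : v.2 = 0 := by nlinarith [mul_self_nonneg v.1, mul_self_nonneg v.2]
    exact Prod.ext h1 h2
  have hNa : N = (a : ℝ) := by rw [← hvv, ha]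
  have ha0 : 0 < a := by rw [hNa] at hN; exact_mod_cast hN
  have hb0 : 0 ≤ b := by
    rw [hb] at hang1
    have : (0 : ℤ) ≤ 2 * b := by exact_mod_cast hang1
    omega
  have hba : 2 * b ≤ a := by
    rw [hb, ha] at hang2
    exact_mod_cast hang2
  have hg : 0 < Int.gcd b a := Int.gcd_pos_of_ne_zero_right _ ha0.ne'
  obtain ⟨p, q, hpq, hbp, haq⟩ := Int.exists_gcd_one hg
  have hg' : (0 : ℤ) < (Int.gcd b a : ℤ) := by exact_mod_cast hg
  generalize (Int.gcd b a : ℤ) = g at *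
  have hq0 : 0 < q := by rw [haq] at ha0; exact pos_of_mul_pos_left ha0 hg'.le
  have hp0 : 0 ≤ p := by rw [hbp] at hb0; exact nonneg_of_mul_nonneg_left hb0 hg'
  have h2p : 2 * p ≤ q := by
    rw [haq, hbp] at hba
    nlinarith
  have hpos : 0 < q ^ 2 - p ^ 2 := by nlinarith
  obtain ⟨D, r, hD, hr, hDr, hsq⟩ := Nat.sq_mul_squarefree_of_pos (n := (q ^ 2 - p ^ 2).toNat) (by omega)
  have hDr' : (r : ℤ) ^ 2 * (D : ℤ) = q ^ 2 - p ^ 2 := by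
    have : (((r ^ 2 * D : ℕ)) : ℤ) = q ^ 2 - p ^ 2 := by rw [hDr]; exact Int.toNat_of_nonneg hpos.le
    exact_mod_cast this
  have hR : (r : ℝ) ^ 2 * (D : ℝ) = (q : ℝ) ^ 2 - (p : ℝ) ^ 2 := by exact_mod_cast hDr'
  have hqb : (q : ℝ) * ip v w = p * N := by
    rw [hb, hNa, hbp, haq]; push_cast; ring
  refine ⟨p, r, q, D, hp0, by exact_mod_cast hr, hq0, by exact_mod_cast hD,
    Int.squarefree_natCast.mpr hsq, by linarith, hpq, h2p, hqb, ?_, ?_⟩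
  · push_cast
    linear_combination (-(q : ℝ) * ip v w - p * N) * hqb - N ^ 2 * hR
  · apply exU v w N p q _ hN (by exact_mod_cast hq0) _ _ hvv hww hqb
    · have : (0 : ℝ) < r := by exact_mod_cast hr
      have : (0 : ℝ) < D := by exact_mod_cast hD
      push_cast
      positivity
    · push_cast
      rw [mul_pow, Real.sq_sqrt (Nat.cast_nonneg D), hR]
      ring
end

section
/- Let (p, r, q, D) and (p', r', q', D') be two quadruples of integers with p, p' ≥ 0, r, q, D, r', q', D' ≥ 1, D and D' squarefree, p² + D r² = q², p'² + D' r'² = q'², gcd(p, q) = gcd(p', q') = 1, 2p ≤ q, and 2p' ≤ q'. If the lattices Ω_D(p,q) and Ω_{D'}(p',q') are similar, then (p, r, q, D) = (p', r', q', D'). -/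
theorem form_ge (A B a b : ℤ) (hB : 0 ≤ B) (hAB : 2 * B ≤ A) (h : a ≠ 0 ∨ b ≠ 0) :
    A ≤ A * a ^ 2 + 2 * B * (a * b) + A * b ^ 2 := by
  have h1 : 1 ≤ a ^ 2 + b ^ 2 := by
    rcases h with h | h
    · have := sq_pos_of_ne_zero h
      nlinarith [sq_nonneg b]
    · have := sq_pos_of_ne_zero h
      nlinarith [sq_nonneg a]
  have h2 : 1 ≤ a ^ 2 + a * b + b ^ 2 := by
    by_contra hc
    nlinarith [sq_nonneg (a + b)]
  nlinarith [mul_nonneg (sub_nonneg.2 hAB) (sub_nonneg.2 h1), mul_nonneg hB (sub_nonneg.2 h2)]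

theorem form_eq (A B a b : ℤ) (hA : 0 < A) (hB : 0 ≤ B) (hAB : 2 * B ≤ A)
    (h : A * a ^ 2 + 2 * B * (a * b) + A * b ^ 2 = A) : -1 ≤ a ∧ a ≤ 1 := by
  by_contra hc
  have h2 : 4 ≤ a ^ 2 := by
    by_contra h3
    apply hc
    constructor <;> nlinarith
  have h1 : 3 ≤ a ^ 2 + b ^ 2 := by nlinarith [sq_nonneg b]
  have h3 : 3 ≤ a ^ 2 + a * b + b ^ 2 := by nlinarith [sq_nonneg (a + 2 * b)]
  nlinarith [mul_nonneg (sub_nonneg.2 hAB) (sub_nonneg.2 h1), mul_nonneg hB (sub_nonneg.2 h3)]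

theorem key (A B C a b c d : ℤ) (hA : 0 < A) (hB : 0 ≤ B) (hAB : 2 * B ≤ A)
    (hC : 0 ≤ C) (hAC : 2 * C ≤ A)
    (h1 : A * a ^ 2 + 2 * B * (a * b) + A * b ^ 2 = A)
    (h2 : A * c ^ 2 + 2 * B * (c * d) + A * d ^ 2 = A)
    (h3 : C = A * (a * c) + B * (a * d + b * c) + A * (b * d)) : C = B := by
  obtain ⟨a1, a2⟩ := form_eq A B a b hA hB hAB h1
  obtain ⟨b1, b2⟩ := form_eq A B b a hA hB hAB (by linarith)
  obtain ⟨c1, c2⟩ := form_eq A B c d hA hB hAB h2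
  obtain ⟨d1, d2⟩ := form_eq A B d c hA hB hAB (by linarith)
  interval_cases a <;> interval_cases b <;> (try omega) <;>
    interval_cases c <;> interval_cases d <;> omega

theorem sf_unique (D r D' r' : ℤ) (hr : 1 ≤ r) (hD : 1 ≤ D) (hD' : 1 ≤ D')
    (hDsf : Squarefree D) (hDsf' : Squarefree D') (h : D * r ^ 2 = D' * r' ^ 2) : D = D' := by
  have h1 : r ^ 2 ∣ (D' * r') ^ 2 := ⟨D * D', by linear_combination (-D') * h⟩
  rw [Int.pow_dvd_pow_iff two_ne_zero] at h1
  obtain ⟨m, hm⟩ := h1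
  have h2 : D * D' = m ^ 2 := by
    have : r ^ 2 ≠ 0 := by positivity
    apply mul_left_cancel₀ this
    have : (D' * r') ^ 2 = (r * m) ^ 2 := by rw [hm]
    linear_combination this + D' * h
  have h3 : D ∣ m := (hDsf.dvd_pow_iff_dvd two_ne_zero).1 ⟨D', h2.symm⟩
  obtain ⟨k, rfl⟩ := h3
  have h4 : D' = D * (k * k) := by
    apply mul_left_cancel₀ (show D ≠ 0 by omega)
    linear_combination h2
  have h5 := hDsf' k ⟨D, by rw [h4]; ring⟩
  rcases Int.isUnit_iff.1 h5 with rfl | rfl <;> omega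

theorem ip_comb_s9 (p r q D a b c d : ℤ) (hD : 1 ≤ D) (heq : p ^ 2 + D * r ^ 2 = q ^ 2) :
    ip ((a : ℝ) • ((q : ℝ), (0 : ℝ)) + (b : ℝ) • ((p : ℝ), (r : ℝ) * Real.sqrt (D : ℝ)))
      ((c : ℝ) • ((q : ℝ), (0 : ℝ)) + (d : ℝ) • ((p : ℝ), (r : ℝ) * Real.sqrt (D : ℝ)))
      = q * (q * (a * c) + p * (a * d + b * c) + q * (b * d)) := by
  have hs : Real.sqrt (D : ℝ) ^ 2 = D := Real.sq_sqrt (by exact_mod_cast (by omega : 0 ≤ D))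
  have he : (p : ℝ) ^ 2 + D * r ^ 2 = q ^ 2 := by exact_mod_cast heq
  simp [ip]
  linear_combination (b * d * r ^ 2 : ℝ) * hs + (b * d : ℝ) * he

/-- The uniqueness assertion of Proposition 1.1: if `Ω_D(p,q)` and
`Ω_{D'}(p',q')` are similar (via a positive scalar and a linear isometry of the
plane), then the parameter quadruples coincide. -/
theorem stmt9 (p r q D p' r' q' D' : ℤ)
    (hp : 0 ≤ p) (hr : 1 ≤ r) (hq : 1 ≤ q) (hD : 1 ≤ D) (hDsf : Squarefree D)
    (hp' : 0 ≤ p') (hr' : 1 ≤ r') (hq' : 1 ≤ q') (hD' : 1 ≤ D') (hDsf' : Squarefree D')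
    (heq : p ^ 2 + D * r ^ 2 = q ^ 2) (heq' : p' ^ 2 + D' * r' ^ 2 = q' ^ 2)
    (hgcd : Int.gcd p q = 1) (hgcd' : Int.gcd p' q' = 1)
    (hhalf : 2 * p ≤ q) (hhalf' : 2 * p' ≤ q')
    (hsim : ∃ (α : ℝ) (U : (ℝ × ℝ) →ₗ[ℝ] (ℝ × ℝ)), 0 < α ∧
      (∀ z₁ z₂ : ℝ × ℝ, ip (U z₁) (U z₂) = ip z₁ z₂) ∧
      lat ((q' : ℝ), 0) ((p' : ℝ), (r' : ℝ) * Real.sqrt (D' : ℝ))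
        = (fun z => α • U z) '' lat ((q : ℝ), 0) ((p : ℝ), (r : ℝ) * Real.sqrt (D : ℝ))) :
    p = p' ∧ r = r' ∧ q = q' ∧ D = D' := by
  obtain ⟨α, U, hα, hU, hL⟩ := hsim
  have hip : ∀ z₁ z₂ : ℝ × ℝ, ip (α • U z₁) (α • U z₂) = α ^ 2 * ip z₁ z₂ := by
    intro z₁ z₂
    rw [← hU z₁ z₂]
    simp [ip]
    ring
  have hqR : (0 : ℝ) < q := by exact_mod_cast (by omega : 0 < q)
  have hqR' : (0 : ℝ) < q' := by exact_mod_cast (by omega : 0 < q')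
  have I := fun a b c d => ip_comb_s9 p r q D a b c d hD heq
  have I' := fun a b c d => ip_comb_s9 p' r' q' D' a b c d hD' heq'
  have fwd : ∀ a b : ℤ, ∃ c d : ℤ,
      α • U ((a : ℝ) • ((q : ℝ), (0 : ℝ)) + (b : ℝ) • ((p : ℝ), (r : ℝ) * Real.sqrt (D : ℝ)))
      = (c : ℝ) • ((q' : ℝ), (0 : ℝ)) + (d : ℝ) • ((p' : ℝ), (r' : ℝ) * Real.sqrt (D' : ℝ)) := by
    intro a b
    have : α • U ((a : ℝ) • ((q : ℝ), (0 : ℝ)) + (b : ℝ) • ((p : ℝ), (r : ℝ) * Real.sqrt (D : ℝ)))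
      ∈ lat ((q' : ℝ), 0) ((p' : ℝ), (r' : ℝ) * Real.sqrt (D' : ℝ)) := by
      rw [hL]
      exact ⟨_, ⟨a, b, rfl⟩, rfl⟩
    exact this
  have bwd : ∃ a b : ℤ,
      α • U ((a : ℝ) • ((q : ℝ), (0 : ℝ)) + (b : ℝ) • ((p : ℝ), (r : ℝ) * Real.sqrt (D : ℝ)))
      = ((1 : ℤ) : ℝ) • ((q' : ℝ), (0 : ℝ))
        + ((0 : ℤ) : ℝ) • ((p' : ℝ), (r' : ℝ) * Real.sqrt (D' : ℝ)) := by
    have : ((1 : ℤ) : ℝ) • ((q' : ℝ), (0 : ℝ))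
        + ((0 : ℤ) : ℝ) • ((p' : ℝ), (r' : ℝ) * Real.sqrt (D' : ℝ))
      ∈ lat ((q' : ℝ), 0) ((p' : ℝ), (r' : ℝ) * Real.sqrt (D' : ℝ)) := ⟨1, 0, rfl⟩
    rw [hL] at this
    obtain ⟨_, ⟨a, b, rfl⟩, h⟩ := this
    exact ⟨a, b, h⟩
  obtain ⟨e, f, hef⟩ := bwd
  obtain ⟨a, b, hab⟩ := fwd 1 0
  obtain ⟨c, d, hcd⟩ := fwd 0 1
  have E0 := hip ((e : ℝ) • ((q : ℝ), (0 : ℝ)) + (f : ℝ) • ((p : ℝ), (r : ℝ) * Real.sqrt (D : ℝ)))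
    ((e : ℝ) • ((q : ℝ), (0 : ℝ)) + (f : ℝ) • ((p : ℝ), (r : ℝ) * Real.sqrt (D : ℝ)))
  rw [hef, I, I'] at E0
  have E1 := hip (((1 : ℤ) : ℝ) • ((q : ℝ), (0 : ℝ)) + ((0 : ℤ) : ℝ) • ((p : ℝ), (r : ℝ) * Real.sqrt (D : ℝ)))
    (((1 : ℤ) : ℝ) • ((q : ℝ), (0 : ℝ)) + ((0 : ℤ) : ℝ) • ((p : ℝ), (r : ℝ) * Real.sqrt (D : ℝ)))
  rw [hab, I, I'] at E1
  have E2 := hip (((0 : ℤ) : ℝ) • ((q : ℝ), (0 : ℝ)) + ((1 : ℤ) : ℝ) • ((p : ℝ), (r : ℝ) * Real.sqrt (D : ℝ)))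
    (((0 : ℤ) : ℝ) • ((q : ℝ), (0 : ℝ)) + ((1 : ℤ) : ℝ) • ((p : ℝ), (r : ℝ) * Real.sqrt (D : ℝ)))
  rw [hcd, I, I'] at E2
  have E3 := hip (((1 : ℤ) : ℝ) • ((q : ℝ), (0 : ℝ)) + ((0 : ℤ) : ℝ) • ((p : ℝ), (r : ℝ) * Real.sqrt (D : ℝ)))
    (((0 : ℤ) : ℝ) • ((q : ℝ), (0 : ℝ)) + ((1 : ℤ) : ℝ) • ((p : ℝ), (r : ℝ) * Real.sqrt (D : ℝ)))
  rw [hab, hcd, I, I'] at E3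
  clear hab hcd hef I I' fwd hip hL hU
  simp only [Int.cast_one, Int.cast_zero, mul_one, mul_zero, zero_mul, add_zero, zero_add] at E0 E1 E2 E3
  have hα2 : 0 < α ^ 2 := by positivity
  have nef : e ≠ 0 ∨ f ≠ 0 := by
    by_contra hc
    push Not at hc
    obtain ⟨rfl, rfl⟩ := hc
    simp at E0
    nlinarith
  have nab : a ≠ 0 ∨ b ≠ 0 := by
    by_contra hc
    push Not at hc
    obtain ⟨rfl, rfl⟩ := hc
    have : 0 < α ^ 2 * ((q : ℝ) * q) := by positivity
    rw [← E1] at this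
    simp at this
  have G0 : (q : ℝ) ≤ q * e ^ 2 + 2 * p * (e * f) + q * f ^ 2 := by
    exact_mod_cast form_ge q p e f hp hhalf nef
  have G1 : (q' : ℝ) ≤ q' * a ^ 2 + 2 * p' * (a * b) + q' * b ^ 2 := by
    exact_mod_cast form_ge q' p' a b hp' hhalf' nab
  have hs : (q' : ℝ) * q' = α ^ 2 * (q * q) := by
    apply le_antisymm
    · rw [← E1]
      apply mul_le_mul_of_nonneg_left _ hqR'.le
      linarith
    · rw [E0]
      apply mul_le_mul_of_nonneg_left _ hα2.le
      apply mul_le_mul_of_nonneg_left _ hqR.le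
      linarith
  rw [← hs] at E1 E2
  have F1 : q' * a ^ 2 + 2 * p' * (a * b) + q' * b ^ 2 = q' := by
    have := mul_left_cancel₀ hqR'.ne' E1
    have h : q' * (a * a) + p' * (a * b + b * a) + q' * (b * b) = q' := by exact_mod_cast this
    linarith
  have F2 : q' * c ^ 2 + 2 * p' * (c * d) + q' * d ^ 2 = q' := by
    have := mul_left_cancel₀ hqR'.ne' E2
    have h : q' * (c * c) + p' * (c * d + d * c) + q' * (d * d) = q' := by exact_mod_cast this
    linarith
  have F3 : q * (q' * (a * c) + p' * (a * d + b * c) + q' * (b * d)) = q' * p := by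
    have h : (q : ℝ) * (q' * (a * c) + p' * (a * d + b * c) + q' * (b * d)) = q' * p := by
      apply mul_left_cancel₀ hqR'.ne'
      linear_combination q * E3 - p * hs
    exact_mod_cast h
  have K : q' * p = q * p' := by
    apply key (q * q') (q * p') (q' * p) a b c d
    · positivity
    · positivity
    · nlinarith
    · positivity
    · nlinarith
    · linear_combination q * F1
    · linear_combination q * F2
    · linear_combination -F3
  have hc : IsCoprime p q := Int.isCoprime_iff_gcd_eq_one.2 hgcd
  have hc' : IsCoprime p' q' := Int.isCoprime_iff_gcd_eq_one.2 hgcd'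
  have d1 : q ∣ q' := hc.symm.dvd_of_dvd_mul_right ⟨p', K⟩
  have d2 : q' ∣ q := hc'.symm.dvd_of_dvd_mul_right ⟨p, K.symm⟩
  have hqq : q = q' := Int.dvd_antisymm (by omega) (by omega) d1 d2
  subst hqq
  have hpp : p = p' := mul_left_cancel₀ (by omega : q ≠ 0) K
  subst hpp
  have hDr : D * r ^ 2 = D' * r' ^ 2 := by linarith
  have hDD := sf_unique D r D' r' hr hD hD' hDsf hDsf' hDr
  subst hDD
  have hrr : r ^ 2 = r' ^ 2 := mul_left_cancel₀ (by omega : D ≠ 0) hDr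
  refine ⟨rfl, ?_, rfl, rfl⟩
  nlinarith
end

section
/- Fix a real number Δ > 0 and a real number s ≥ 3. For T ∈ [Δ, 2Δ/√3], define E(T) = Σ_{(x,y) ∈ ℤ² ∖ {(0,0)}} (T x² + T y² + 2 x y √(T² − Δ²))^{−s} (this series converges). Then E is a decreasing function of T on [Δ, 2Δ/√3]: if Δ ≤ T₁ ≤ T₂ ≤ 2Δ/√3 then E(T₂) ≤ E(T₁). -/
/-- The Epstein zeta function `E_Λ(s)` of the well-rounded planar lattice of
determinant `Δ` and minimal norm `T`, expressed through the Gram quadratic form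
`Q(x,y) = T x² + T y² + 2xy√(T² − Δ²)` of a minimal basis. -/
noncomputable def epstein (Δ s T : ℝ) : ℝ :=
  ∑' xy : {v : ℤ × ℤ // v ≠ 0},
    (T * ((xy : ℤ × ℤ).1 : ℝ) ^ 2 + T * ((xy : ℤ × ℤ).2 : ℝ) ^ 2
      + 2 * ((xy : ℤ × ℤ).1 : ℝ) * ((xy : ℤ × ℤ).2 : ℝ) * Real.sqrt (T ^ 2 - Δ ^ 2)) ^ (-s)

open Real
lemma hex_poly (t p : ℝ) (h0 : 0 ≤ t) (h1 : t ≤ 5/6) (hp : 0 ≤ p) (s2 q : ℝ)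
    (hs2 : s2 = 3-2*t+t^2/4) (hq : q = (1-t/2)^2-t^3*p) :
    (3-t)*(s2^3*q-3*s2*(3-t)*q^2+3*q^3) ≤
    (3-2*t)*(s2^4-4*s2^2*(3-t)*q+2*(3-t)^2*q^2+4*s2*q^2) := by
  have e : (3-2*t)*(s2^4-4*s2^2*(3-t)*q+2*(3-t)^2*q^2+4*s2*q^2)
     - (3-t)*(s2^3*q-3*s2*(3-t)*q^2+3*q^3)
     = t^2*(1-t/2)^4*(1-3*t/2+t^2/2-t^3/16)
      + p*t^3*(90-210*t+799/4*t^2-409/4*t^3+125/4*t^4-23/4*t^5+35/64*t^6-1/64*t^7)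
      + p^2*t^6*(144-192*t+85*t^2-57/4*t^3+3/4*t^4) + p^3*t^9*(9-3*t) := by
    subst hs2 hq; ring
  have hw : 0 ≤ 5/6 - t := by linarith
  have a0 : 0 ≤ 1-3*t/2+t^2/2-t^3/16 := by
    nlinarith [mul_nonneg h0 hw, mul_nonneg (mul_nonneg h0 hw) hw, mul_nonneg (mul_nonneg h0 hw) h0, sq_nonneg (5/6-t)]
  have a1 : 0 ≤ 90-210*t+799/4*t^2-409/4*t^3+125/4*t^4-23/4*t^5+35/64*t^6-1/64*t^7 := by
    have e1 : 0 ≤ 90-210*t+799/4*t^2-409/4*t^3+ 26*t^4 := by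
      nlinarith [mul_nonneg h0 hw, mul_nonneg (mul_nonneg h0 hw) hw, mul_nonneg (mul_nonneg h0 hw) h0, sq_nonneg (5/6-t), sq_nonneg (t^2-t*(2)), mul_nonneg hw (sq_nonneg (t-2/3)), sq_nonneg (t^2-2*t+5/6)]
    have e2 : 0 ≤ t^4*(21/4-23/4*t+35/64*t^2-1/64*t^3) := by
      have : 0 ≤ 21/4-23/4*t+35/64*t^2-1/64*t^3 := by
        nlinarith [mul_nonneg h0 hw, mul_nonneg (mul_nonneg h0 hw) h0]
      positivity
    linarith
  have a2 : 0 ≤ 144-192*t+85*t^2-57/4*t^3+3/4*t^4 := by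
    nlinarith [mul_nonneg h0 hw, mul_nonneg (mul_nonneg h0 hw) hw, mul_nonneg (mul_nonneg h0 hw) h0, sq_nonneg (5/6-t), sq_nonneg (t^2)]
  have a3 : 0 ≤ 9-3*t := by linarith
  have : 0 ≤ t^2*(1-t/2)^4*(1-3*t/2+t^2/2-t^3/16)
      + p*t^3*(90-210*t+799/4*t^2-409/4*t^3+125/4*t^4-23/4*t^5+35/64*t^6-1/64*t^7)
      + p^2*t^6*(144-192*t+85*t^2-57/4*t^3+3/4*t^4) + p^3*t^9*(9-3*t) := by positivity
  linarith

lemma hex_three (t a b c : ℝ) (h0 : 0 ≤ t) (h1 : t ≤ 5/6) (ha : 0 ≤ a) (hb : 0 ≤ b) (hc : 0 ≤ c)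
    (h : a + b + c = 1) (h2 : a*b+b*c+c*a = 1/4) :
    (1-(3-t)*a)/(1-t*a)^4 + (1-(3-t)*b)/(1-t*b)^4 + (1-(3-t)*c)/(1-t*c)^4 ≤ 0 := by
  have hA : 0 < 1-t*a := by nlinarith
  have hB : 0 < 1-t*b := by nlinarith
  have hC : 0 < 1-t*c := by nlinarith
  rcases h0.eq_or_lt with rfl | ht
  · norm_num; linarith
  have key := hex_poly t (a*b*c) h0 h1 (by positivity) _ ((1-t*a)*(1-t*b)*(1-t*c)) rfl (by
    linear_combination (-t) * h + t^2*h2)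
  obtain ⟨A, hAe⟩ : ∃ A, A = 1-t*a := ⟨_, rfl⟩
  obtain ⟨B, hBe⟩ : ∃ A, A = 1-t*b := ⟨_, rfl⟩
  obtain ⟨C, hCe⟩ : ∃ A, A = 1-t*c := ⟨_, rfl⟩
  have s1 : 3 - t = A+B+C := by rw [hAe,hBe,hCe]; linear_combination t*h
  have s2 : 3-2*t+t^2/4 = A*B+B*C+C*A := by
    rw [hAe,hBe,hCe]; linear_combination 2*t*h - t^2*h2
  rw [s2, ← hAe, ← hBe, ← hCe] at key
  rw [← hAe] at hA ⊢
  rw [← hBe] at hB ⊢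
  rw [← hCe] at hC ⊢
  have na : 1-(3-t)*a = ((3-t)*A-(3-2*t))/t := by rw [hAe]; field_simp; ring
  have nb : 1-(3-t)*b = ((3-t)*B-(3-2*t))/t := by rw [hBe]; field_simp; ring
  have nc : 1-(3-t)*c = ((3-t)*C-(3-2*t))/t := by rw [hCe]; field_simp; ring
  rw [na, nb, nc]
  have : ((3-t)*A-(3-2*t))/t/A^4 + ((3-t)*B-(3-2*t))/t/B^4 + ((3-t)*C-(3-2*t))/t/C^4
    = -(((3-2*t)*((B*C)^4+(C*A)^4+(A*B)^4) - (3-t)*(A*B*C)*((B*C)^3+(C*A)^3+(A*B)^3))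
      /(t*(A*B*C)^4)) := by
    field_simp; ring
  rw [this, neg_nonpos]
  apply div_nonneg _ (by positivity)
  generalize 3-2*t = w at *
  rw [s1] at key ⊢
  nlinarith [key]

lemma hex_s (t s a b c : ℝ) (hs : 3 ≤ s) (h0 : 0 ≤ t) (h1 : t ≤ 5/6)
    (ha : 0 ≤ a) (hb : 0 ≤ b) (hc : 0 ≤ c)
    (h : a + b + c = 1) (h2 : a*b+b*c+c*a = 1/4) :
    (1-(3-t)*a)*(1-t*a)^(-s-1) + (1-(3-t)*b)*(1-t*b)^(-s-1)
     + (1-(3-t)*c)*(1-t*c)^(-s-1) ≤ 0 := by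
  have K0 : 0 < (3-2*t)/(3-t) := by apply div_pos <;> linarith
  have term : ∀ x : ℝ, 0 ≤ x → x ≤ 1 → (1-(3-t)*x)*(1-t*x)^(-s-1) ≤
      ((3-2*t)/(3-t))^(-(s-3)) * ((1-(3-t)*x)/(1-t*x)^4) := by
    intro x hx hx1
    have hD : 0 < 1-t*x := by nlinarith
    have e : (1-t*x)^(-s-1) = (1-t*x)^(-(s-3)) / (1-t*x)^4 := by
      rw [← Real.rpow_natCast, ← Real.rpow_sub hD]; congr 1; push_cast; ring
    rw [e]
    have : ((1-(3-t)*x)) * (1-t*x)^(-(s-3)) ≤ (1-(3-t)*x) * ((3-2*t)/(3-t))^(-(s-3)) := by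
      rcases le_total 0 (1-(3-t)*x) with hp | hp
      · apply mul_le_mul_of_nonneg_left _ hp
        apply Real.rpow_le_rpow_of_nonpos K0 _ (by linarith)
        rw [div_le_iff₀ (by linarith)]; nlinarith
      · apply mul_le_mul_of_nonpos_left _ hp
        apply Real.rpow_le_rpow_of_nonpos hD _ (by linarith)
        rw [le_div_iff₀ (by linarith)]; nlinarith
    calc _ = ((1-(3-t)*x)) * (1-t*x)^(-(s-3)) / (1-t*x)^4 := by ring
      _ ≤ (1-(3-t)*x) * ((3-2*t)/(3-t))^(-(s-3)) / (1-t*x)^4 := by gcongr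
      _ = _ := by ring
  have := hex_three t a b c h0 h1 ha hb hc h h2
  have k := term a ha (by linarith)
  have k2 := term b hb (by linarith)
  have k3 := term c hc (by linarith)
  have : ((3-2*t)/(3-t))^(-(s-3)) * ((1-(3-t)*a)/(1-t*a)^4 + (1-(3-t)*b)/(1-t*b)^4 + (1-(3-t)*c)/(1-t*c)^4) ≤ 0 :=
    mul_nonpos_of_nonneg_of_nonpos (by positivity) this
  linarith

noncomputable def ww (x : ℤ) : ℝ := 1 / (|x|:ℝ)^3

lemma cube_sum : Summable (fun n : ℕ => 1/((n:ℝ)+1)^3) ∧ ∑' n : ℕ, 1/((n:ℝ)+1)^3 ≤ 5/4 := by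
  constructor
  · have := (summable_nat_add_iff 1).2 (Real.summable_one_div_nat_pow (p := 3) |>.2 (by norm_num))
    simpa using this
  · apply Real.tsum_le_of_sum_range_le
    · intro n; positivity
    · have : ∀ n : ℕ, ∑ i ∈ Finset.range (n+1), 1/((i:ℝ)+1)^3 ≤ 5/4 - 1/(2*((n:ℝ)+1)*(n+2)) := by
        intro n
        induction n with
        | zero => norm_num
        | succ k ih =>
          rw [Finset.sum_range_succ]
          have : 1/(((k+1:ℕ):ℝ)+1)^3 ≤ 1/(2*((k:ℝ)+1)*(k+2)) - 1/(2*(((k+1:ℕ):ℝ)+1)*((k+1:ℕ)+2)) := by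
            push_cast
            have e : 1/(2*((k:ℝ)+1)*(k+2)) - 1/(2*((k:ℝ)+1+1)*((k:ℝ)+1+2)) = 1/(((k:ℝ)+1)*(k+2)*(k+3)) := by
              field_simp; ring
            rw [e]
            apply one_div_le_one_div_of_le (by positivity)
            nlinarith [(Nat.cast_nonneg k : (0:ℝ) ≤ k)]
          linarith
      intro n
      have h := this n
      rw [Finset.sum_range_succ] at h
      have h1 : 0 ≤ 1/(2*((n:ℝ)+1)*(n+2)) := by positivity
      have h2 : 0 ≤ 1/((n:ℝ)+1)^3 := by positivity
      linarith

lemma ww_sum : Summable ww ∧ ∑' x, ww x ≤ 5/2 := by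
  obtain ⟨h1, h2⟩ := cube_sum
  have hA : HasSum (fun n : ℕ => ww n) (∑' n : ℕ, 1/((n:ℝ)+1)^3) := by
    rw [← hasSum_nat_add_iff' 1]
    simpa [ww, abs_of_nonneg, add_nonneg] using h1.hasSum
  have hB : HasSum (fun n : ℕ => ww (-(n+1:ℤ))) (∑' n : ℕ, 1/((n:ℝ)+1)^3) := by
    convert h1.hasSum using 2 with n
    unfold ww
    push_cast
    rw [abs_neg, abs_of_nonneg (by positivity)]
  have := HasSum.of_nat_of_neg_add_one hA hB
  exact ⟨this.summable, by rw [this.tsum_eq]; linarith⟩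

noncomputable def qf (n k u : ℝ) : ℝ := n * cosh u + k * sinh u

lemma qf_neg (n k u : ℝ) : qf n (-k) u = qf n k (-u) := by simp [qf]

lemma qf_ge (n k u : ℝ) (h : |k| ≤ n) : n * exp (-|u|) ≤ qf n k u := by
  obtain ⟨h1, h2⟩ := abs_le.1 h
  unfold qf
  rcases le_total 0 u with hu | hu
  · rw [abs_of_nonneg hu, ← Real.cosh_sub_sinh]
    nlinarith [Real.sinh_nonneg_iff.2 hu]
  · rw [abs_of_nonpos hu, neg_neg, ← Real.cosh_add_sinh]
    nlinarith [Real.sinh_nonpos_iff.2 hu]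

lemma qf_pos (n k u : ℝ) (hn : 0 < n) (h : |k| ≤ n) : 0 < qf n k u :=
  lt_of_lt_of_le (by positivity) (qf_ge n k u h)

lemma qf_deriv (n k u : ℝ) : HasDerivAt (qf n k) (qf k n u) u := by
  unfold qf
  have := ((Real.hasDerivAt_cosh u).const_mul n).add ((Real.hasDerivAt_sinh u).const_mul k)
  exact this.congr_deriv (by ring)

lemma qf_rpow_deriv (n k u r : ℝ) (hn : 0 < n) (h : |k| ≤ n) :
    HasDerivAt (fun u => qf n k u ^ r) (qf k n u * r * qf n k u ^ (r-1)) u :=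
  (qf_deriv n k u).rpow_const (Or.inl (qf_pos n k u hn h).ne')

/-- psi lower bound -/
lemma psi_bound (n k s L u0 u : ℝ) (hs : 0 ≤ s) (hn : 0 < n) (h : |k| ≤ n) (hL : L = exp u0)
    (hu : 0 ≤ u) (huu : u ≤ u0) :
    -(2*u*s*(n/L)^(-s)) ≤ qf k n u * qf n k u ^ (-s-1) - qf k n (-u) * qf n k (-u) ^ (-s-1) := by
  have mono : MonotoneOn (fun v => qf k n v * qf n k v ^ (-s-1) + s*(n/L)^(-s)*v) (Set.Icc (-u0) u0) := by
    have hd : ∀ v, HasDerivAt (fun v => qf k n v * qf n k v ^ (-s-1) + s*(n/L)^(-s)*v)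
       (qf n k v * qf n k v ^ (-s-1) + qf k n v * (qf k n v * (-s-1) * qf n k v ^ (-s-1-1))
         + s*(n/L)^(-s)*1) v := fun v =>
      ((qf_deriv k n v).mul (qf_rpow_deriv n k v (-s-1) hn h)).add ((hasDerivAt_id v).const_mul _)
    apply monotoneOn_of_hasDerivWithinAt_nonneg (convex_Icc _ _)
      (fun v _ => (hd v).continuousAt.continuousWithinAt) (fun v _ => (hd v).hasDerivWithinAt)
    intro v hv
    rw [interior_Icc] at hv
    have hq := qf_pos n k v hn h
    have e1 : qf n k v * qf n k v ^ (-s-1) = qf n k v ^ (-s) := by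
      rw [Real.rpow_sub_one hq.ne']; field_simp
    have e2 : qf n k v ^ (-s-1-1) = qf n k v ^ (-s) / qf n k v ^2 := by
      rw [Real.rpow_sub_one hq.ne', Real.rpow_sub_one hq.ne']; field_simp
    rw [e1, e2]
    have hle : qf n k v ^ (-s) ≤ (n/L)^(-s) := by
      have hL0 : 0 < L := by rw [hL]; positivity
      apply Real.rpow_le_rpow_of_nonpos (by positivity) _ (by linarith)
      refine le_trans ?_ (qf_ge n k v h)
      rw [hL, div_eq_mul_inv, ← Real.exp_neg]
      have : |v| ≤ u0 := abs_le.2 ⟨hv.1.le, hv.2.le⟩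
      gcongr
    have hsq : qf k n v ^2 ≤ qf n k v ^2 := by
      have : qf n k v ^2 - qf k n v ^2 = n^2-k^2 := by
        unfold qf; linear_combination (n^2-k^2) * Real.cosh_sq_sub_sinh_sq v
      have := sq_le_sq' (by linarith [(abs_le.1 h).1]) (abs_le.1 h).2
      linarith
    have hr : qf k n v ^2 / qf n k v ^2 ≤ 1 := by
      rw [div_le_one (by positivity)]; exact hsq
    have hp : 0 ≤ qf n k v ^ (-s) := by positivity
    have : qf k n v * (qf k n v * (-s-1) * (qf n k v ^ (-s) / qf n k v ^2))
      = -((s+1)*(qf n k v ^ (-s) * (qf k n v ^2 / qf n k v ^2))) := by ring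
    rw [this]
    have h3 : qf n k v ^ (-s) * (qf k n v ^2 / qf n k v ^2) ≤ qf n k v ^ (-s) :=
      mul_le_of_le_one_right hp hr
    nlinarith
  have := mono (a := -u) (b := u) ⟨by linarith, by linarith⟩ ⟨by linarith, huu⟩ (by linarith)
  simp only at this
  nlinarith

lemma B_bound (n k s L u0 u1 u2 : ℝ) (hs : 0 ≤ s) (hn : 0 < n) (h : |k| ≤ n) (hL : L = exp u0)
    (h1 : 0 ≤ u1) (h12 : u1 ≤ u2) (h2 : u2 ≤ u0) :
    (qf n k u2 ^ (-s) + qf n (-k) u2 ^ (-s)) - (qf n k u1 ^ (-s) + qf n (-k) u1 ^ (-s))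
      ≤ s^2 * (n/L)^(-s) * (u2^2-u1^2) := by
  have h' : |-k| ≤ n := by rwa [abs_neg]
  have anti : AntitoneOn (fun u => qf n k u ^ (-s) + qf n (-k) u ^ (-s) - s^2*(n/L)^(-s)*u^2)
      (Set.Icc 0 u0) := by
    have hd : ∀ v, HasDerivAt (fun u => qf n k u ^ (-s) + qf n (-k) u ^ (-s) - s^2*(n/L)^(-s)*u^2)
       (qf k n v * (-s) * qf n k v ^ (-s-1) + qf (-k) n v * (-s) * qf n (-k) v ^ (-s-1)
         - s^2*(n/L)^(-s)*(2*v)) v := fun v => by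
      have := ((qf_rpow_deriv n k v (-s) hn h).add (qf_rpow_deriv n (-k) v (-s) hn h')).sub
        ((hasDerivAt_pow 2 v).const_mul (s^2*(n/L)^(-s)))
      exact this.congr_deriv (by norm_num)
    apply antitoneOn_of_hasDerivWithinAt_nonpos (convex_Icc _ _)
      (fun v _ => (hd v).continuousAt.continuousWithinAt) (fun v _ => (hd v).hasDerivWithinAt)
    intro v hv
    rw [interior_Icc] at hv
    have := psi_bound n k s L u0 v hs hn h hL hv.1.le hv.2.le
    have e : qf (-k) n v = - qf k n (-v) := by simp [qf]; ring
    rw [e, qf_neg]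
    nlinarith
  have := anti (a := u1) (b := u2) ⟨h1, by linarith⟩ ⟨by linarith, h2⟩ h12
  simp only at this
  linarith

lemma cosh_bound (s C u0 u1 u2 : ℝ) (hs : 0 ≤ s) (hC : C = cosh u0)
    (h1 : 0 ≤ u1) (h12 : u1 ≤ u2) (h2 : u2 ≤ u0) :
    2 * cosh u2 ^ (-s) - 2 * cosh u1 ^ (-s) ≤ - (s * C^(-s-1)) * (u2^2-u1^2) := by
  have anti : AntitoneOn (fun u => 2 * cosh u ^ (-s) + s*C^(-s-1)*u^2)
      (Set.Icc 0 u0) := by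
    have hd : ∀ v, HasDerivAt (fun u => 2 * cosh u ^ (-s) + s*C^(-s-1)*u^2)
       (2 * (sinh v * (-s) * cosh v ^ (-s-1)) + s*C^(-s-1)*(2*v)) v := fun v => by
      have := (((Real.hasDerivAt_cosh v).rpow_const (p := -s) (Or.inl (Real.cosh_pos v).ne')).const_mul 2).add
        ((hasDerivAt_pow 2 v).const_mul (s*C^(-s-1)))
      exact this.congr_deriv (by norm_num)
    apply antitoneOn_of_hasDerivWithinAt_nonpos (convex_Icc _ _)
      (fun v _ => (hd v).continuousAt.continuousWithinAt) (fun v _ => (hd v).hasDerivWithinAt)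
    intro v hv
    rw [interior_Icc] at hv
    have hc : C^(-s-1) ≤ cosh v ^ (-s-1) := by
      apply Real.rpow_le_rpow_of_nonpos (Real.cosh_pos v) _ (by linarith)
      rw [hC, Real.cosh_le_cosh, abs_of_pos hv.1, abs_of_pos (hv.1.trans hv.2)]
      exact hv.2.le
    have hv' := Real.self_le_sinh_iff.2 hv.1.le
    have : C^(-s-1) * v ≤ cosh v ^ (-s-1) * sinh v := by
      have := hv.1.le
      have := (Real.cosh_pos v).le
      gcongr
    nlinarith
  have := anti (a := u1) (b := u2) ⟨h1, by linarith⟩ ⟨by linarith, h2⟩ h12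
  simp only at this
  linarith

noncomputable def nn (v : ℤ × ℤ) : ℝ := (v.1:ℝ)^2 + (v.2:ℝ)^2
noncomputable def kk (v : ℤ × ℤ) : ℝ := 2 * (v.1:ℝ) * (v.2:ℝ)
noncomputable def GG (s u : ℝ) (v : ℤ × ℤ) : ℝ := qf (nn v) (kk v) u ^ (-s)

lemma kk_le (v : ℤ × ℤ) : |kk v| ≤ nn v := by
  unfold kk nn
  rw [abs_le]; constructor <;> nlinarith [sq_nonneg ((v.1:ℝ)-v.2), sq_nonneg ((v.1:ℝ)+v.2)]

lemma GG_zero (s u : ℝ) (hs : 3 ≤ s) : GG s u 0 = 0 := by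
  simp [GG, nn, kk, qf]; rw [Real.zero_rpow (by linarith)]

lemma nn_pos (v : ℤ × ℤ) (hv : v ≠ 0) : 1 ≤ nn v := by
  unfold nn
  have : 1 ≤ v.1^2+v.2^2 := by
    by_contra hcon
    apply hv
    have h1 : v.1 = 0 := by nlinarith [sq_nonneg v.1, sq_nonneg v.2]
    have h2 : v.2 = 0 := by nlinarith [sq_nonneg v.1, sq_nonneg v.2]
    exact Prod.ext h1 h2
  exact_mod_cast this

lemma sq_sum : Summable (fun x : ℤ => 1/(1+|(x:ℝ)|)^2) := by
  have h : Summable (fun n : ℕ => 1/(1+(n:ℝ))^2) := by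
    have := (summable_nat_add_iff 1).2 (Real.summable_one_div_nat_pow (p := 2) |>.2 (by norm_num))
    simpa [add_comm] using this
  apply Summable.of_nat_of_neg
  · simpa using h
  · simpa using h

lemma GG_nonneg (s u : ℝ) (v : ℤ × ℤ) : 0 ≤ GG s u v := by
  unfold GG
  have h := qf_ge _ _ u (kk_le v)
  have : 0 ≤ nn v := by unfold nn; positivity
  exact Real.rpow_nonneg (le_trans (by positivity) h) _

lemma GG_summable (s u : ℝ) (hs : 3 ≤ s) : Summable (GG s u) := by
  have hp := (sq_sum.mul_of_nonneg sq_sum (fun _ => by positivity) (fun _ => by positivity)).mul_left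
    (exp (-|u|) ^ (-s) * 16)
  apply Summable.of_nonneg_of_le (GG_nonneg s u) _ hp
  intro v
  by_cases hv : v = 0
  · subst hv; rw [GG_zero s u hs]; positivity
  have hn := nn_pos v hv
  have hn0 : 0 < nn v := by linarith
  unfold GG
  calc qf (nn v) (kk v) u ^ (-s) ≤ (nn v * exp (-|u|)) ^ (-s) :=
        Real.rpow_le_rpow_of_nonpos (by positivity) (qf_ge _ _ u (kk_le v)) (by linarith)
    _ = exp (-|u|) ^ (-s) * nn v ^ (-s) := by
        rw [Real.mul_rpow hn0.le (by positivity)]; ring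
    _ ≤ exp (-|u|) ^ (-s) * nn v ^ (-2:ℝ) := by
        apply mul_le_mul_of_nonneg_left _ (by positivity)
        exact Real.rpow_le_rpow_of_exponent_le hn (by linarith)
    _ ≤ exp (-|u|) ^ (-s) * (16 * (1/(1+|(v.1:ℝ)|)^2 * (1/(1+|(v.2:ℝ)|)^2))) := by
        gcongr
        rw [Real.rpow_neg hn0.le]
        have : nn v ^ (2:ℝ) = nn v ^ 2 := by norm_cast
        rw [this]
        have hb : (1+|(v.1:ℝ)|) * (1+|(v.2:ℝ)|) ≤ 4 * nn v := by
          have e : nn v = |(v.1:ℝ)|^2+|(v.2:ℝ)|^2 := by simp [nn]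
          rw [e] at hn ⊢
          nlinarith [sq_nonneg (|(v.1:ℝ)|-|(v.2:ℝ)|), sq_nonneg (|(v.1:ℝ)|-1), sq_nonneg (|(v.2:ℝ)|-1)]
        have hb2 : ((1+|(v.1:ℝ)|) * (1+|(v.2:ℝ)|))^2 ≤ (4 * nn v)^2 := by gcongr
        have e : 16 * (1/(1+|(v.1:ℝ)|)^2 * (1/(1+|(v.2:ℝ)|)^2)) = 16/((1+|(v.1:ℝ)|) * (1+|(v.2:ℝ)|))^2 := by
          field_simp
        rw [e, inv_eq_one_div, div_le_div_iff₀ (by positivity) (by positivity)]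
        linarith
    _ = _ := by ring

/-- hex orbit -/
def rot : (ℤ × ℤ) ≃ (ℤ × ℤ) where
  toFun v := (v.2, -v.1-v.2)
  invFun v := (-v.1-v.2, v.1)
  left_inv v := by ext <;> dsimp only <;> ring
  right_inv v := by ext <;> dsimp only <;> ring

def flip2 : (ℤ × ℤ) ≃ (ℤ × ℤ) where
  toFun v := (v.1, -v.2)
  invFun v := (v.1, -v.2)
  left_inv v := by ext <;> simp
  right_inv v := by ext <;> simp

lemma orbit_term (s S n k u a : ℝ) (hS : 0 < S) (hn : n = S * (1-a)) (hk : k = S*(2*a-1))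
    (hD : 0 < 1 - (3 - exp u^2)/2 * a) :
    qf k n u * (-s) * qf n k u ^ (-s-1) = s * (S * exp (-u))^(-s) *
     ((1-(3-(3 - exp u^2)/2)*a)*(1-(3 - exp u^2)/2*a)^(-s-1)) := by
  have e := Real.exp_neg u
  have e0 := Real.exp_pos u
  have hq : qf n k u = (S * exp (-u)) * (1-(3 - exp u^2)/2*a) := by
    rw [qf, hn, hk, Real.cosh_eq, Real.sinh_eq, e]; field_simp; ring
  have hq' : qf k n u = -(S * exp (-u)) * (1-(3-(3 - exp u^2)/2)*a) := by
    rw [qf, hn, hk, Real.cosh_eq, Real.sinh_eq, e]; field_simp; ring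
  have hp : 0 < S * exp (-u) := by positivity
  rw [hq, hq', Real.mul_rpow hp.le hD.le, Real.rpow_sub_one hp.ne']
  field_simp

lemma hex_orbit (s u1 u2 : ℝ) (hs : 3 ≤ s) (h1 : 4/3 ≤ exp u1 ^ 2) (h12 : u1 ≤ u2)
    (h2 : exp u2 ^2 ≤ 3) (v : ℤ × ℤ) :
    GG s u2 v + GG s u2 (rot v) + GG s u2 (rot (rot v)) ≤
    GG s u1 v + GG s u1 (rot v) + GG s u1 (rot (rot v)) := by
  by_cases hv : v = 0
  · have : rot v = 0 := by subst hv; rfl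
    have h0 : rot 0 = 0 := rfl
    subst hv
    simp [GG_zero, hs, h0]
  have hv1 : rot v ≠ 0 := by
    intro h; apply hv; apply rot.injective; rw [h]; rfl
  have hv2 : rot (rot v) ≠ 0 := by
    intro h; apply hv1; apply rot.injective; rw [h]; rfl
  have p0 : 0 < nn v := by linarith [nn_pos v hv]
  have p1 : 0 < nn (rot v) := by linarith [nn_pos _ hv1]
  have p2 : 0 < nn (rot (rot v)) := by linarith [nn_pos _ hv2]
  obtain ⟨x, hx⟩ : ∃ x : ℝ, x = v.1 := ⟨_, rfl⟩
  obtain ⟨y, hy⟩ : ∃ x : ℝ, x = v.2 := ⟨_, rfl⟩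
  have n0 : nn v = x^2+y^2 := by simp [nn, hx, hy]
  have n1 : nn (rot v) = y^2+(x+y)^2 := by simp [nn, rot, hx, hy]; ring
  have n2 : nn (rot (rot v)) = x^2+(x+y)^2 := by simp [nn, rot, hx, hy]; ring
  have k0 : kk v = 2*x*y := by simp [kk, hx, hy]
  have k1 : kk (rot v) = -2*y*(x+y) := by simp [kk, rot, hx, hy]; ring
  have k2 : kk (rot (rot v)) = -2*x*(x+y) := by simp [kk, rot, hx, hy]; ring
  obtain ⟨S, hS⟩ : ∃ S, S = x^2+y^2+(x+y)^2 := ⟨_, rfl⟩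
  have hS0 : 0 < S := by nlinarith [sq_nonneg (x+y)]
  have anti : AntitoneOn (fun u => GG s u v + GG s u (rot v) + GG s u (rot (rot v))) (Set.Icc u1 u2) := by
    have hd := fun u => ((qf_rpow_deriv (nn v) (kk v) u (-s) p0 (kk_le _)).add
      (qf_rpow_deriv (nn (rot v)) (kk (rot v)) u (-s) p1 (kk_le _))).add
      (qf_rpow_deriv (nn (rot (rot v))) (kk (rot (rot v))) u (-s) p2 (kk_le _))
    apply antitoneOn_of_hasDerivWithinAt_nonpos (convex_Icc _ _)
      (fun v _ => (hd v).continuousAt.continuousWithinAt) (fun v _ => (hd v).hasDerivWithinAt)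
    intro u hu
    rw [interior_Icc] at hu
    have r1 : exp u1 ^2 ≤ exp u ^2 := by have := hu.1.le; gcongr
    have r2 : exp u ^2 ≤ exp u2 ^2 := by have := hu.2.le; gcongr
    have ht0 : 0 ≤ (3 - exp u^2)/2 := by linarith
    have ht1 : (3 - exp u^2)/2 ≤ 5/6 := by linarith
    have ha : 0 ≤ x^2/S := by positivity
    have hb : 0 ≤ y^2/S := by positivity
    have hc : 0 ≤ (x+y)^2/S := by positivity
    have hsum : x^2/S + y^2/S + (x+y)^2/S = 1 := by
      rw [← add_div, ← add_div, ← hS]; exact div_self hS0.ne'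
    have he2 : x^2/S*(y^2/S) + y^2/S*((x+y)^2/S) + (x+y)^2/S*(x^2/S) = 1/4 := by
      field_simp; rw [hS]; ring
    have key := hex_s _ s _ _ _ hs ht0 ht1 ha hb hc hsum he2
    rw [orbit_term s S _ _ u ((x+y)^2/S) hS0 (by rw [n0]; field_simp; rw [hS]; ring) (by rw [k0]; field_simp; rw [hS]; ring) (by nlinarith),
      orbit_term s S _ _ u (x^2/S) hS0 (by rw [n1]; field_simp; rw [hS]; ring) (by rw [k1]; field_simp; rw [hS]; ring) (by nlinarith),
      orbit_term s S _ _ u (y^2/S) hS0 (by rw [n2]; field_simp; rw [hS]; ring) (by rw [k2]; field_simp; rw [hS]; ring) (by nlinarith)]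
    have hp : 0 ≤ s * (S * exp (-u))^(-s) := by positivity
    have := mul_nonpos_of_nonneg_of_nonpos hp key
    linarith
  exact anti (a := u1) (b := u2) ⟨le_rfl, h12⟩ ⟨h12, le_rfl⟩ h12

lemma hex_main (s u1 u2 : ℝ) (hs : 3 ≤ s) (h1 : 4/3 ≤ exp u1 ^ 2) (h12 : u1 ≤ u2)
    (h2 : exp u2 ^2 ≤ 3) : ∑' v, GG s u2 v ≤ ∑' v, GG s u1 v := by
  have S0 := fun u => GG_summable s u hs
  have S1 : ∀ u, Summable (fun v => GG s u (rot v)) := fun u => (rot.summable_iff (f := GG s u)).2 (S0 u)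
  have S2 : ∀ u, Summable (fun v => GG s u (rot (rot v))) := fun u => (rot.summable_iff (f := fun v => GG s u (rot v))).2 (S1 u)
  have e : ∀ u, ∑' v, (GG s u v + GG s u (rot v) + GG s u (rot (rot v))) = 3 * ∑' v, GG s u v := by
    intro u
    have a1 : ∑' v, GG s u (rot v) = ∑' v, GG s u v := rot.tsum_eq _
    have a2 : ∑' v, GG s u (rot (rot v)) = ∑' v, GG s u v := by
      rw [← a1]; exact rot.tsum_eq (fun v => GG s u (rot v))
    have b1 : Summable fun v => GG s u v + GG s u (rot v) := (S0 u).add (S1 u)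
    rw [b1.tsum_add (S2 u), (S0 u).tsum_add (S1 u)]
    linarith
  have := Summable.tsum_le_tsum (hex_orbit s u1 u2 hs h1 h12 h2)
    (((S0 u2).add (S1 u2)).add (S2 u2)) (((S0 u1).add (S1 u1)).add (S2 u1))
  rw [e, e] at this
  linarith

lemma srho (s r : ℝ) (hs : 3 ≤ s) (hr : 0 < r) (hr2 : r ≤ 7/12) : s * r^s ≤ 3 * r^3 := by
  have e : r^s = r^3 * r^(s-3) := by
    rw [← Real.rpow_natCast, ← Real.rpow_add hr]; congr 1; push_cast; ring
  have h1 : r^(s-3) ≤ (7/12:ℝ)^(s-3) := Real.rpow_le_rpow hr.le hr2 (by linarith)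
  have h2 : s/3 ≤ (12/7:ℝ)^(s-3) := by
    rw [Real.rpow_def_of_pos (by norm_num)]
    have hl : 1/3 ≤ Real.log (12/7) := by
      have := Real.one_sub_inv_le_log_of_pos (show (0:ℝ) < 12/7 by norm_num)
      norm_num at this ⊢; linarith
    have := Real.add_one_le_exp (Real.log (12/7) * (s-3))
    nlinarith
  have h3 : (7/12:ℝ)^(s-3) * (12/7:ℝ)^(s-3) = 1 := by
    rw [← Real.mul_rpow (by norm_num) (by norm_num)]; norm_num
  have h4 : s * r^(s-3) ≤ 3 := by
    have p1 : 0 < (7/12:ℝ)^(s-3) := by positivity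
    calc s * r^(s-3) ≤ (3*(12/7:ℝ)^(s-3)) * (7/12:ℝ)^(s-3) := by
          apply mul_le_mul (by linarith) h1 (by positivity) (by positivity)
      _ = 3 := by rw [mul_assoc, mul_comm ((12/7:ℝ)^(s-3)), h3]; norm_num
  rw [e]
  have : 0 ≤ r^3 := by positivity
  nlinarith

def FF : Finset (ℤ × ℤ) := {(1,0),(-1,0),(0,1),(0,-1)}

lemma sq_term (s u0 u1 u2 : ℝ) (hs : 3 ≤ s) (hu0 : exp u0 ^2 = 4/3)
    (h1 : 0 ≤ u1) (h12 : u1 ≤ u2) (h2 : u2 ≤ u0) (v : ℤ × ℤ) :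
    (GG s u2 v + GG s u2 (flip2 v)) - (GG s u1 v + GG s u1 (flip2 v)) ≤
     s * cosh u0 ^ (-s-1) * (u2^2-u1^2) * (16/25 * (ww v.1 * ww v.2) - if v ∈ FF then 1 else 0) := by
  have hd : 0 ≤ u2^2-u1^2 := by nlinarith
  have hC0 := Real.cosh_pos u0
  have hK : 0 ≤ s * cosh u0 ^ (-s-1) * (u2^2-u1^2) := by positivity
  have hw : ∀ x, 0 ≤ ww x := fun x => by unfold ww; positivity
  have nf : nn (flip2 v) = nn v := by simp [nn, flip2]
  have kf : kk (flip2 v) = -kk v := by simp [kk, flip2]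
  by_cases hxy : v.1 = 0 ∨ v.2 = 0
  · have hk : kk v = 0 := by rcases hxy with h | h <;> simp [kk, h]
    have hww : ww v.1 * ww v.2 = 0 := by rcases hxy with h | h <;> simp [ww, h]
    have hn : 0 ≤ nn v := by unfold nn; positivity
    have hG : ∀ u, GG s u v + GG s u (flip2 v) = nn v ^ (-s) * (2 * cosh u ^ (-s)) := by
      intro u
      simp only [GG, nf, kf, hk, qf]
      simp only [neg_zero, zero_mul, add_zero]
      rw [Real.mul_rpow hn (Real.cosh_pos u).le]; ring
    have cb := cosh_bound s _ u0 u1 u2 (by linarith) rfl h1 h12 h2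
    rw [hG, hG, hww, ← mul_sub]
    by_cases hF : v ∈ FF
    · have hn1 : nn v = 1 := by
        simp [FF] at hF
        rcases hF with rfl | rfl | rfl | rfl <;> simp [nn]
      rw [hn1, if_pos hF, Real.one_rpow]
      linarith
    · rw [if_neg hF]
      have : nn v ^ (-s) * (2 * cosh u2 ^ (-s) - 2 * cosh u1 ^ (-s)) ≤ 0 :=
        mul_nonpos_of_nonneg_of_nonpos (by positivity) (by linarith)
      simpa using this
  · push Not at hxy
    have hF : v ∉ FF := by
      intro hF
      simp [FF] at hF
      rcases hF with rfl | rfl | rfl | rfl <;> simp at hxy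
    rw [if_neg hF, sub_zero]
    have hx : 1 ≤ |(v.1:ℝ)| := by exact_mod_cast Int.one_le_abs hxy.1
    have hy : 1 ≤ |(v.2:ℝ)| := by exact_mod_cast Int.one_le_abs hxy.2
    have hn : 2 * (|(v.1:ℝ)| * |(v.2:ℝ)|) ≤ nn v := by
      have e : nn v = |(v.1:ℝ)|^2+|(v.2:ℝ)|^2 := by simp [nn]
      rw [e]; nlinarith [sq_nonneg (|(v.1:ℝ)|-|(v.2:ℝ)|)]
    have hm : 1 ≤ |(v.1:ℝ)| * |(v.2:ℝ)| := by nlinarith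
    have hn2 : 2 ≤ nn v := by linarith
    have hn0 : 0 < nn v := by linarith
    have hB := B_bound (nn v) (kk v) s _ u0 u1 u2 (by linarith) hn0 (kk_le v) rfl h1 h12 h2
    simp only [GG, nf, kf]
    refine hB.trans ?_
    have hL0 := Real.exp_pos u0
    have hCL : cosh u0 * exp u0 = 7/6 := by
      rw [Real.cosh_eq, Real.exp_neg]; field_simp; rw [hu0]; norm_num
    have hC : cosh u0 ≤ 51/50 := by
      have : cosh u0 ^2 = 49/48 := by
        have : (cosh u0 * exp u0)^2 = (7/6)^2 := by rw [hCL]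
        rw [mul_pow, hu0] at this; linarith
      nlinarith
    have hr : 0 < 7/6/nn v := by positivity
    have e : (nn v / exp u0)^(-s) = cosh u0 ^ (-s) * (7/6/nn v)^s := by
      have : nn v / exp u0 = cosh u0 * (7/6/nn v)⁻¹ := by
        rw [← hCL]; field_simp
      rw [this, Real.mul_rpow hC0.le (by positivity), Real.inv_rpow hr.le, Real.rpow_neg hr.le, inv_inv]
    have sr := srho s (7/6/nn v) hs hr (by rw [div_le_iff₀ hn0]; linarith)
    have e2 : cosh u0 ^ (-s) = cosh u0 ^ (-s-1) * cosh u0 := by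
      rw [Real.rpow_sub_one hC0.ne']; field_simp
    rw [e, e2]
    have fin : cosh u0 * (s * (7/6/nn v)^s) ≤ 16/25 * (ww v.1 * ww v.2) := by
      have i1 : (7/6/nn v)^3 ≤ (7/6/(2 * (|(v.1:ℝ)| * |(v.2:ℝ)|)))^3 := by gcongr
      have i2 : (7/6/(2 * (|(v.1:ℝ)| * |(v.2:ℝ)|)))^3 = (7/12)^3 * (ww v.1 * ww v.2) := by
        unfold ww; push_cast; field_simp; norm_num
      have i3 := mul_nonneg (hw v.1) (hw v.2)
      calc cosh u0 * (s * (7/6/nn v)^s) ≤ 51/50 * (3 * ((7/12)^3 * (ww v.1 * ww v.2))) := by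
            apply mul_le_mul hC _ (by positivity) (by norm_num)
            linarith
        _ ≤ _ := by nlinarith
    calc _ = s * cosh u0 ^ (-s-1) * (u2^2-u1^2) * (cosh u0 * (s * (7/6/nn v)^s)) := by ring
      _ ≤ _ := mul_le_mul_of_nonneg_left fin hK

lemma sq_main (s u0 u1 u2 : ℝ) (hs : 3 ≤ s) (hu0 : exp u0 ^2 = 4/3)
    (h1 : 0 ≤ u1) (h12 : u1 ≤ u2) (h2 : u2 ≤ u0) :
    ∑' v, GG s u2 v ≤ ∑' v, GG s u1 v := by
  have S0 := fun u => GG_summable s u hs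
  have S1 : ∀ u, Summable (fun v => GG s u (flip2 v)) :=
    fun u => (flip2.summable_iff (f := GG s u)).2 (S0 u)
  have e : ∀ u, ∑' v, (GG s u v + GG s u (flip2 v)) = 2 * ∑' v, GG s u v := by
    intro u
    have a1 : ∑' v, GG s u (flip2 v) = ∑' v, GG s u v := flip2.tsum_eq _
    rw [(S0 u).tsum_add (S1 u)]
    linarith
  have hw : ∀ x, 0 ≤ ww x := fun x => by unfold ww; positivity
  obtain ⟨w1, w2⟩ := ww_sum
  have w0 : 0 ≤ ∑' x, ww x := tsum_nonneg hw
  have sw : Summable (fun v : ℤ × ℤ => ww v.1 * ww v.2) := w1.mul_of_nonneg w1 hw hw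
  have hF : HasSum (fun v : ℤ × ℤ => if v ∈ FF then (1:ℝ) else 0) 4 := by
    have := hasSum_sum_of_ne_finset_zero (f := fun v : ℤ × ℤ => if v ∈ FF then (1:ℝ) else 0) (s := FF) (L := SummationFilter.unconditional _)
      (fun b hb => if_neg hb)
    convert this using 1
    rw [Finset.sum_ite_mem, Finset.inter_self, Finset.sum_const]
    have : FF.card = 4 := by decide
    rw [this]; norm_num
  have hR := ((sw.hasSum.mul_left (16/25)).sub hF).mul_left (s * cosh u0 ^ (-s-1) * (u2^2-u1^2))
  have hL := ((S0 u2).add (S1 u2)).hasSum.sub ((S0 u1).add (S1 u1)).hasSum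
  have := hasSum_le (sq_term s u0 u1 u2 hs hu0 h1 h12 h2) hL hR
  rw [e, e, ← w1.tsum_mul_tsum w1 sw] at this
  have hd : 0 ≤ u2^2-u1^2 := by nlinarith
  have hC0 := Real.cosh_pos u0
  have hK : 0 ≤ s * cosh u0 ^ (-s-1) * (u2^2-u1^2) := by positivity
  have h4 : 16/25 * ((∑' x, ww x) * ∑' x, ww x) - 4 ≤ 0 := by nlinarith
  have := mul_nonpos_of_nonneg_of_nonpos hK h4
  linarith

lemma all_main (s u1 u2 : ℝ) (hs : 3 ≤ s) (h1 : 0 ≤ u1) (h12 : u1 ≤ u2)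
    (h2 : exp u2 ^2 ≤ 3) : ∑' v, GG s u2 v ≤ ∑' v, GG s u1 v := by
  obtain ⟨u0, hu0⟩ : ∃ u0, exp u0 ^2 = 4/3 := by
    refine ⟨Real.log (4/3) / 2, ?_⟩
    rw [← Real.exp_nat_mul]; push_cast
    rw [mul_div_cancel₀ _ (by norm_num), Real.exp_log (by norm_num)]
  rcases le_total u2 u0 with h | h
  · exact sq_main s u0 u1 u2 hs hu0 h1 h12 h
  rcases le_total u1 u0 with h' | h'
  · exact (hex_main s u0 u2 hs hu0.ge h h2).trans (sq_main s u0 u1 u0 hs hu0 h1 h' le_rfl)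
  · refine hex_main s u1 u2 hs ?_ h12 h2
    rw [← hu0]; gcongr

lemma param (D T : ℝ) (hD : 0 < D) (hT : D ≤ T) :
    ∃ u, u = arsinh (√(T^2-D^2)/D) ∧ T = D * cosh u ∧ √(T^2-D^2) = D * sinh u := by
  refine ⟨_, rfl, ?_, ?_⟩
  · rw [Real.cosh_arsinh, div_pow, Real.sq_sqrt (by nlinarith)]
    have : 1 + (T^2-D^2)/D^2 = (T/D)^2 := by field_simp; ring
    rw [this, Real.sqrt_sq (by have : 0 < T := by linarith
                               positivity)]
    field_simp
  · rw [Real.sinh_arsinh]; field_simp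

lemma term_eq (D s T u : ℝ) (hD : 0 < D) (hT : T = D * cosh u) (hr : √(T^2-D^2) = D * sinh u)
    (v : ℤ × ℤ) : (T * ((v.1 : ℝ)) ^ 2 + T * (v.2 : ℝ) ^ 2
      + 2 * (v.1 : ℝ) * (v.2 : ℝ) * Real.sqrt (T ^ 2 - D ^ 2)) ^ (-s) = D^(-s) * GG s u v := by
  have h : 0 ≤ qf (nn v) (kk v) u := by
    have h := qf_ge _ _ u (kk_le v)
    have : 0 ≤ nn v := by unfold nn; positivity
    exact (le_trans (by positivity) h)
  rw [hr, GG, ← Real.mul_rpow hD.le h, hT]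
  congr 1
  unfold qf nn kk; ring

/-- Lemma 3.1: for fixed determinant `Δ` and fixed real `s ≥ 3`, the Epstein
zeta function of a well-rounded planar lattice is a decreasing function of its
minimal norm `T ∈ [Δ, 2Δ/√3]` (and the defining series converges). -/
theorem stmt10 (Δ s : ℝ) (hΔ : 0 < Δ) (hs : 3 ≤ s) :
    (∀ T : ℝ, Δ ≤ T → T ≤ 2 * Δ / Real.sqrt 3 →
      Summable (fun xy : {v : ℤ × ℤ // v ≠ 0} =>
        (T * ((xy : ℤ × ℤ).1 : ℝ) ^ 2 + T * ((xy : ℤ × ℤ).2 : ℝ) ^ 2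
          + 2 * ((xy : ℤ × ℤ).1 : ℝ) * ((xy : ℤ × ℤ).2 : ℝ)
            * Real.sqrt (T ^ 2 - Δ ^ 2)) ^ (-s))) ∧
    (∀ T₁ T₂ : ℝ, Δ ≤ T₁ → T₁ ≤ T₂ → T₂ ≤ 2 * Δ / Real.sqrt 3 →
      epstein Δ s T₂ ≤ epstein Δ s T₁) := by
  have ep : ∀ T u, T = Δ * cosh u → √(T^2-Δ^2) = Δ * sinh u →
      epstein Δ s T = Δ^(-s) * ∑' v, GG s u v := by
    intro T u h1 h2
    unfold epstein
    simp_rw [term_eq Δ s T u hΔ h1 h2]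
    rw [tsum_mul_left]
    congr 1
    apply tsum_subtype_eq_of_support_subset (s := {v : ℤ × ℤ | v ≠ 0})
    intro v hv hv0
    apply hv
    rw [hv0, GG_zero s u hs]
  constructor
  · intro T hT _
    obtain ⟨u, -, h1, h2⟩ := param Δ T hΔ hT
    simp_rw [term_eq Δ s T u hΔ h1 h2]
    exact ((GG_summable s u hs).mul_left _).subtype _
  · intro T₁ T₂ hT1 hT12 hT2
    obtain ⟨u1, d1, a1, b1⟩ := param Δ T₁ hΔ hT1
    obtain ⟨u2, d2, a2, b2⟩ := param Δ T₂ hΔ (hT1.trans hT12)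
    rw [ep T₁ u1 a1 b1, ep T₂ u2 a2 b2]
    apply mul_le_mul_of_nonneg_left _ (by positivity)
    apply all_main s u1 u2 hs
    · rw [d1, Real.arsinh_nonneg_iff]; positivity
    · rw [d1, d2, Real.arsinh_le_arsinh]
      gcongr
      linarith
    · have hc : cosh u2 ^2 ≤ 4/3 := by
        have h3 : (0:ℝ) < √3 := by positivity
        have : cosh u2 ≤ 2/√3 := by
          rw [a2, mul_comm 2 Δ, mul_div_assoc] at hT2
          exact le_of_mul_le_mul_left hT2 hΔ
        have h0 := (Real.cosh_pos u2).le
        calc cosh u2 ^2 ≤ (2/√3)^2 := by gcongr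
          _ = 4/3 := by rw [div_pow, Real.sq_sqrt (by norm_num)]; norm_num
      have hsq := Real.cosh_sq_sub_sinh_sq u2
      rw [← Real.cosh_add_sinh]
      nlinarith [sq_nonneg (cosh u2 - 2 * sinh u2), sq_nonneg (cosh u2 + sinh u2)]
end

section
/- For every real number s > 1 there exist positive real constants C₁(s) and C₂(s), depending only on s, such that for all real Δ > 0 and all real T with Δ ≤ T ≤ 2Δ/√3, one has C₁(s)/T^s ≤ Σ_{(x,y) ∈ ℤ² ∖ {(0,0)}} (T x² + T y² + 2 x y √(T² − Δ²))^{−s} ≤ C₂(s)/T^s (in particular the series converges). -/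
lemma aux_summable (s : ℝ) (hs : 1 < s) :
    Summable (fun v : {v : ℤ × ℤ // v ≠ 0} => ((1 / 2 : ℝ) * ‖(v : ℤ × ℤ)‖ ^ 2) ^ (-s)) := by
  have h := EisensteinSeries.summable_one_div_norm_rpow (k := 2 * s) (by linarith)
  have h2 := ((finTwoArrowEquiv ℤ).symm.summable_iff.mpr h)
  have h3 := (h2.mul_left ((1 / 2 : ℝ) ^ (-s))).subtype {v : ℤ × ℤ | v ≠ 0}
  refine h3.congr fun v => ?_
  obtain ⟨⟨x, y⟩, hv⟩ := v
  have e : ‖((finTwoArrowEquiv ℤ).symm (x, y))‖ = ‖(x, y)‖ := by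
    apply le_antisymm
    · rw [pi_norm_le_iff_of_nonneg (norm_nonneg _)]
      intro i
      fin_cases i
      · exact norm_fst_le (x, y)
      · exact norm_snd_le (x, y)
    · rw [Prod.norm_def]
      exact max_le (norm_le_pi_norm ((finTwoArrowEquiv ℤ).symm (x, y)) 0)
        (norm_le_pi_norm ((finTwoArrowEquiv ℤ).symm (x, y)) 1)
  simp only [Function.comp_apply, e]
  rw [Real.mul_rpow (by norm_num) (by positivity), ← Real.rpow_natCast, ← Real.rpow_mul (norm_nonneg _)]
  congr 2
  push_cast
  ring

lemma aux_lower (Δ T : ℝ) (hΔ : 0 < Δ) (h1 : Δ ≤ T) (h2 : T ≤ 2 * Δ / Real.sqrt 3) (v : ℤ × ℤ) :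
    T * ((1 / 2 : ℝ) * ‖v‖ ^ 2) ≤ T * (v.1 : ℝ) ^ 2 + T * (v.2 : ℝ) ^ 2
            + 2 * (v.1 : ℝ) * (v.2 : ℝ) * Real.sqrt (T ^ 2 - Δ ^ 2) := by
  have hT : 0 < T := by linarith
  have h3 : T * Real.sqrt 3 ≤ 2 * Δ := (le_div_iff₀ (by positivity)).mp h2
  have h4 : 3 * T ^ 2 ≤ 4 * Δ ^ 2 := by
    have := pow_le_pow_left₀ (by positivity) h3 2
    rw [mul_pow, Real.sq_sqrt (by norm_num)] at this
    linarith
  have hr : Real.sqrt (T ^ 2 - Δ ^ 2) ≤ T / 2 := by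
    apply Real.sqrt_le_iff.mpr
    constructor
    · positivity
    · nlinarith
  have hr0 := Real.sqrt_nonneg (T ^ 2 - Δ ^ 2)
  generalize Real.sqrt (T ^ 2 - Δ ^ 2) = r at *
  obtain ⟨x, y⟩ := v
  have hn : ‖(x, y)‖ ^ 2 ≤ (x : ℝ) ^ 2 + (y : ℝ) ^ 2 := by
    rw [Prod.norm_def]
    rcases max_choice ‖x‖ ‖y‖ with h | h <;> simp only at h ⊢ <;> rw [h, Int.norm_eq_abs, sq_abs] <;> nlinarith [sq_nonneg (x:ℝ), sq_nonneg (y:ℝ)]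
  have := mul_le_mul_of_nonneg_left hn hT.le
  simp only
  generalize (x : ℝ) = a at *
  generalize (y : ℝ) = b at *
  nlinarith [mul_nonneg hr0 (sq_nonneg (a + b)), mul_nonneg (sub_nonneg.mpr hr) (add_nonneg (sq_nonneg a) (sq_nonneg b))]

/-- Lemma 3.2: for every real `s > 1` there are positive constants `C₁(s), C₂(s)`
such that for every well-rounded planar lattice of determinant `Δ` and minimal
norm `T ∈ [Δ, 2Δ/√3]`, the Epstein zeta function satisfies
`C₁/T^s ≤ E_Λ(s) ≤ C₂/T^s` (in particular the series converges). -/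
theorem stmt11 (s : ℝ) (hs : 1 < s) :
    ∃ C₁ C₂ : ℝ, 0 < C₁ ∧ 0 < C₂ ∧
      ∀ Δ T : ℝ, 0 < Δ → Δ ≤ T → T ≤ 2 * Δ / Real.sqrt 3 →
        Summable (fun xy : {v : ℤ × ℤ // v ≠ 0} =>
          (T * ((xy : ℤ × ℤ).1 : ℝ) ^ 2 + T * ((xy : ℤ × ℤ).2 : ℝ) ^ 2
            + 2 * ((xy : ℤ × ℤ).1 : ℝ) * ((xy : ℤ × ℤ).2 : ℝ)
              * Real.sqrt (T ^ 2 - Δ ^ 2)) ^ (-s)) ∧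
        C₁ / T ^ s ≤
          (∑' xy : {v : ℤ × ℤ // v ≠ 0},
            (T * ((xy : ℤ × ℤ).1 : ℝ) ^ 2 + T * ((xy : ℤ × ℤ).2 : ℝ) ^ 2
              + 2 * ((xy : ℤ × ℤ).1 : ℝ) * ((xy : ℤ × ℤ).2 : ℝ)
                * Real.sqrt (T ^ 2 - Δ ^ 2)) ^ (-s)) ∧
        (∑' xy : {v : ℤ × ℤ // v ≠ 0},
            (T * ((xy : ℤ × ℤ).1 : ℝ) ^ 2 + T * ((xy : ℤ × ℤ).2 : ℝ) ^ 2
              + 2 * ((xy : ℤ × ℤ).1 : ℝ) * ((xy : ℤ × ℤ).2 : ℝ)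
                * Real.sqrt (T ^ 2 - Δ ^ 2)) ^ (-s)) ≤ C₂ / T ^ s := by
  have hS := aux_summable s hs
  refine ⟨1, (∑' v : {v : ℤ × ℤ // v ≠ 0}, ((1 / 2 : ℝ) * ‖(v : ℤ × ℤ)‖ ^ 2) ^ (-s)) + 1, one_pos,
    add_pos_of_nonneg_of_pos (tsum_nonneg fun v => by positivity) one_pos, ?_⟩
  intro Δ T hΔ h1 h2
  have hT : 0 < T := by linarith
  have hlow := aux_lower Δ T hΔ h1 h2
  have hpos : ∀ v : {v : ℤ × ℤ // v ≠ 0}, 0 < T * ((1 / 2 : ℝ) * ‖(v : ℤ × ℤ)‖ ^ 2) := fun v => by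
    have := norm_pos_iff.mpr v.2
    positivity
  have hle : ∀ xy : {v : ℤ × ℤ // v ≠ 0},
      (T * ((xy : ℤ × ℤ).1 : ℝ) ^ 2 + T * ((xy : ℤ × ℤ).2 : ℝ) ^ 2
            + 2 * ((xy : ℤ × ℤ).1 : ℝ) * ((xy : ℤ × ℤ).2 : ℝ)
              * Real.sqrt (T ^ 2 - Δ ^ 2)) ^ (-s) ≤
      T ^ (-s) * ((1 / 2 : ℝ) * ‖(xy : ℤ × ℤ)‖ ^ 2) ^ (-s) := fun v => by
    rw [← Real.mul_rpow hT.le (by positivity)]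
    exact Real.rpow_le_rpow_of_nonpos (hpos v) (hlow v) (by linarith)
  have hnn : ∀ xy : {v : ℤ × ℤ // v ≠ 0}, 0 ≤
      (T * ((xy : ℤ × ℤ).1 : ℝ) ^ 2 + T * ((xy : ℤ × ℤ).2 : ℝ) ^ 2
            + 2 * ((xy : ℤ × ℤ).1 : ℝ) * ((xy : ℤ × ℤ).2 : ℝ)
              * Real.sqrt (T ^ 2 - Δ ^ 2)) ^ (-s) := fun v =>
    Real.rpow_nonneg ((hpos v).le.trans (hlow v)) _
  have hSum := Summable.of_nonneg_of_le hnn hle (hS.mul_left _)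
  refine ⟨hSum, ?_, ?_⟩
  · have := hSum.le_tsum ⟨((1 : ℤ), (0 : ℤ)), by simp⟩ (fun j _ => hnn j)
    refine le_trans (le_of_eq ?_) this
    simp [Real.rpow_neg hT.le]
  · refine (hSum.tsum_le_tsum hle (hS.mul_left _)).trans ?_
    rw [tsum_mul_left, Real.rpow_neg hT.le, div_eq_mul_inv _ (T ^ s), mul_comm]
    have : 0 < T ^ s := by positivity
    exact mul_le_mul_of_nonneg_right (by linarith) (inv_pos.mpr this).le
end

section
/- A positive real number Δ is the determinant of some IWR planar lattice if and only if Δ = M√D for some positive integers M and D with D squarefree such that the set mn_D(M) = {(m, n) : m, n coprime positive integers, D n² ≤ 3 m², m² ≤ 3 D n², and 2mn/(2^e gcd(m, D)) divides M} is nonempty, where e = 0 if 2 ∣ D or if both mn and D+1 are even, and e = 1 otherwise. -/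
/-- The planar lattice spanned by the linearly independent vectors `v, w` is
integral and well-rounded: all pairwise inner products of `v, w` are integers,
and the lattice contains two linearly independent minimal vectors. -/
def IsIWR (v w : ℝ × ℝ) : Prop :=
  LinearIndependent ℝ ![v, w] ∧
  ((∃ a : ℤ, ip v v = (a : ℝ)) ∧ (∃ a : ℤ, ip v w = (a : ℝ)) ∧
    (∃ a : ℤ, ip w w = (a : ℝ))) ∧
  ∃ z₁ z₂ : ℝ × ℝ, z₁ ∈ lat v w ∧ z₂ ∈ lat v w ∧ LinearIndependent ℝ ![z₁, z₂] ∧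
    IsLeast (normSet v w) (ip z₁ z₁) ∧ ip z₂ z₂ = ip z₁ z₁

/-- The determinant of the planar lattice spanned by `v, w`: the absolute value
of the determinant of the matrix with columns `v, w`. -/
def latDet (v w : ℝ × ℝ) : ℝ := |v.1 * w.2 - w.1 * v.2|

lemma div_formula (m n D d m' : ℕ) (hd : 0 < d) (hm : m = d * m') (c : Prop) [Decidable c] :
    2 * m * n / (2 ^ (if c then 0 else 1) * d) = if c then 2 * (m' * n) else m' * n := by
  subst hm
  split_ifs
  · apply Nat.div_eq_of_eq_mul_right (by positivity); ring
  · apply Nat.div_eq_of_eq_mul_right (by positivity); ring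

lemma par_aux {x y : ℕ} (h : Nat.Coprime x y) (hp : (x + y) % 2 = 0) : x % 2 = 1 ∧ y % 2 = 1 := by
  by_contra hc
  have hx : 2 ∣ x := by omega
  have hy : 2 ∣ y := by omega
  have := Nat.dvd_gcd hx hy
  rw [h] at this
  omega

lemma fwdN (a b M D : ℕ) (ha : 0 < a) (hM : 0 < M) (hD : Squarefree D)
    (h : a * b = M ^ 2 * D) (hab : a ≤ 3 * b) (hba : b ≤ 3 * a) (hp : (a + b) % 2 = 0) :
    ∃ m n : ℕ, 0 < m ∧ 0 < n ∧ Nat.gcd m n = 1 ∧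
        D * n ^ 2 ≤ 3 * m ^ 2 ∧ m ^ 2 ≤ 3 * (D * n ^ 2) ∧
        (2 * m * n /
          (2 ^ (if 2 ∣ D ∨ (2 ∣ m * n ∧ 2 ∣ D + 1) then 0 else 1) * Nat.gcd m D)) ∣ M := by
  obtain ⟨m, n, hmn, hm, hn⟩ := Nat.exists_coprime a M
  have hg : 0 < Nat.gcd a M := Nat.gcd_pos_of_pos_left _ ha
  generalize Nat.gcd a M = g at hm hn hg
  subst hm hn
  have hm0 : 0 < m := Nat.pos_of_mul_pos_right ha
  have hn0 : 0 < n := Nat.pos_of_mul_pos_right hM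
  have hb : m * b = g * (D * n ^ 2) := by
    apply Nat.eq_of_mul_eq_mul_left hg
    linear_combination h
  have hd : 0 < Nat.gcd m D := Nat.gcd_pos_of_pos_left _ hm0
  refine ⟨m, n, hm0, hn0, hmn, ?_, ?_, ?_⟩
  · apply Nat.le_of_mul_le_mul_left _ hg
    rw [← hb]; nlinarith
  · apply Nat.le_of_mul_le_mul_left _ hg
    nlinarith
  obtain ⟨m', D', hc, hm', hD'⟩ := Nat.exists_coprime m D
  rw [div_formula m n D (Nat.gcd m D) m' hd (by rw [mul_comm]; exact hm')]
  generalize Nat.gcd m D = d at hm' hD' hd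
  subst hm' hD'
  have hm'0 : 0 < m' := Nat.pos_of_mul_pos_right hm0
  have hb2 : m' * b = g * (D' * n ^ 2) := by
    apply Nat.eq_of_mul_eq_mul_left hd
    linear_combination hb
  have hm'n : Nat.Coprime m' n := Nat.Coprime.coprime_mul_right hmn
  have hdn : Nat.Coprime d n := Nat.Coprime.coprime_mul_left hmn
  have hdD : Nat.Coprime D' d := Nat.coprime_of_squarefree_mul hD
  have hdv : m' ∣ g := by
    have : m' ∣ g * (D' * n ^ 2) := ⟨b, hb2.symm⟩
    exact Nat.Coprime.dvd_of_dvd_mul_right (hc.mul_right (hm'n.pow_right 2)) this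
  obtain ⟨t, rfl⟩ := hdv
  have hb3 : b = t * (D' * n ^ 2) := by
    apply Nat.eq_of_mul_eq_mul_left hm'0
    linear_combination hb2
  split_ifs with hcond
  · have ht : 2 ∣ t := by
      by_contra ht
      have ht1 : t % 2 = 1 := by omega
      have hcop : Nat.Coprime (m' ^ 2 * d) (D' * n ^ 2) := by
        apply Nat.Coprime.mul_left
        · exact Nat.Coprime.pow_left 2 (hc.mul_right (hm'n.pow_right 2))
        · exact hdD.symm.mul_right (hdn.pow_right 2)
      have hsum : m' * d * (m' * t) + b = t * (m' ^ 2 * d + D' * n ^ 2) := by rw [hb3]; ring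
      have hpp : (m' ^ 2 * d + D' * n ^ 2) % 2 = 0 := by
        rw [hsum, Nat.mul_mod, ht1] at hp
        omega
      obtain ⟨h1, h2⟩ := par_aux hcop hpp
      rw [← Nat.odd_iff, Nat.odd_mul] at h1 h2
      have o1 : Odd m' := by have := h1.1; rwa [Nat.odd_pow_iff (by norm_num)] at this
      have o2 : Odd n := by have := h2.2; rwa [Nat.odd_pow_iff (by norm_num)] at this
      have e1 : Odd (D' * d) := h2.1.mul h1.2
      have e2 : Odd (m' * d * n) := (o1.mul h1.2).mul o2
      rw [Nat.odd_iff] at e1 e2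
      omega
    obtain ⟨s, rfl⟩ := ht
    exact ⟨s, by ring⟩
  · exact ⟨t, by ring⟩

lemma bwdN (M D m n : ℕ) (hM : 0 < M) (hD : 0 < D) (hm0 : 0 < m) (hn0 : 0 < n)
    (h1 : D * n ^ 2 ≤ 3 * m ^ 2) (h2 : m ^ 2 ≤ 3 * (D * n ^ 2))
    (h : (2 * m * n /
          (2 ^ (if 2 ∣ D ∨ (2 ∣ m * n ∧ 2 ∣ D + 1) then 0 else 1) * Nat.gcd m D)) ∣ M) :
    ∃ a b : ℕ, 0 < a ∧ a * b = M ^ 2 * D ∧ a ≤ 3 * b ∧ b ≤ 3 * a ∧ (a + b) % 2 = 0 := by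
  have hd : 0 < Nat.gcd m D := Nat.gcd_pos_of_pos_left _ hm0
  obtain ⟨m', D', hc, hm', hD'⟩ := Nat.exists_coprime m D
  rw [div_formula m n D (Nat.gcd m D) m' hd (by rw [mul_comm]; exact hm')] at h
  generalize Nat.gcd m D = d at hm' hD' hd
  subst hm' hD'
  have key : ∃ t, M = m' * n * t ∧ (t * (m' ^ 2 * d) + t * (D' * n ^ 2)) % 2 = 0 := by
    split_ifs at h with hcond
    · obtain ⟨s, rfl⟩ := h
      refine ⟨2 * s, by ring, ?_⟩
      have : 2 * s * (m' ^ 2 * d) + 2 * s * (D' * n ^ 2)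
        = 2 * (s * (m' ^ 2 * d) + s * (D' * n ^ 2)) := by ring
      omega
    · obtain ⟨t, rfl⟩ := h
      refine ⟨t, rfl, ?_⟩
      have e1 : Odd (D' * d) := by rw [Nat.odd_iff]; omega
      have e2 : Odd (m' * d * n) := by rw [Nat.odd_iff] at *; omega
      simp only [Nat.odd_mul] at e1 e2
      rw [← Nat.even_iff, ← mul_add]
      apply Even.mul_left
      exact ((e2.1.1.pow).mul e1.2).add_odd (e1.1.mul e2.2.pow)
  obtain ⟨t, rfl, hp⟩ := key
  have ht : 0 < t := Nat.pos_of_mul_pos_left hM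
  have hm'0 : 0 < m' := Nat.pos_of_mul_pos_right hm0
  refine ⟨t * (m' ^ 2 * d), t * (D' * n ^ 2), by positivity, by ring, ?_, ?_, hp⟩
  · apply Nat.le_of_mul_le_mul_left _ hd
    nlinarith [Nat.mul_le_mul_left t h2]
  · apply Nat.le_of_mul_le_mul_left _ hd
    nlinarith [Nat.mul_le_mul_left t h1]

lemma li_iff (v w : ℝ × ℝ) : LinearIndependent ℝ ![v, w] ↔ v.1 * w.2 - w.1 * v.2 ≠ 0 := by
  obtain ⟨a, b⟩ := v
  obtain ⟨c, d⟩ := w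
  rw [LinearIndependent.pair_iff]
  simp only [Prod.smul_mk, smul_eq_mul, Prod.mk_add_mk, Prod.mk_eq_zero]
  constructor
  · intro h h0
    obtain ⟨h1, h2⟩ := h d (-b) ⟨by linarith, by ring⟩
    obtain ⟨h3, h4⟩ := h c (-a) ⟨by ring, by linarith⟩
    have := h 1 1 (by constructor <;> nlinarith)
    simp at this
  · rintro h s t ⟨h1, h2⟩
    constructor
    · have : s * (a * d - c * b) = 0 := by linear_combination d * h1 - c * h2
      exact (mul_eq_zero.1 this).resolve_right h
    · have : t * (a * d - c * b) = 0 := by linear_combination a * h2 - b * h1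
      exact (mul_eq_zero.1 this).resolve_right h

lemma num_aux (σ τ p q : ℝ) (h1 : -(1 / 2) ≤ σ) (h2 : σ ≤ 1 / 2) (h3 : -(1 / 2) ≤ τ)
    (h4 : τ ≤ 1 / 2) (hpq : |p| < q) : σ ^ 2 * q + 2 * (σ * τ) * p + τ ^ 2 * q < q := by
  have hq : 0 ≤ q := (abs_nonneg p).trans hpq.le
  have a1 : σ ^ 2 ≤ 1 / 4 := by nlinarith
  have a2 : τ ^ 2 ≤ 1 / 4 := by nlinarith
  have a3 : |σ * τ| ≤ 1 / 4 := by
    rw [abs_le]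
    constructor
    · linarith [sq_nonneg (σ + τ), add_sq σ τ]
    · linarith [sq_nonneg (σ - τ), sub_sq σ τ]
  have a4 : (σ * τ) * p ≤ 1 / 4 * |p| := by
    calc (σ * τ) * p ≤ |σ * τ * p| := le_abs_self _
      _ = |σ * τ| * |p| := abs_mul _ _
      _ ≤ _ := by gcongr
  have a6 : σ ^ 2 * q ≤ 1 / 4 * q := by gcongr
  have a7 : τ ^ 2 * q ≤ 1 / 4 * q := by gcongr
  linarith

/-- A vector of the lattice is an integral combination of independent minimal vectors. -/
lemma gen_aux (v w z₁ z₂ x : ℝ × ℝ) (h1 : z₁ ∈ lat v w) (h2 : z₂ ∈ lat v w) (hx : x ∈ lat v w)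
    (hdet : z₁.1 * z₂.2 - z₂.1 * z₁.2 ≠ 0)
    (hmin : ∀ z ∈ lat v w, z ≠ 0 → ip z₁ z₁ ≤ ip z z) (heq : ip z₂ z₂ = ip z₁ z₁) :
    ∃ i j : ℤ, x = (i : ℝ) • z₁ + (j : ℝ) • z₂ := by
  set δ := z₁.1 * z₂.2 - z₂.1 * z₁.2 with hδ
  set s := (x.1 * z₂.2 - z₂.1 * x.2) / δ with hs
  set t := (z₁.1 * x.2 - x.1 * z₁.2) / δ with ht
  have hs' : s * δ = x.1 * z₂.2 - z₂.1 * x.2 := by rw [hs]; field_simp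
  have ht' : t * δ = z₁.1 * x.2 - x.1 * z₁.2 := by rw [ht]; field_simp
  have hx1 : x.1 = s * z₁.1 + t * z₂.1 := by
    apply mul_right_cancel₀ hdet
    linear_combination -z₁.1 * hs' - z₂.1 * ht' + x.1 * hδ
  have hx2 : x.2 = s * z₁.2 + t * z₂.2 := by
    apply mul_right_cancel₀ hdet
    linear_combination -z₁.2 * hs' - z₂.2 * ht' + x.2 * hδ
  refine ⟨round s, round t, ?_⟩
  have hσ := abs_sub_round s
  have hτ := abs_sub_round t
  by_contra hne
  have hr : x - ((round s : ℝ) • z₁ + (round t : ℝ) • z₂) ≠ 0 := sub_ne_zero.2 hne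
  have hmem : x - ((round s : ℝ) • z₁ + (round t : ℝ) • z₂) ∈ lat v w := by
    obtain ⟨a, b, rfl⟩ := hx
    obtain ⟨c, d, rfl⟩ := h1
    obtain ⟨e, f, rfl⟩ := h2
    refine ⟨a - (round s * c + round t * e), b - (round s * d + round t * f), ?_⟩
    push_cast
    module
  have hle := hmin _ hmem hr
  generalize round s = i at *
  generalize round t = j at *
  rw [abs_le] at hσ hτ
  set σ := s - i with hσd
  set τ := t - j with hτd
  have hip : ip (x - ((i : ℝ) • z₁ + (j : ℝ) • z₂)) (x - ((i : ℝ) • z₁ + (j : ℝ) • z₂))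
      = σ ^ 2 * ip z₁ z₁ + 2 * (σ * τ) * ip z₁ z₂ + τ ^ 2 * ip z₂ z₂ := by
    simp only [ip, Prod.fst_sub, Prod.snd_sub, Prod.fst_add, Prod.snd_add, Prod.smul_fst,
      Prod.smul_snd, smul_eq_mul, hx1, hx2, hσd, hτd]
    ring
  rw [hip, heq] at hle
  have hG : ip z₁ z₁ * ip z₂ z₂ - ip z₁ z₂ ^ 2 = δ ^ 2 := by
    simp only [ip, hδ]; ring
  rw [heq] at hG
  have hδ2 : 0 < δ ^ 2 := by positivity
  have hq0 : 0 ≤ ip z₁ z₁ := by simp only [ip]; nlinarith [sq_nonneg z₁.1, sq_nonneg z₁.2]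
  generalize ip z₁ z₁ = q at *
  generalize ip z₁ z₂ = p at *
  have hpq : |p| < q := abs_lt_of_sq_lt_sq (by nlinarith) hq0
  rw [abs_lt] at hpq
  have := num_aux σ τ p q hσ.1 hσ.2 hτ.1 hτ.2 (abs_lt.2 hpq)
  linarith

lemma lat_fwd (v w : ℝ × ℝ) (h : IsIWR v w) :
    ∃ q p : ℤ, 0 < q ∧ 2 * p ≤ q ∧ -(2 * p) ≤ q ∧ latDet v w ^ 2 = (q : ℝ) ^ 2 - (p : ℝ) ^ 2 := by
  obtain ⟨hli, ⟨⟨A, hA⟩, ⟨B, hB⟩, ⟨C, hC⟩⟩, z₁, z₂, h1, h2, hz, ⟨⟨-, hlb⟩, heq⟩⟩ := h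
  rw [li_iff] at hli hz
  have hmin : ∀ z ∈ lat v w, z ≠ 0 → ip z₁ z₁ ≤ ip z z := fun z hzm hz0 => hlb ⟨z, hzm, hz0, rfl⟩
  have hv : v ∈ lat v w := ⟨1, 0, by simp⟩
  have hw : w ∈ lat v w := ⟨0, 1, by simp⟩
  obtain ⟨i, j, hij⟩ := gen_aux v w z₁ z₂ v h1 h2 hv hz hmin heq
  obtain ⟨k, l, hkl⟩ := gen_aux v w z₁ z₂ w h1 h2 hw hz hmin heq
  have hq0 : 0 < ip z₁ z₁ := by
    have : 0 ≤ ip z₁ z₁ := by simp only [ip]; nlinarith [sq_nonneg z₁.1, sq_nonneg z₁.2]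
    rcases this.lt_or_eq with h | h
    · exact h
    · exfalso
      apply hz
      simp only [ip] at h
      have e1 : z₁.1 = 0 := by nlinarith [sq_nonneg z₁.1, sq_nonneg z₁.2]
      have e2 : z₁.2 = 0 := by nlinarith [sq_nonneg z₁.1, sq_nonneg z₁.2]
      rw [e1, e2]; ring
  have hplus : ip z₁ z₁ ≤ ip (z₁ + z₂) (z₁ + z₂) := by
    apply hmin
    · obtain ⟨c, d, rfl⟩ := h1
      obtain ⟨e, f, rfl⟩ := h2
      exact ⟨c + e, d + f, by push_cast; module⟩
    · intro h0
      have e : z₁ = -z₂ := eq_neg_of_add_eq_zero_left h0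
      apply hz; rw [e]; simp only [Prod.fst_neg, Prod.snd_neg]; ring
  have hminus : ip z₁ z₁ ≤ ip (z₁ - z₂) (z₁ - z₂) := by
    apply hmin
    · obtain ⟨c, d, rfl⟩ := h1
      obtain ⟨e, f, rfl⟩ := h2
      exact ⟨c - e, d - f, by push_cast; module⟩
    · intro h0
      have e : z₁ = z₂ := sub_eq_zero.1 h0
      apply hz; rw [e]; ring
  have ep : ip (z₁ + z₂) (z₁ + z₂) = ip z₁ z₁ + 2 * ip z₁ z₂ + ip z₂ z₂ := by
    simp only [ip, Prod.fst_add, Prod.snd_add]; ring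
  have em : ip (z₁ - z₂) (z₁ - z₂) = ip z₁ z₁ - 2 * ip z₁ z₂ + ip z₂ z₂ := by
    simp only [ip, Prod.fst_sub, Prod.snd_sub]; ring
  rw [ep, heq] at hplus
  rw [em, heq] at hminus
  have hG : ip z₁ z₁ * ip z₂ z₂ - ip z₁ z₂ ^ 2 = (z₁.1 * z₂.2 - z₂.1 * z₁.2) ^ 2 := by
    simp only [ip]; ring
  rw [heq] at hG
  have hd1 : v.1 * w.2 - w.1 * v.2 = ((i * l - j * k : ℤ) : ℝ) * (z₁.1 * z₂.2 - z₂.1 * z₁.2) := by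
    rw [hij, hkl]
    simp only [Prod.fst_add, Prod.snd_add, Prod.smul_fst, Prod.smul_snd, smul_eq_mul]
    push_cast; ring
  obtain ⟨c, d, hz1⟩ := h1
  obtain ⟨e, f, hz2⟩ := h2
  have hd2 : z₁.1 * z₂.2 - z₂.1 * z₁.2 = ((c * f - d * e : ℤ) : ℝ) * (v.1 * w.2 - w.1 * v.2) := by
    rw [hz1, hz2]
    simp only [Prod.fst_add, Prod.snd_add, Prod.smul_fst, Prod.smul_snd, smul_eq_mul]
    push_cast; ring
  have hint1 : ip z₁ z₁ = ((c ^ 2 * A + 2 * c * d * B + d ^ 2 * C : ℤ) : ℝ) := by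
    push_cast; rw [← hA, ← hB, ← hC, hz1]
    simp only [ip, Prod.fst_add, Prod.snd_add, Prod.smul_fst, Prod.smul_snd, smul_eq_mul]; ring
  have hint2 : ip z₁ z₂ = ((c * e * A + (c * f + d * e) * B + d * f * C : ℤ) : ℝ) := by
    push_cast; rw [← hA, ← hB, ← hC, hz1, hz2]
    simp only [ip, Prod.fst_add, Prod.snd_add, Prod.smul_fst, Prod.smul_snd, smul_eq_mul]; ring
  generalize i * l - j * k = K at *
  generalize c * f - d * e = L at *
  have hKL : K * L = 1 := by
    have : ((K * L : ℤ) : ℝ) = 1 := by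
      apply mul_right_cancel₀ hli
      push_cast
      rw [hd2] at hd1
      linear_combination -hd1
    exact_mod_cast this
  have hK2 : (K : ℝ) ^ 2 = 1 := by
    rcases Int.eq_one_or_neg_one_of_mul_eq_one hKL with h | h <;> rw [h] <;> norm_num
  refine ⟨c ^ 2 * A + 2 * c * d * B + d ^ 2 * C,
    c * e * A + (c * f + d * e) * B + d * f * C, ?_, ?_, ?_, ?_⟩
  rotate_left 3
  · rw [← hint1, ← hint2, latDet, sq_abs, hd1, mul_pow, hK2, ← hG]; ring
  · rw [hint1] at hq0; exact_mod_cast hq0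
  · rw [hint1, hint2] at hminus
    have : (2 : ℝ) * ((c * e * A + (c * f + d * e) * B + d * f * C : ℤ) : ℝ) ≤
      ((c ^ 2 * A + 2 * c * d * B + d ^ 2 * C : ℤ) : ℝ) := by linarith
    exact_mod_cast this
  · rw [hint1, hint2] at hplus
    have : -((2 : ℝ) * ((c * e * A + (c * f + d * e) * B + d * f * C : ℤ) : ℝ)) ≤
      ((c ^ 2 * A + 2 * c * d * B + d ^ 2 * C : ℤ) : ℝ) := by linarith
    exact_mod_cast this

lemma form_min (q p a b : ℤ) (hq : 0 < q) (h1 : 2 * p ≤ q) (h2 : -(2 * p) ≤ q)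
    (h : a ≠ 0 ∨ b ≠ 0) : q ≤ a ^ 2 * q + 2 * a * b * p + b ^ 2 * q := by
  have k1 : 1 ≤ a ^ 2 + a * b + b ^ 2 := by
    by_contra hc
    have ha : a = 0 := by nlinarith [sq_nonneg (a + b), sq_nonneg a, sq_nonneg b]
    have hb : b = 0 := by nlinarith [sq_nonneg (a + b), sq_nonneg a, sq_nonneg b]
    tauto
  have k2 : 1 ≤ a ^ 2 - a * b + b ^ 2 := by
    by_contra hc
    have ha : a = 0 := by nlinarith [sq_nonneg (a - b), sq_nonneg a, sq_nonneg b]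
    have hb : b = 0 := by nlinarith [sq_nonneg (a - b), sq_nonneg a, sq_nonneg b]
    tauto
  rcases le_total 0 (a * b) with hab | hab
  · nlinarith [mul_le_mul_of_nonneg_left h2 hab, mul_le_mul_of_nonneg_left k2 hq.le]
  · nlinarith [mul_le_mul_of_nonneg_left h1 (neg_nonneg.2 hab),
      mul_le_mul_of_nonneg_left k1 hq.le]

lemma lat_bwd (q p : ℤ) (Δ : ℝ) (hΔ : 0 < Δ) (hq : 0 < q) (h1 : 2 * p ≤ q) (h2 : -(2 * p) ≤ q)
    (h : Δ ^ 2 = (q : ℝ) ^ 2 - (p : ℝ) ^ 2) : ∃ v w : ℝ × ℝ, IsIWR v w ∧ latDet v w = Δ := by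
  have hqR : (0 : ℝ) < q := by exact_mod_cast hq
  obtain ⟨r, hr0, hr⟩ : ∃ r : ℝ, 0 < r ∧ r ^ 2 = q :=
    ⟨√q, Real.sqrt_pos.2 hqR, Real.sq_sqrt hqR.le⟩
  have hdet : r * (Δ / r) - p / r * 0 = Δ := by field_simp; ring
  have evv : ip (r, 0) (r, 0) = q := by simp only [ip]; rw [← hr]; ring
  have evw : ip (r, 0) ((p : ℝ) / r, Δ / r) = p := by simp only [ip]; field_simp; ring
  have eww : ip ((p : ℝ) / r, Δ / r) ((p : ℝ) / r, Δ / r) = q := by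
    simp only [ip]
    have : (p : ℝ) / r * (p / r) + Δ / r * (Δ / r) = (p ^ 2 + Δ ^ 2) / r ^ 2 := by
      field_simp
    rw [this, h, hr]; field_simp; ring
  have hli : LinearIndependent ℝ ![((r, 0) : ℝ × ℝ), ((p : ℝ) / r, Δ / r)] := by
    rw [li_iff]; simp only; rw [hdet]; exact hΔ.ne'
  generalize hv : ((r, 0) : ℝ × ℝ) = v at *
  generalize hw : (((p : ℝ) / r, Δ / r) : ℝ × ℝ) = w at *
  have hvm : v ∈ lat v w := ⟨1, 0, by simp⟩
  have hwm : w ∈ lat v w := ⟨0, 1, by simp⟩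
  refine ⟨v, w, ⟨hli, ⟨⟨_, evv⟩, ⟨_, evw⟩, ⟨_, eww⟩⟩, v, w, hvm, hwm, hli, ⟨⟨v, hvm, ?_, rfl⟩, ?_⟩,
    by rw [eww, evv]⟩, ?_⟩
  · rw [← hv]; simp [hr0.ne']
  · rintro _ ⟨_, ⟨a, b, rfl⟩, hz, rfl⟩
    have e : ip ((a : ℝ) • v + (b : ℝ) • w) ((a : ℝ) • v + (b : ℝ) • w)
        = a ^ 2 * ip v v + 2 * a * b * ip v w + b ^ 2 * ip w w := by
      simp only [ip, Prod.fst_add, Prod.snd_add, Prod.smul_fst, Prod.smul_snd, smul_eq_mul]; ring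
    rw [e, evv, evw, eww]
    have hab : a ≠ 0 ∨ b ≠ 0 := by
      by_contra hc
      push Not at hc
      apply hz; rw [hc.1, hc.2]; simp
    exact_mod_cast form_min q p a b hq h1 h2 hab
  · rw [← hv, ← hw, latDet]; simp only; rw [hdet, abs_of_pos hΔ]

/-- The determinant characterization of Theorem 1.4: `Δ > 0` is the determinant
of some IWR planar lattice iff `Δ = M√D` with `D` squarefree and the set
`mn_D(M)` nonempty. -/
theorem stmt12 (Δ : ℝ) (hΔ : 0 < Δ) :
    (∃ v w : ℝ × ℝ, IsIWR v w ∧ latDet v w = Δ) ↔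
    ∃ M D : ℕ, 0 < M ∧ 0 < D ∧ Squarefree D ∧ Δ = (M : ℝ) * Real.sqrt (D : ℝ) ∧
      ∃ m n : ℕ, 0 < m ∧ 0 < n ∧ Nat.gcd m n = 1 ∧
        D * n ^ 2 ≤ 3 * m ^ 2 ∧ m ^ 2 ≤ 3 * (D * n ^ 2) ∧
        (2 * m * n /
          (2 ^ (if 2 ∣ D ∨ (2 ∣ m * n ∧ 2 ∣ D + 1) then 0 else 1) * Nat.gcd m D)) ∣ M := by
  constructor
  · rintro ⟨v, w, h, rfl⟩
    obtain ⟨q, p, hq, h1, h2, hd⟩ := lat_fwd v w h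
    obtain ⟨a, ha⟩ := Int.eq_ofNat_of_zero_le (show 0 ≤ q + p by omega)
    obtain ⟨b, hb⟩ := Int.eq_ofNat_of_zero_le (show 0 ≤ q - p by omega)
    have ha0 : 0 < a := by omega
    have hb0 : 0 < b := by omega
    obtain ⟨D, M, hD0, hM0, hDM, hsq⟩ := Nat.sq_mul_squarefree_of_pos (Nat.mul_pos ha0 hb0)
    have hdet : latDet v w ^ 2 = (M : ℝ) ^ 2 * D := by
      have e1 : ((a : ℤ) : ℝ) * ((b : ℤ) : ℝ) = (M : ℝ) ^ 2 * D := by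
        push_cast; exact_mod_cast hDM.symm
      rw [hd, ← e1, ← ha, ← hb]; push_cast; ring
    refine ⟨M, D, hM0, hD0, hsq, ?_, ?_⟩
    · rw [← Real.sqrt_sq hΔ.le, hdet, Real.sqrt_mul (by positivity), Real.sqrt_sq (by positivity)]
    · exact fwdN a b M D ha0 hM0 hsq hDM.symm (by omega) (by omega) (by omega)
  · rintro ⟨M, D, hM, hD, -, hΔe, m, n, hm, hn, -, h1, h2, hdv⟩
    obtain ⟨a, b, ha, hab, h3, h4, hp⟩ := bwdN M D m n hM hD hm hn h1 h2 hdv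
    obtain ⟨q, hq⟩ : ∃ q : ℤ, (a : ℤ) + b = 2 * q := ⟨((a : ℤ) + b) / 2, by omega⟩
    have hb : (b : ℤ) = 2 * q - a := by omega
    refine lat_bwd q (a - q) Δ hΔ (by omega) (by omega) (by omega) ?_
    have hbR : (b : ℝ) = 2 * q - a := by exact_mod_cast hb
    have habR : (a : ℝ) * b = M ^ 2 * D := by exact_mod_cast hab
    rw [hΔe, mul_pow, Real.sq_sqrt (by positivity), ← habR, hbR]
    push_cast; ring
end

section
/- Let M, D be positive integers with D squarefree, let Δ = M√D, and suppose the set mn_D(M) = {(m, n) : m, n coprime positive integers, D n² ≤ 3 m², m² ≤ 3 D n², 2mn/(2^e gcd(m, D)) divides M} is nonempty, where e = 0 if 2 ∣ D or if both mn and D+1 are even, and e = 1 otherwise. Choose (m, n) ∈ mn_D(M) maximizing m/n + D·n/m over mn_D(M), set g = 2^e gcd(m, D), p = |m² − D n²|/g, r = 2mn/g, q = (m² + D n²)/g, and k = M/r (a positive integer). Then the planar lattice Λ spanned by √(k/q)·(q, 0) and √(k/q)·(p, r√D) is IWR with det(Λ) = Δ and |Λ| = kq, and every IWR planar lattice Λ'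 with det(Λ') = Δ satisfies |Λ'| ≤ kq. -/
/-- The set `mn_D(M)` of (1.11). -/
def mnSet (D M : ℕ) : Set (ℕ × ℕ) :=
  {mn | 0 < mn.1 ∧ 0 < mn.2 ∧ Nat.gcd mn.1 mn.2 = 1 ∧
    D * mn.2 ^ 2 ≤ 3 * mn.1 ^ 2 ∧ mn.1 ^ 2 ≤ 3 * (D * mn.2 ^ 2) ∧
    (2 * mn.1 * mn.2 /
      (2 ^ (if 2 ∣ D ∨ (2 ∣ mn.1 * mn.2 ∧ 2 ∣ D + 1) then 0 else 1)
        * Nat.gcd mn.1 D)) ∣ M}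

lemma form_ge_s13 (p q : ℝ) (hq : 0 ≤ q) (h1 : 2 * p ≤ q) (h2 : -(2 * p) ≤ q) (a b : ℤ)
    (hab : ¬(a = 0 ∧ b = 0)) : q ≤ q * (a ^ 2 + b ^ 2) + 2 * p * (a * b) := by
  have key : ((1 : ℤ) ≤ a ^ 2 + b ^ 2 - a * b) ∧ ((1 : ℤ) ≤ a ^ 2 + b ^ 2 + a * b) := by
    by_cases ha : a = 0
    · subst ha
      have hb : b ≠ 0 := fun h => hab ⟨rfl, h⟩
      have : 0 < b ^ 2 := by positivity
      constructor <;> nlinarith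
    · have : 0 < a ^ 2 := by positivity
      constructor
      · nlinarith [sq_nonneg (a - 2 * b)]
      · nlinarith [sq_nonneg (a + 2 * b)]
  have k1 : (1 : ℝ) ≤ a ^ 2 + b ^ 2 - a * b := by exact_mod_cast key.1
  have k2 : (1 : ℝ) ≤ a ^ 2 + b ^ 2 + a * b := by exact_mod_cast key.2
  rcases le_total 0 ((a : ℝ) * b) with h | h
  · nlinarith [mul_nonneg h (by linarith : 0 ≤ q + 2 * p), mul_nonneg hq (sub_nonneg.mpr k1)]
  · nlinarith [mul_nonneg (neg_nonneg.mpr h) (by linarith : 0 ≤ q - 2 * p),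
      mul_nonneg hq (sub_nonneg.mpr k2)]

/-- arithmetic part of the parametrization -/
lemma r_dvd (M D m n : ℕ) (N : ℤ) (hm : 0 < m) (hn : 0 < n) (hDsf : Squarefree D)
    (hco : Nat.gcd m n = 1)
    (h : (M : ℤ) * (m ^ 2 + D * n ^ 2) = 2 * m * n * N) :
    (2 * m * n / (2 ^ (if 2 ∣ D ∨ (2 ∣ m * n ∧ 2 ∣ D + 1) then 0 else 1) * Nat.gcd m D)) ∣ M := by
  obtain ⟨d, m1, D1, hd, hc, rfl, rfl⟩ : ∃ d m1 D1 : ℕ, 0 < d ∧ Nat.Coprime m1 D1 ∧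
      m = m1 * d ∧ D = D1 * d := by
    obtain ⟨m1, D1, hc, h1, h2⟩ := Nat.exists_coprime m D
    exact ⟨_, m1, D1, Nat.gcd_pos_of_pos_left _ hm, hc, h1, h2⟩
  have hgcd : Nat.gcd (m1 * d) (D1 * d) = d := by
    rw [Nat.gcd_mul_right, Nat.Coprime.gcd_eq_one hc, one_mul]
  rw [hgcd]
  have hdn : Nat.Coprime d n := Nat.Coprime.coprime_dvd_left (Dvd.intro_left _ rfl) hco
  have hm1n : Nat.Coprime m1 n := Nat.Coprime.coprime_dvd_left (Dvd.intro _ rfl) hco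
  have hd0 : (d : ℤ) ≠ 0 := by exact_mod_cast hd.ne'
  have hm1 : 0 < m1 := Nat.pos_of_mul_pos_right hm
  have h' : (M : ℤ) * (d * m1 ^ 2 + D1 * n ^ 2) = 2 * m1 * n * N := by
    apply mul_left_cancel₀ hd0
    push_cast at h
    linear_combination h
  have hnM : n ∣ M := by
    have h1 : (n : ℤ) ∣ (M : ℤ) * (d * m1 ^ 2 : ℕ) := by
      refine ⟨2 * m1 * N - M * D1 * n, ?_⟩
      push_cast
      linear_combination h'
    have h2 : n ∣ M * (d * m1 ^ 2) := by exact_mod_cast h1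
    refine Nat.Coprime.dvd_of_dvd_mul_right ?_ h2
    exact Nat.Coprime.mul_right hdn.symm (hm1n.symm.pow_right 2)
  have hmM : m1 ∣ M := by
    have h1 : (m1 : ℤ) ∣ (M : ℤ) * (D1 * n ^ 2 : ℕ) := by
      refine ⟨2 * n * N - M * d * m1, ?_⟩
      push_cast
      linear_combination h'
    have h2 : m1 ∣ M * (D1 * n ^ 2) := by exact_mod_cast h1
    refine Nat.Coprime.dvd_of_dvd_mul_right ?_ h2
    exact Nat.Coprime.mul_right hc (hm1n.pow_right 2)
  obtain ⟨t, rfl⟩ := Nat.Coprime.mul_dvd_of_dvd_of_dvd hm1n hmM hnM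
  split_ifs with hif
  · have e1 : 2 * (m1 * d) * n / (2 ^ 0 * d) = m1 * n * 2 := by
      rw [show 2 * (m1 * d) * n = (m1 * n * 2) * d by ring, pow_zero, one_mul,
        Nat.mul_div_cancel _ hd]
    rw [e1]
    apply Nat.mul_dvd_mul_left
    have h3 : (t : ℤ) * (d * m1 ^ 2 + D1 * n ^ 2) = 2 * N := by
      have : (m1 : ℤ) * n ≠ 0 := by positivity
      apply mul_left_cancel₀ this
      push_cast at h'
      linear_combination h'
    have h4 : 2 ∣ t * (d * m1 ^ 2 + D1 * n ^ 2) := by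
      have : (2 : ℤ) ∣ (t : ℤ) * (d * m1 ^ 2 + D1 * n ^ 2) := ⟨N, h3⟩
      exact_mod_cast this
    refine Nat.Coprime.dvd_of_dvd_mul_right ?_ h4
    rw [Nat.coprime_two_left]
    have c1 : ¬ (Even d ∧ Even n) := fun ⟨a, b⟩ => by
      have := Nat.dvd_gcd a.two_dvd b.two_dvd
      rw [hdn.gcd_eq_one] at this; omega
    have c2 : ¬ (Even m1 ∧ Even n) := fun ⟨a, b⟩ => by
      have := Nat.dvd_gcd a.two_dvd b.two_dvd
      rw [hm1n.gcd_eq_one] at this; omega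
    have c3 : ¬ (Even m1 ∧ Even D1) := fun ⟨a, b⟩ => by
      have := Nat.dvd_gcd a.two_dvd b.two_dvd
      rw [hc.gcd_eq_one] at this; omega
    have c4 : ¬ (Even d ∧ Even D1) := fun ⟨a, b⟩ => by
      have := hDsf 2 (mul_dvd_mul b.two_dvd a.two_dvd)
      simp at this
    simp only [← even_iff_two_dvd] at hif
    simp only [← Nat.not_even_iff_odd, Nat.even_add, Nat.even_mul, Nat.even_pow,
      Nat.not_even_one] at hif ⊢
    clear * - c1 c2 c3 c4 hif
    by_cases q1 : Even d <;> by_cases q2 : Even n <;> by_cases q3 : Even m1 <;>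
      by_cases q4 : Even D1 <;> simp_all
  · have e1 : 2 * (m1 * d) * n / (2 ^ 1 * d) = m1 * n := by
      rw [show 2 * (m1 * d) * n = (m1 * n) * (2 ^ 1 * d) by ring,
        Nat.mul_div_cancel _ (by positivity)]
    rw [e1]
    exact Dvd.intro _ rfl

lemma g_dvd (D m n : ℕ) :
    let g := 2 ^ (if 2 ∣ D ∨ (2 ∣ m * n ∧ 2 ∣ D + 1) then 0 else 1) * Nat.gcd m D
    g ∣ m ^ 2 + D * n ^ 2 ∧ g ∣ 2 * m * n ∧ (g : ℤ) ∣ (m ^ 2 : ℤ) - D * n ^ 2 := by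
  intro g
  have hdm := Nat.gcd_dvd_left m D
  have hdD := Nat.gcd_dvd_right m D
  have hsum : Nat.gcd m D ∣ m ^ 2 + D * n ^ 2 :=
    dvd_add (hdm.trans (dvd_pow_self m two_ne_zero)) (hdD.mul_right _)
  have A : g ∣ m ^ 2 + D * n ^ 2 ∧ g ∣ 2 * m * n ∧ g ∣ 2 * m ^ 2 := by
    by_cases hif : 2 ∣ D ∨ (2 ∣ m * n ∧ 2 ∣ D + 1)
    · simp only [g, if_pos hif, pow_zero, one_mul]
      refine ⟨hsum, ?_, ?_⟩
      · exact (hdm.mul_left 2).mul_right n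
      · exact (hdm.trans (dvd_pow_self m two_ne_zero)).mul_left 2
    · simp only [g, if_neg hif, pow_one]
      refine ⟨?_, ?_, ?_⟩
      · simp only [← even_iff_two_dvd] at hif
        have hev : 2 ∣ m ^ 2 + D * n ^ 2 := by
          rw [← even_iff_two_dvd]
          simp only [Nat.even_add, Nat.even_mul, Nat.even_pow,
            Nat.not_even_one] at hif ⊢
          tauto
        refine Nat.Coprime.mul_dvd_of_dvd_of_dvd ?_ hev hsum
        rw [Nat.coprime_two_left, ← Nat.not_even_iff_odd]
        intro h
        exact hif (Or.inl (even_iff_two_dvd.mpr (h.two_dvd.trans hdD)))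
      · rw [mul_assoc]; exact Nat.mul_dvd_mul_left 2 (hdm.mul_right n)
      · exact Nat.mul_dvd_mul_left 2 (hdm.trans (dvd_pow_self m two_ne_zero))
  refine ⟨A.1, A.2.1, ?_⟩
  have e : (m ^ 2 : ℤ) - D * n ^ 2 = ((2 * m ^ 2 : ℕ) : ℤ) - ((m ^ 2 + D * n ^ 2 : ℕ) : ℤ) := by
    push_cast; ring
  rw [e]
  exact dvd_sub (Int.natCast_dvd_natCast.mpr A.2.2) (Int.natCast_dvd_natCast.mpr A.1)

lemma lat_sub (v w x y : ℝ × ℝ) (hx : x ∈ lat v w) (hy : y ∈ lat v w) (s t : ℤ) :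
    (s : ℝ) • x + (t : ℝ) • y ∈ lat v w := by
  obtain ⟨a, b, rfl⟩ := hx
  obtain ⟨c, d, rfl⟩ := hy
  refine ⟨s * a + t * c, s * b + t * d, ?_⟩
  push_cast
  module

/-- minimal independent vectors generate -/
lemma gen (v w z₁ z₂ z : ℝ × ℝ) (N : ℝ) (h1 : z₁ ∈ lat v w) (h2 : z₂ ∈ lat v w)
    (hδ : z₁.1 * z₂.2 - z₂.1 * z₁.2 ≠ 0) (hN : ip z₁ z₁ = N) (hN2 : ip z₂ z₂ = N)
    (hmin : ∀ u ∈ lat v w, u ≠ 0 → N ≤ ip u u) (hz : z ∈ lat v w) :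
    ∃ a b : ℤ, z = (a : ℝ) • z₁ + (b : ℝ) • z₂ := by
  obtain ⟨x, y, hxy⟩ : ∃ x y : ℝ, z = x • z₁ + y • z₂ := by
    refine ⟨(z.1 * z₂.2 - z₂.1 * z.2) / (z₁.1 * z₂.2 - z₂.1 * z₁.2),
      (z₁.1 * z.2 - z.1 * z₁.2) / (z₁.1 * z₂.2 - z₂.1 * z₁.2), ?_⟩
    ext
    · simp only [Prod.fst_add, Prod.smul_fst, smul_eq_mul]
      rw [div_mul_eq_mul_div, div_mul_eq_mul_div, ← add_div, eq_div_iff hδ]; ring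
    · simp only [Prod.snd_add, Prod.smul_snd, smul_eq_mul]
      rw [div_mul_eq_mul_div, div_mul_eq_mul_div, ← add_div, eq_div_iff hδ]; ring
  refine ⟨round x, round y, ?_⟩
  have hx := abs_sub_round x
  have hy := abs_sub_round y
  set s := x - round x with hs
  set t := y - round y with ht
  set u := s • z₁ + t • z₂ with hu
  have hzu : z = u + ((round x : ℝ) • z₁ + (round y : ℝ) • z₂) := by
    rw [hxy, hu, hs, ht]; module
  have hul : u ∈ lat v w := by
    have e : u = ((1 : ℤ) : ℝ) • z + ((-1 : ℤ) : ℝ) •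
      ((round x : ℝ) • z₁ + (round y : ℝ) • z₂) := by
      rw [hzu]; push_cast; module
    rw [e]
    exact lat_sub _ _ _ _ hz (lat_sub _ _ _ _ h1 h2 _ _) _ _
  by_contra hne
  have hu0 : u ≠ 0 := fun h => hne (by rw [hzu, h, zero_add])
  have hge := hmin u hul hu0
  have hlag : ip z₁ z₂ ^ 2 + (z₁.1 * z₂.2 - z₂.1 * z₁.2) ^ 2 = N * N := by
    nth_rewrite 1 [← hN]
    rw [← hN2]; simp only [ip]; ring
  have hpos : 0 < (z₁.1 * z₂.2 - z₂.1 * z₁.2) ^ 2 := by positivity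
  have hN0 : 0 ≤ N := by rw [← hN]; simp only [ip]; nlinarith [sq_nonneg z₁.1, sq_nonneg z₁.2]
  have hc : |ip z₁ z₂| < N := abs_lt_of_sq_lt_sq (by nlinarith) hN0
  have huu : ip u u = N * (s ^ 2 + t ^ 2) + 2 * (s * t) * ip z₁ z₂ := by
    have : ip u u = s ^ 2 * ip z₁ z₁ + t ^ 2 * ip z₂ z₂ + 2 * (s * t) * ip z₁ z₂ := by
      simp only [hu, ip, Prod.fst_add, Prod.smul_fst, Prod.snd_add, Prod.smul_snd, smul_eq_mul]
      ring
    rw [this, hN, hN2]; ring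
  have hs2 : s ^ 2 ≤ 1 / 4 := by rw [← sq_abs]; nlinarith [abs_nonneg s]
  have ht2 : t ^ 2 ≤ 1 / 4 := by rw [← sq_abs]; nlinarith [abs_nonneg t]
  have hst : |s * t| ≤ 1 / 4 := by
    rw [abs_mul]; nlinarith [abs_nonneg s, abs_nonneg t]
  have hcr : (s * t) * ip z₁ z₂ ≤ 1 / 4 * |ip z₁ z₂| := by
    calc _ ≤ |(s * t) * ip z₁ z₂| := le_abs_self _
      _ = |s * t| * |ip z₁ z₂| := abs_mul _ _
      _ ≤ _ := by gcongr
  have hNs : N * (s ^ 2 + t ^ 2) ≤ N * (1 / 2) := by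
    apply mul_le_mul_of_nonneg_left _ hN0; linarith
  linarith

lemma iwr_data (v w : ℝ × ℝ) (N : ℝ) (h : IsIWR v w) (hN : IsLeast (normSet v w) N) :
    ∃ A C : ℤ, N = A ∧ 0 < A ∧ 2 * C ≤ A ∧ -(2 * C) ≤ A ∧
      latDet v w ^ 2 = (A : ℝ) ^ 2 - (C : ℝ) ^ 2 := by
  obtain ⟨hli, ⟨⟨α, hα⟩, ⟨β, hβ⟩, ⟨γ, hγ⟩⟩, z₁, z₂, h1, h2, hz, hl, he⟩ := h
  have hNz : ip z₁ z₁ = N := hl.unique hN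
  rw [li_iff] at hli hz
  have hmin : ∀ u ∈ lat v w, u ≠ 0 → N ≤ ip u u := fun u hu h0 => hN.2 ⟨u, hu, h0, rfl⟩
  have hNz2 := he.trans hNz
  have hvl : v ∈ lat v w := ⟨1, 0, by simp⟩
  have hwl : w ∈ lat v w := ⟨0, 1, by simp⟩
  obtain ⟨x1, y1, hv⟩ := gen v w z₁ z₂ v N h1 h2 hz hNz hNz2 hmin hvl
  obtain ⟨x2, y2, hw⟩ := gen v w z₁ z₂ w N h1 h2 hz hNz hNz2 hmin hwl
  obtain ⟨a, b, ha⟩ := id h1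
  obtain ⟨c, d, hc⟩ := id h2
  have ipbil : ∀ a b c d : ℤ, ip ((a : ℝ) • v + (b : ℝ) • w) ((c : ℝ) • v + (d : ℝ) • w) =
      ((a * c * α + (a * d + b * c) * β + b * d * γ : ℤ) : ℝ) := by
    intro a b c d
    push_cast
    rw [← hα, ← hβ, ← hγ]
    simp only [ip, Prod.fst_add, Prod.smul_fst, Prod.snd_add, Prod.smul_snd, smul_eq_mul]
    ring
  have hA := ipbil a b a b
  have hC := ipbil a b c d
  rw [← ha, hNz] at hA
  rw [← ha, ← hc] at hC
  have d1 : z₁.1 * z₂.2 - z₂.1 * z₁.2 = ((a * d - b * c : ℤ) : ℝ) * (v.1 * w.2 - w.1 * v.2) := by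
    rw [ha, hc]; push_cast
    simp only [Prod.fst_add, Prod.smul_fst, Prod.snd_add, Prod.smul_snd, smul_eq_mul]
    ring
  have d2 : v.1 * w.2 - w.1 * v.2 =
      ((x1 * y2 - y1 * x2 : ℤ) : ℝ) * (z₁.1 * z₂.2 - z₂.1 * z₁.2) := by
    have e : ∀ v w : ℝ × ℝ, v = (x1 : ℝ) • z₁ + (y1 : ℝ) • z₂ →
        w = (x2 : ℝ) • z₁ + (y2 : ℝ) • z₂ → v.1 * w.2 - w.1 * v.2 =
      ((x1 * y2 - y1 * x2 : ℤ) : ℝ) * (z₁.1 * z₂.2 - z₂.1 * z₁.2) := by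
      rintro v w rfl rfl
      push_cast
      simp only [Prod.fst_add, Prod.smul_fst, Prod.snd_add, Prod.smul_snd, smul_eq_mul]
      ring
    exact e v w hv hw
  have hj : (a * d - b * c) * (x1 * y2 - y1 * x2) = 1 := by
    have : (((a * d - b * c) * (x1 * y2 - y1 * x2) : ℤ) : ℝ) = ((1 : ℤ) : ℝ) := by
      apply mul_right_cancel₀ hz
      rw [d2] at d1
      push_cast at d1 ⊢
      linear_combination -d1
    exact_mod_cast this
  have hj2 : (a * d - b * c) ^ 2 = 1 := by
    rcases Int.eq_one_or_neg_one_of_mul_eq_one hj with h | h <;> rw [h] <;> norm_num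
  have hj3 : (((a * d - b * c : ℤ)) : ℝ) ^ 2 = 1 := by exact_mod_cast hj2
  have hlag : ip z₁ z₂ ^ 2 + (z₁.1 * z₂.2 - z₂.1 * z₁.2) ^ 2 = N * N := by
    nth_rewrite 1 [← hNz]
    rw [← hNz2]; simp only [ip]; ring
  have hpos : 0 < (z₁.1 * z₂.2 - z₂.1 * z₁.2) ^ 2 := by positivity
  have hN0 : 0 ≤ N := by rw [← hNz]; simp only [ip]; nlinarith [sq_nonneg z₁.1, sq_nonneg z₁.2]
  have hN1 : 0 < N := by
    rcases hN0.lt_or_eq with h | h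
    · exact h
    · rw [← h] at hlag; nlinarith [sq_nonneg (ip z₁ z₂)]
  have hne : ∀ σ : ℤ, (1 : ℝ) • z₁ + (σ : ℝ) • z₂ ≠ 0 := by
    intro σ h0
    have := (LinearIndependent.pair_iff.mp ((li_iff z₁ z₂).mpr hz)) 1 σ h0
    exact one_ne_zero this.1
  have hexp : ∀ σ : ℤ, N ≤ N + σ ^ 2 * N + 2 * σ * ip z₁ z₂ := by
    intro σ
    have := hmin _ (by simpa using lat_sub v w z₁ z₂ h1 h2 1 σ) (by simpa using hne σ)
    calc N ≤ _ := this
      _ = ip z₁ z₁ + σ ^ 2 * ip z₂ z₂ + 2 * σ * ip z₁ z₂ := by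
        simp only [ip, Prod.fst_add, Prod.smul_fst, Prod.snd_add, Prod.smul_snd, smul_eq_mul]
        ring
      _ = _ := by rw [hNz, hNz2]
  have b1 := hexp 1
  have b2 := hexp (-1)
  push_cast at b1 b2
  refine ⟨_, a * c * α + (a * d + b * c) * β + b * d * γ, hA, ?_, ?_, ?_, ?_⟩
  · have := hN1; rw [hA] at this; exact_mod_cast this
  · have : 2 * ip z₁ z₂ ≤ N := by linarith
    rw [hA, hC] at this
    exact_mod_cast this
  · have : -(2 * ip z₁ z₂) ≤ N := by linarith
    rw [hA, hC] at this
    exact_mod_cast this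
  · rw [← hA, ← hC, latDet, sq_abs]
    have : (z₁.1 * z₂.2 - z₂.1 * z₁.2) ^ 2 = (v.1 * w.2 - w.1 * v.2) ^ 2 := by
      rw [d1, mul_pow, hj3, one_mul]
    linarith

lemma param_s13 (M D : ℕ) (hM : 0 < M) (hD : 0 < D) (hDsf : Squarefree D) (A C : ℤ)
    (hA : 0 < A) (h1 : 2 * C ≤ A) (h2 : -(2 * C) ≤ A) (h : (M : ℤ) ^ 2 * D = A ^ 2 - C ^ 2) :
    ∃ m n : ℕ, (m, n) ∈ mnSet D M ∧
      (A : ℝ) * 2 = M * ((m : ℝ) / (n : ℝ) + (D : ℝ) * (n : ℝ) / (m : ℝ)) := by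
  obtain ⟨s, hs⟩ : ∃ s : ℕ, A + C = s := ⟨(A + C).toNat, by omega⟩
  have hs0 : 0 < s := by omega
  obtain ⟨m, n, hco, hm, hn⟩ := Nat.exists_coprime s M
  set e := Nat.gcd s M with he
  have he0 : 0 < e := Nat.gcd_pos_of_pos_left _ hs0
  have hm0 : 0 < m := by rw [hm] at hs0; exact Nat.pos_of_mul_pos_right hs0
  have hn0 : 0 < n := by rw [hn] at hM; exact Nat.pos_of_mul_pos_right hM
  have hm0' : (m : ℤ) ≠ 0 := by positivity
  have hn0' : (n : ℤ) ≠ 0 := by positivity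
  have he0' : (e : ℤ) ≠ 0 := by positivity
  -- basic relations
  have hn' : (M : ℤ) = n * e := by exact_mod_cast hn
  have hm' : A + C = m * e := by rw [hs]; exact_mod_cast hm
  have hm2 : m * (A - C) = n ^ 2 * D * e := by
    apply mul_left_cancel₀ he0'
    rw [hn'] at h
    linear_combination -h - (A - C) * hm'
  have hA2 : 2 * m * A = e * (m ^ 2 + D * n ^ 2) := by linear_combination hm2 + m * hm'
  have hC2 : 2 * m * C = e * (m ^ 2 - D * n ^ 2) := by linear_combination m * hm' - hm2
  have hme : (0 : ℤ) < m := by positivity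
  have hee : (0 : ℤ) < e := by positivity
  refine ⟨m, n, ⟨hm0, hn0, hco, ?_, ?_, ?_⟩, ?_⟩
  · have : (e : ℤ) * (D * n ^ 2) ≤ e * (3 * m ^ 2) := by nlinarith
    have := le_of_mul_le_mul_left this hee
    exact_mod_cast this
  · have : (e : ℤ) * (m ^ 2) ≤ e * (3 * (D * n ^ 2)) := by nlinarith
    have := le_of_mul_le_mul_left this hee
    exact_mod_cast this
  · apply r_dvd M D m n A hm0 hn0 hDsf hco
    rw [hn']; linear_combination -n * hA2
  · have hA3 : 2 * (m : ℝ) * A = e * (m ^ 2 + D * n ^ 2) := by exact_mod_cast hA2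
    have hn3 : (M : ℝ) = n * e := by exact_mod_cast hn
    have : (m : ℝ) ≠ 0 := by positivity
    have : (n : ℝ) ≠ 0 := by positivity
    rw [hn3]
    field_simp
    linear_combination hA3

/-- The optimization part of Theorem 1.4: for `Δ = M√D` with `mn_D(M) ≠ ∅`, the
pair `(m,n) ∈ mn_D(M)` maximizing `m/n + D n/m` yields, via `p, r, q, k`, the
IWR lattice `√(k/q)·Ω_D(p,q)` of determinant `Δ` and minimal norm `kq`, which
maximizes the minimal norm among all IWR planar lattices of determinant `Δ`. -/
theorem stmt13 (M D : ℕ) (hM : 0 < M) (hD : 0 < D) (hDsf : Squarefree D)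
    (Δ : ℝ) (hΔ : Δ = (M : ℝ) * Real.sqrt (D : ℝ))
    (m n : ℕ) (hmn : (m, n) ∈ mnSet D M)
    (hmax : ∀ m' n' : ℕ, (m', n') ∈ mnSet D M →
      (m' : ℝ) / (n' : ℝ) + (D : ℝ) * (n' : ℝ) / (m' : ℝ)
        ≤ (m : ℝ) / (n : ℝ) + (D : ℝ) * (n : ℝ) / (m : ℝ))
    (g p r q k : ℕ)
    (hg : g = 2 ^ (if 2 ∣ D ∨ (2 ∣ m * n ∧ 2 ∣ D + 1) then 0 else 1) * Nat.gcd m D)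
    (hp : p = ((m ^ 2 : ℤ) - D * n ^ 2).natAbs / g)
    (hr : r = 2 * m * n / g)
    (hq : q = (m ^ 2 + D * n ^ 2) / g)
    (hk : k = M / r)
    (v w : ℝ × ℝ)
    (hv : v = Real.sqrt ((k : ℝ) / (q : ℝ)) • ((q : ℝ), (0 : ℝ)))
    (hw : w = Real.sqrt ((k : ℝ) / (q : ℝ)) • ((p : ℝ), (r : ℝ) * Real.sqrt (D : ℝ))) :
    0 < k ∧
    IsIWR v w ∧
    latDet v w = Δ ∧
    IsLeast (normSet v w) ((k : ℝ) * (q : ℝ)) ∧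
    ∀ (v' w' : ℝ × ℝ) (N' : ℝ), IsIWR v' w' → latDet v' w' = Δ →
      IsLeast (normSet v' w') N' → N' ≤ (k : ℝ) * (q : ℝ) := by
  obtain ⟨hm0, hn0, hco, hi1, hi2, hdv⟩ := hmn
  simp only at hm0 hn0 hco hi1 hi2 hdv
  obtain ⟨gq, gr, gp⟩ := g_dvd D m n
  rw [← hg] at gq gr gp hdv
  rw [← hr] at hdv
  have hg0 : 0 < g := by
    rw [hg]; exact Nat.mul_pos (by positivity) (Nat.gcd_pos_of_pos_left _ hm0)
  have hgq : g * q = m ^ 2 + D * n ^ 2 := by rw [hq, Nat.mul_div_cancel' gq]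
  have hgr : g * r = 2 * m * n := by rw [hr, Nat.mul_div_cancel' gr]
  have hgp : g * p = ((m ^ 2 : ℤ) - D * n ^ 2).natAbs := by
    rw [hp, Nat.mul_div_cancel' (Int.natCast_dvd.mp gp)]
  have hr0 : 0 < r := Nat.pos_of_mul_pos_left (a := g) (by rw [hgr]; positivity)
  have hq0 : 0 < q := Nat.pos_of_mul_pos_left (a := g) (by rw [hgq]; positivity)
  have hkr : r * k = M := by rw [hk, Nat.mul_div_cancel' hdv]
  have hk0 : 0 < k := Nat.pos_of_mul_pos_left (a := r) (by rw [hkr]; positivity)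
  have hgR : (0 : ℝ) < g := by positivity
  have hqR : (0 : ℝ) < q := by positivity
  have hkR : (0 : ℝ) < k := by positivity
  have hrR : (0 : ℝ) < r := by positivity
  have gqR : (g : ℝ) * q = m ^ 2 + D * n ^ 2 := by exact_mod_cast hgq
  have grR : (g : ℝ) * r = 2 * m * n := by exact_mod_cast hgr
  have gpR : (g : ℝ) * p = |(m : ℝ) ^ 2 - D * n ^ 2| := by
    have : ((g * p : ℕ) : ℝ) = |(m : ℝ) ^ 2 - D * n ^ 2| := by
      rw [hgp, Nat.cast_natAbs]; push_cast; rfl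
    rw [← this]; push_cast; rfl
  have krR : (r : ℝ) * k = M := by exact_mod_cast hkr
  have i1 : (D : ℝ) * n ^ 2 ≤ 3 * m ^ 2 := by exact_mod_cast hi1
  have i2 : (m : ℝ) ^ 2 ≤ 3 * (D * n ^ 2) := by exact_mod_cast hi2
  have hpyth : (p : ℝ) ^ 2 + D * r ^ 2 = q ^ 2 := by
    have h2 : (g : ℝ) ^ 2 ≠ 0 := by positivity
    apply mul_left_cancel₀ h2
    have e1 : ((g : ℝ) * p) ^ 2 = ((m : ℝ) ^ 2 - D * n ^ 2) ^ 2 := by rw [gpR, sq_abs]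
    have e2 : ((g : ℝ) * r) ^ 2 = (2 * m * n) ^ 2 := by rw [grR]
    have e3 : ((g : ℝ) * q) ^ 2 = (m ^ 2 + D * n ^ 2) ^ 2 := by rw [gqR]
    linear_combination e1 + D * e2 - e3
  have h2p : 2 * (p : ℝ) ≤ q := by
    apply le_of_mul_le_mul_left _ hgR
    have : |(m : ℝ) ^ 2 - D * n ^ 2| ≤ (m ^ 2 + D * n ^ 2) / 2 :=
      abs_le.mpr ⟨by linarith, by linarith⟩
    rw [gqR]; linarith
  have h2p' : -(2 * (p : ℝ)) ≤ q := by
    have : (0 : ℝ) ≤ p := by positivity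
    linarith
  set c := Real.sqrt ((k : ℝ) / q) with hc
  have hc2 : c * c = k / q := Real.mul_self_sqrt (by positivity)
  have hc0 : 0 < c := Real.sqrt_pos.mpr (by positivity)
  have hcq : c * c * q = k := by rw [hc2]; field_simp
  have hsD : Real.sqrt (D : ℝ) * Real.sqrt (D : ℝ) = D := Real.mul_self_sqrt (by positivity)
  have hsD0 : 0 < Real.sqrt (D : ℝ) := Real.sqrt_pos.mpr (by positivity)
  have v1 : v.1 = c * q := by rw [hv]; simp
  have v2 : v.2 = 0 := by rw [hv]; simp
  have w1 : w.1 = c * p := by rw [hw]; simp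
  have w2 : w.2 = c * (r * Real.sqrt D) := by rw [hw]; simp
  have ivv : ip v v = k * q := by
    simp only [ip, v1, v2]; linear_combination q * hcq
  have ivw : ip v w = k * p := by
    simp only [ip, v1, v2, w1]; linear_combination p * hcq
  have iww : ip w w = k * q := by
    simp only [ip, w1, w2]
    linear_combination c * c * hpyth + c * c * r ^ 2 * hsD + q * hcq
  have hdet : v.1 * w.2 - w.1 * v.2 = M * Real.sqrt D := by
    rw [v1, v2, w1, w2]; linear_combination r * Real.sqrt D * hcq + Real.sqrt D * krR
  have hli : LinearIndependent ℝ ![v, w] := by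
    rw [li_iff, hdet]; positivity
  have hv0 : v ≠ 0 := by
    intro h; rw [h] at v1; simp at v1; rcases v1 with h | h
    · exact hc0.ne' h
    · omega
  have hleast : IsLeast (normSet v w) ((k : ℝ) * (q : ℝ)) := by
    constructor
    · exact ⟨v, ⟨1, 0, by simp⟩, hv0, ivv.symm⟩
    · rintro t ⟨z, ⟨a, b, rfl⟩, hz0, rfl⟩
      have e : ip ((a : ℝ) • v + (b : ℝ) • w) ((a : ℝ) • v + (b : ℝ) • w) =
          a ^ 2 * ip v v + b ^ 2 * ip w w + 2 * (a * b) * ip v w := by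
        simp only [ip, Prod.fst_add, Prod.smul_fst, Prod.snd_add, Prod.smul_snd, smul_eq_mul]
        ring
      rw [e, ivv, ivw, iww]
      have hf := form_ge_s13 p q hqR.le h2p h2p' a b (by
        rintro ⟨rfl, rfl⟩; simp at hz0)
      have := mul_le_mul_of_nonneg_left hf hkR.le
      linarith
  refine ⟨hk0, ⟨hli, ⟨⟨k * q, by rw [ivv]; push_cast; rfl⟩, ⟨k * p, by rw [ivw]; push_cast; rfl⟩,
    ⟨k * q, by rw [iww]; push_cast; rfl⟩⟩, v, w, ⟨1, 0, by simp⟩, ⟨0, 1, by simp⟩, hli,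
    by rw [ivv]; exact hleast, by rw [ivv, iww]⟩, ?_, hleast, ?_⟩
  · rw [latDet, hdet, hΔ, abs_of_nonneg (by positivity)]
  · intro v' w' N' hI hd hN
    obtain ⟨A, C, rfl, hA, b1, b2, hAC⟩ := iwr_data v' w' N' hI hN
    rw [hd, hΔ] at hAC
    have hAC' : (M : ℤ) ^ 2 * D = A ^ 2 - C ^ 2 := by
      have : (M : ℝ) ^ 2 * D = A ^ 2 - C ^ 2 := by
        rw [← hAC]; linear_combination -(M : ℝ) ^ 2 * hsD
      exact_mod_cast this
    obtain ⟨m', n', hmem, hval⟩ := param_s13 M D hM hD hDsf A C hA b1 b2 hAC'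
    have hmx := mul_le_mul_of_nonneg_left (hmax m' n' hmem) (by positivity : (0 : ℝ) ≤ M)
    rw [← hval] at hmx
    have : (M : ℝ) * ((m : ℝ) / (n : ℝ) + (D : ℝ) * (n : ℝ) / (m : ℝ)) = 2 * (k * q) := by
      have hmR : (m : ℝ) ≠ 0 := by positivity
      have hnR : (n : ℝ) ≠ 0 := by positivity
      rw [← krR]
      field_simp
      apply mul_left_cancel₀ hgR.ne'
      linear_combination -(g : ℝ) * r * gqR + g * q * grR
    linarith
end

section
/- Let M and D be positive integers with D squarefree. For each positive divisor r of M let f(r) denote the number of pairs of positive integers (p, q) with q² − p² = r² D, gcd(p, q) = 1, and 2p ≤ q. Then 2·Σ_{r ∣ M} f(r) ≤ Σ_{r ∣ M} 2^{ω(rD)}, where ω(u) denotes the number of distinct prime divisors of u and both sums run over the positive divisors r of M. -/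
def stmtT (n : ℕ) : Finset (ℕ × ℕ) :=
  n.divisorsAntidiagonal.filter (fun x => x.1 < x.2 ∧ Nat.Coprime x.1 x.2)

theorem coprime_fact_unique {a b c d : ℕ} (h : a * b = c * d) (hab : Nat.Coprime a b)
    (hcd : Nat.Coprime c d) (ha : a ≠ 0) (hc : c ≠ 0) (hp : a.primeFactors = c.primeFactors) :
    a = c := by
  have h1 : Nat.Coprime a d := by
    refine Nat.coprime_of_dvd fun k hk h1 h2 => ?_
    have : k ∈ c.primeFactors := hp ▸ Nat.mem_primeFactors.2 ⟨hk, h1, ha⟩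
    exact Nat.not_coprime_of_dvd_of_dvd hk.one_lt (Nat.dvd_of_mem_primeFactors this) h2 hcd
  have h2 : Nat.Coprime c b := by
    refine Nat.coprime_of_dvd fun k hk h1 h2 => ?_
    have : k ∈ a.primeFactors := hp ▸ Nat.mem_primeFactors.2 ⟨hk, h1, hc⟩
    exact Nat.not_coprime_of_dvd_of_dvd hk.one_lt (Nat.dvd_of_mem_primeFactors this) h2 hab
  exact Nat.dvd_antisymm (h1.dvd_of_dvd_mul_right (h ▸ Dvd.intro _ rfl))
    (h2.dvd_of_dvd_mul_right (h ▸ Dvd.intro _ rfl))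

theorem stmtT_card (n : ℕ) : 2 * (stmtT n).card ≤ 2 ^ n.primeFactors.card := by
  rw [← Finset.card_powerset, mul_comm, ← Fintype.card_bool, ← Finset.card_univ (α := Bool),
    ← Finset.card_product]
  refine Finset.card_le_card_of_injOn
    (fun x => if x.2 then x.1.1.primeFactors else x.1.2.primeFactors) ?_ ?_
  · rintro ⟨⟨a, b⟩, c⟩ hx
    simp only [stmtT, Finset.coe_product, Set.mem_prod, Finset.mem_coe, Finset.mem_filter,
      Nat.mem_divisorsAntidiagonal, Finset.mem_powerset] at hx ⊢
    obtain ⟨⟨⟨h1, h2⟩, -⟩, -⟩ := hx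
    split_ifs
    · exact Nat.primeFactors_mono ⟨b, h1.symm⟩ h2
    · exact Nat.primeFactors_mono ⟨a, by rw [← h1, mul_comm]⟩ h2
  · rintro ⟨⟨a, b⟩, c⟩ hx ⟨⟨a', b'⟩, c'⟩ hy hxy
    simp only [stmtT, Finset.coe_product, Set.mem_prod, Finset.mem_coe, Finset.mem_filter,
      Nat.mem_divisorsAntidiagonal] at hx hy hxy
    obtain ⟨⟨⟨h1, h2⟩, h3, h4⟩, -⟩ := hx
    obtain ⟨⟨⟨k1, -⟩, k3, k4⟩, -⟩ := hy
    have ha : a ≠ 0 := by rintro rfl; simp at h1; exact h2 h1.symm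
    have ha' : a' ≠ 0 := by rintro rfl; simp at k1; exact h2 k1.symm
    have hb : b ≠ 0 := by omega
    have hb' : b' ≠ 0 := by omega
    cases c <;> cases c' <;> simp at hxy
    · have e := coprime_fact_unique (a := b) (b := a) (c := b') (d := a')
        (by rw [mul_comm, h1, mul_comm, k1]) h4.symm k4.symm hb hb' hxy
      subst e
      have := Nat.eq_of_mul_eq_mul_right (Nat.pos_of_ne_zero hb) (h1.trans k1.symm)
      simp [this]
    · have e := coprime_fact_unique (a := b) (b := a) (c := a') (d := b')
        (by rw [mul_comm, h1, k1]) h4.symm k4 hb ha' hxy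
      subst e
      have := Nat.eq_of_mul_eq_mul_right (Nat.pos_of_ne_zero hb)
        (h1.trans (k1.symm.trans (mul_comm _ _)))
      omega
    · have e := coprime_fact_unique (a := a) (b := b) (c := b') (d := a')
        (by rw [h1, mul_comm, k1]) h4 k4.symm ha hb' hxy
      subst e
      have := Nat.eq_of_mul_eq_mul_left (Nat.pos_of_ne_zero ha)
        (h1.trans (k1.symm.trans (mul_comm _ _)))
      omega
    · have e := coprime_fact_unique (a := a) (b := b) (c := a') (d := b')
        (by rw [h1, k1]) h4 k4 ha ha' hxy
      subst e
      have := Nat.eq_of_mul_eq_mul_left (Nat.pos_of_ne_zero ha) (h1.trans k1.symm)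
      simp [this]

theorem stmt_pair (N p q : ℕ) (hN : 0 < N) (hp : 0 < p) (h : q ^ 2 = p ^ 2 + N)
    (hg : Nat.gcd p q = 1) :
    (if N % 4 = 0 then ((q - p) / 2, (q + p) / 2) else (q - p, q + p)) ∈
      stmtT (if N % 4 = 0 then N / 4 else N) ∧ p < q ∧ (N % 4 = 0 → (q - p) % 2 = 0) := by
  have hpq : p < q := lt_of_pow_lt_pow_left₀ 2 (by omega) (by omega)
  obtain ⟨a, rfl⟩ := Nat.exists_eq_add_of_lt hpq
  have hN' : N = (a + 1) * (a + 1 + 2 * p) := by nlinarith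
  have e1 : p + a + 1 - p = a + 1 := by omega
  have e2 : p + a + 1 + p = a + 1 + 2 * p := by omega
  have hcop : Nat.Coprime p (a + 1) := by
    have : Nat.Coprime p (a + 1 + p) := by rw [show a + 1 + p = p + a + 1 by ring]; exact hg
    simpa using this
  rw [e1, e2]
  generalize a + 1 = b at *
  by_cases hpar : N % 4 = 0
  · have hb : b % 2 = 0 := by
      rcases Nat.mod_two_eq_zero_or_one b with h0 | h0
      · exact h0
      · have hpar : N % 2 = 0 := by omega
        rw [hN', Nat.mul_mod, Nat.add_mod, h0] at hpar; simp [h0] at hpar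
    obtain ⟨c, rfl⟩ := Nat.dvd_of_mod_eq_zero hb
    have hN4 : N / 4 = c * (c + p) := by
      rw [hN', show 2 * c * (2 * c + 2 * p) = 4 * (c * (c + p)) by ring]; simp
    have hc : Nat.Coprime c (c + p) := by simpa using (hcop.coprime_mul_left_right).symm
    have hc0 : c ≠ 0 := by rintro rfl; simp at hN'; omega
    simp only [hpar, if_true, stmtT, Finset.mem_filter, Nat.mem_divisorsAntidiagonal]
    rw [show 2 * c / 2 = c by omega, show (2 * c + 2 * p) / 2 = c + p by omega, hN4]
    refine ⟨⟨⟨rfl, ?_⟩, by omega, hc⟩, hpq, by omega⟩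
    exact mul_ne_zero hc0 (by omega)
  · have hb : Nat.Coprime b 2 := by
      rw [Nat.coprime_two_right, Nat.odd_iff]
      rcases Nat.mod_two_eq_zero_or_one b with h0 | h0
      · obtain ⟨c, rfl⟩ := Nat.dvd_of_mod_eq_zero h0
        rw [hN', show 2 * c * (2 * c + 2 * p) = 4 * (c * (c + p)) by ring] at hpar; simp at hpar
      · exact h0
    have hc : Nat.Coprime b (b + 2 * p) := by simpa using hb.mul_right hcop.symm
    simp only [hpar, if_false, stmtT, Finset.mem_filter, Nat.mem_divisorsAntidiagonal]
    exact ⟨⟨⟨hN'.symm, by omega⟩, by omega, hc⟩, hpq, by simp⟩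

theorem stmt_term (r D : ℕ) (hr : 0 < r) (hD : 0 < D) :
    2 * Nat.card {pq : ℕ × ℕ // 0 < pq.1 ∧ 0 < pq.2 ∧
          pq.2 ^ 2 = pq.1 ^ 2 + r ^ 2 * D ∧ Nat.gcd pq.1 pq.2 = 1 ∧ 2 * pq.1 ≤ pq.2}
      ≤ 2 ^ (r * D).primeFactors.card := by
  have hN : 0 < r ^ 2 * D := by positivity
  have hpf : (r ^ 2 * D).primeFactors = (r * D).primeFactors := by
    rw [Nat.primeFactors_mul (by positivity) hD.ne', Nat.primeFactors_mul hr.ne' hD.ne',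
      Nat.primeFactors_pow _ (by norm_num)]
  rw [← hpf]
  generalize r ^ 2 * D = N at *
  have hsub : (if N % 4 = 0 then N / 4 else N).primeFactors.card ≤ N.primeFactors.card := by
    split_ifs with h
    · exact Finset.card_le_card (Nat.primeFactors_mono
        (Nat.div_dvd_of_dvd (Nat.dvd_of_mod_eq_zero h)) hN.ne')
    · exact le_rfl
  refine le_trans ?_ ((stmtT_card _).trans (Nat.pow_le_pow_right (by norm_num) hsub))
  refine Nat.mul_le_mul_left 2 ?_
  rw [← Fintype.card_coe, ← Nat.card_eq_fintype_card]
  refine Nat.card_le_card_of_injective (fun x => ⟨_, (stmt_pair N x.1.1 x.1.2 hN x.2.1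
    x.2.2.2.1 x.2.2.2.2.1).1⟩) ?_
  rintro ⟨⟨p, q⟩, hx⟩ ⟨⟨p', q'⟩, hy⟩ hxy
  have h1 := (stmt_pair N p q hN hx.1 hx.2.2.1 hx.2.2.2.1).2
  have h2 := (stmt_pair N p' q' hN hy.1 hy.2.2.1 hy.2.2.2.1).2
  simp only [Subtype.mk.injEq] at hxy
  simp only [Subtype.mk.injEq, Prod.mk.injEq]
  split_ifs at hxy with h
  · have h1' := h1.2 h
    have h2' := h2.2 h
    simp only [Prod.mk.injEq] at hxy
    omega
  · simp only [Prod.mk.injEq] at hxy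
    omega

/-- The counting bound (1.10) of Theorem 1.6:
`2 |IWR(M√D)| = 2 Σ_{r ∣ M} f(r) ≤ Σ_{r ∣ M} 2^{ω(rD)}`, where `f(r)` counts
pairs `(p,q)` of positive integers with `q² − p² = r²D`, `gcd(p,q) = 1`,
`2p ≤ q`, and `ω(u)` is the number of distinct prime divisors of `u`. -/
theorem stmt14 (M D : ℕ) (hM : 0 < M) (hD : 0 < D) (hDsf : Squarefree D) :
    2 * ∑ r ∈ M.divisors,
        Nat.card {pq : ℕ × ℕ // 0 < pq.1 ∧ 0 < pq.2 ∧
          pq.2 ^ 2 = pq.1 ^ 2 + r ^ 2 * D ∧ Nat.gcd pq.1 pq.2 = 1 ∧ 2 * pq.1 ≤ pq.2}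
      ≤ ∑ r ∈ M.divisors, 2 ^ (r * D).primeFactors.card := by
  rw [Finset.mul_sum]
  exact Finset.sum_le_sum fun r hr => stmt_term r D (Nat.pos_of_mem_divisors hr) hD
end

section
/- Let c be a positive integer. Then the number of pairs of positive integers (p, q) with q² − p² = c and 2p ≤ q is at most the number of positive divisors b of c satisfying √c < b ≤ √(3c). -/
/-- The divisor-counting bound for `f₂` in the proof of Theorem 1.6: the number
of pairs `(p,q)` of positive integers with `q² − p² = c` and `2p ≤ q` is at most
the number of positive divisors `b` of `c` with `√c < b ≤ √(3c)`. -/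
theorem stmt15 (c : ℕ) (hc : 0 < c) :
    Nat.card {pq : ℕ × ℕ // 0 < pq.1 ∧ 0 < pq.2 ∧
        pq.2 ^ 2 = pq.1 ^ 2 + c ∧ 2 * pq.1 ≤ pq.2}
      ≤ Nat.card {b : ℕ // 0 < b ∧ b ∣ c ∧
          Real.sqrt (c : ℝ) < (b : ℝ) ∧ (b : ℝ) ≤ Real.sqrt (3 * (c : ℝ))} := by
  have hfin : Finite {b : ℕ // 0 < b ∧ b ∣ c ∧
      Real.sqrt (c : ℝ) < (b : ℝ) ∧ (b : ℝ) ≤ Real.sqrt (3 * (c : ℝ))} := by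
    apply Set.Finite.to_subtype
    apply (Set.finite_Iic c).subset
    rintro b ⟨_, hb, _⟩
    exact Nat.le_of_dvd hc hb
  refine Nat.card_le_card_of_injective
    (fun x => ⟨x.1.2 + x.1.1, ?_⟩) ?_
  · obtain ⟨⟨p, q⟩, hp, hq, h, h2⟩ := x
    dsimp only at hp hq h h2 ⊢
    obtain ⟨a, rfl⟩ : ∃ a, q = p + a := ⟨q - p, by omega⟩
    have hca : c = (p + a + p) * a := by nlinarith
    have hb1 : c < (p + a + p) ^ 2 := by nlinarith
    have hb2 : (p + a + p) ^ 2 ≤ 3 * c := by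
      rw [hca]
      have : p + a + p ≤ 3 * a := by omega
      nlinarith [Nat.mul_le_mul_left (p + a + p) this]
    refine ⟨by omega, ⟨a, hca⟩, ?_, ?_⟩
    · rw [Real.sqrt_lt' (by exact_mod_cast (by omega : 0 < p + a + p))]
      exact_mod_cast hb1
    · apply Real.le_sqrt_of_sq_le
      exact_mod_cast hb2
  · rintro ⟨⟨p, q⟩, hp, hq, h, h2⟩ ⟨⟨p', q'⟩, hp', hq', h', h2'⟩ he
    simp only [Subtype.mk.injEq] at he
    dsimp only at hp hq h h2 hp' hq' h' h2'
    obtain ⟨a, rfl⟩ : ∃ a, q = p + a := ⟨q - p, by omega⟩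
    obtain ⟨d, rfl⟩ : ∃ d, q' = p' + d := ⟨q' - p', by omega⟩
    have h3 : (p + a + p) * a = c := by nlinarith
    have h4 : (p' + d + p') * d = c := by nlinarith
    rw [← he, ← h3] at h4
    have h5 : d = a := Nat.eq_of_mul_eq_mul_left (by omega) h4
    simp only [Subtype.mk.injEq, Prod.mk.injEq]
    omega
end

section
/- Let D be a positive squarefree integer and r a positive integer. Then the number of pairs of positive integers (p, q) with q² − p² = r² D and 2p ≤ q equals Σ_{g ∣ r} f(r/g), where for a positive integer u, f(u) denotes the number of pairs of positive integers (p, q) with q² − p² = u² D, gcd(p, q) = 1, and 2p ≤ q, and the sum runs over the positive divisors g of r. -/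
theorem dvd_aux (D r d : ℕ) (hDsf : Squarefree D) (hr : 0 < r) (h : d ^ 2 ∣ r ^ 2 * D) : d ∣ r := by
  obtain ⟨e, a, b, he, hab, rfl, rfl⟩ := Nat.exists_coprime' (m := d) (n := r) (Nat.gcd_pos_of_pos_right _ hr)
  have h1 : a ^ 2 ∣ b ^ 2 * D := by
    have : e ^ 2 * a ^ 2 ∣ e ^ 2 * (b ^ 2 * D) := by
      convert h using 1 <;> ring
    exact Nat.dvd_of_mul_dvd_mul_left (by positivity) this
  have h2 : a ^ 2 ∣ D := (Nat.Coprime.pow 2 2 hab).dvd_of_dvd_mul_left h1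
  have h3 : a = 1 := Nat.isUnit_iff.mp (hDsf a (by rwa [← sq]))
  subst h3
  exact Nat.mul_dvd_mul_right (one_dvd _) _

theorem fin_aux (N : ℕ) (hN : 0 < N) (P : ℕ × ℕ → Prop)
    (hP : ∀ x, P x → x.2 ^ 2 = x.1 ^ 2 + N) : Finite {x // P x} := by
  apply Set.Finite.subset (Set.finite_Iic ((N, N) : ℕ × ℕ))
  rintro ⟨p, q⟩ h
  have h := hP _ h
  simp only at h
  have : p < q := by nlinarith
  obtain ⟨k, rfl⟩ := Nat.exists_eq_add_of_lt this
  simp only [Set.mem_Iic, Prod.mk_le_mk]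
  constructor <;> nlinarith

/-- Identity (4.10) in the proof of Theorem 1.6: the number of pairs `(p,q)` of
positive integers with `q² − p² = r²D` and `2p ≤ q` equals `Σ_{g ∣ r} f(r/g)`,
where `f(u)` counts such pairs for `u²D` that are in addition coprime. -/
theorem stmt16 (D r : ℕ) (hD : 0 < D) (hDsf : Squarefree D) (hr : 0 < r) :
    Nat.card {pq : ℕ × ℕ // 0 < pq.1 ∧ 0 < pq.2 ∧
        pq.2 ^ 2 = pq.1 ^ 2 + r ^ 2 * D ∧ 2 * pq.1 ≤ pq.2}
      = ∑ g ∈ r.divisors,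
          Nat.card {pq : ℕ × ℕ // 0 < pq.1 ∧ 0 < pq.2 ∧
            pq.2 ^ 2 = pq.1 ^ 2 + (r / g) ^ 2 * D ∧ Nat.gcd pq.1 pq.2 = 1 ∧
            2 * pq.1 ≤ pq.2} := by
  classical
  have hfin : ∀ g : r.divisors, Finite {pq : ℕ × ℕ // 0 < pq.1 ∧ 0 < pq.2 ∧
            pq.2 ^ 2 = pq.1 ^ 2 + (r / g.1) ^ 2 * D ∧ Nat.gcd pq.1 pq.2 = 1 ∧
            2 * pq.1 ≤ pq.2} := by
    rintro ⟨g, hg⟩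
    have hgr := Nat.dvd_of_mem_divisors hg
    have : 0 < r / g := Nat.div_pos (Nat.le_of_dvd hr hgr) (Nat.pos_of_dvd_of_pos hgr hr)
    exact fin_aux ((r / g) ^ 2 * D) (by positivity) _ (fun x hx => hx.2.2.1)
  rw [← Finset.sum_coe_sort, ← Nat.card_sigma]
  symm
  refine Nat.card_eq_of_bijective (fun x => ⟨(x.1.1 * x.2.1.1, x.1.1 * x.2.1.2), ?_⟩) ⟨?_, ?_⟩
  · obtain ⟨⟨g, hg⟩, ⟨⟨p, q⟩, hp, hq, h, hc, hle⟩⟩ := x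
    have hgr := Nat.dvd_of_mem_divisors hg
    have hg0 := Nat.pos_of_dvd_of_pos hgr hr
    simp only at *
    refine ⟨by positivity, by positivity, ?_, by nlinarith⟩
    have hm : r = g * (r / g) := (Nat.mul_div_cancel' hgr).symm
    calc (g * q) ^ 2 = g ^ 2 * q ^ 2 := by ring
      _ = (g * p) ^ 2 + (g * (r / g)) ^ 2 * D := by rw [h]; ring
      _ = _ := by rw [← hm]
  · rintro ⟨⟨g, hg⟩, ⟨⟨p, q⟩, hp, hq, h, hc, hle⟩⟩ ⟨⟨g', hg'⟩, ⟨⟨p', q'⟩, hp', hq', h', hc', hle'⟩⟩ heq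
    have hg0 := Nat.pos_of_mem_divisors hg
    simp only [Subtype.mk.injEq, Prod.mk.injEq] at heq hc hc'
    obtain ⟨h1, h2⟩ := heq
    have e : g = g' := by
      have e1 := Nat.gcd_mul_left g p q
      have e2 := Nat.gcd_mul_left g' p' q'
      rw [hc] at e1
      rw [hc', ← h1, ← h2] at e2
      omega
    subst e
    have e1 := Nat.eq_of_mul_eq_mul_left hg0 h1
    have e2 := Nat.eq_of_mul_eq_mul_left hg0 h2
    subst e1 e2
    rfl
  · rintro ⟨⟨p, q⟩, hp, hq, h, hle⟩
    simp only at hp hq h hle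
    obtain ⟨g, a, b, hg, hab, rfl, rfl⟩ :=
      Nat.exists_coprime' (m := p) (n := q) (Nat.gcd_pos_of_pos_right _ hq)
    have hd : g ∣ r := by
      apply dvd_aux D r g hDsf hr
      have hag : g ^ 2 ∣ (a * g) ^ 2 := ⟨a ^ 2, by ring⟩
      refine (Nat.dvd_add_right hag).mp ?_
      rw [← h]
      exact ⟨b ^ 2, by ring⟩
    refine ⟨⟨⟨g, Nat.mem_divisors.mpr ⟨hd, hr.ne'⟩⟩, ⟨(a, b), Nat.pos_of_mul_pos_right hp,
      Nat.pos_of_mul_pos_right hq, ?_, hab, ?_⟩⟩, ?_⟩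
    · obtain ⟨k, rfl⟩ := hd
      simp only [Nat.mul_div_cancel_left k hg]
      apply Nat.eq_of_mul_eq_mul_left (show 0 < g ^ 2 by positivity)
      linarith
    · simp only
      nlinarith
    · simp [mul_comm]
end
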